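/- arXiv:1601.06636 — 2 statements merged into one kernel-verified Lean document; each statement's English description precedes it below -/
import Mathlib

section
/- Exponential stability of the target system (Lemma 1): Suppose Λʳ(x) = diag(λʳ₁(x),…,λʳₙ(x)) and Λˡ(x) = diag(λˡ₁(x),…,λˡₘ(x)) are C¹ diagonal matrix functions on [0,1] whose entries satisfy 0 < λ̲ ≤ λʳᵢ(x), λˡⱼ(x) ≤ λ̄ for all x ∈ [0,1]; Sʳ: [0,1] → ℝ^{n×n} and Sˡ: [0,1] → ℝ^{n×m} are continuous with ‖Sʳ(x)‖ ≤ M and ‖Sˡ(x)‖ ≤ M; Cʳ: 𝕋 → ℝ^{n×n} and Cˡ: 𝕋 → ℝ^{n×m} are continuous with ‖Cʳ(x,ξ)‖ ≤ M and ‖Cˡ(x,ξ)‖ ≤ M; Δ: [0,1] → ℝ^{m×m} is continuous, bounded, and strictly lower triangular (Δᵢⱼ(x) = 0 whenever j ≥ i); and Q₀ ∈ ℝ^{n×m}. Then there exist constants K ≥ 1 and c > 0, depending only on these data, such that every classical C¹ solution (ε, β): [0,∞)×[0,1] → ℝⁿ×ℝᵐ of the target system with boundary conditions ε(t,0) = Q₀β(t,0)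 and β(t,1) = 0 satisfies ‖(ε(t,·), β(t,·))‖_{L²(0,1)} ≤ K e^{−ct} ‖(ε(0,·), β(0,·))‖_{L²(0,1)} for all t ≥ 0. -/
open MeasureTheory Set Matrix Real

/-- The operator (matrix 2-) norm of a real matrix, i.e. the operator norm of the
induced linear map between Euclidean spaces. -/
noncomputable def l2OpNorm {m n : ℕ} (A : Matrix (Fin m) (Fin n) ℝ) : ℝ :=
  ‖LinearMap.toContinuousLinearMap
    (Matrix.toEuclideanLin A : EuclideanSpace ℝ (Fin n) →ₗ[ℝ] EuclideanSpace ℝ (Fin m))‖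

/-!
Weight the square of each component of `(ε, β)` by `e^{-νx}` (right-moving) or `dⱼ e^{νx}`
(left-moving), divided by its speed. Along solutions the integral `V` of this density changes by the flux
through the boundary, by `-ν` times the energy (the weights decrease in the direction of
propagation), and by the source terms. All interior source terms are dominated by the energy
uniformly in `ν`, so a large `ν` absorbs them and leaves any prescribed decay rate. The reflection
`Q₀` and the coupling `Δ β(t, 0)` are controlled by the outflow of `β` at `x = 0`: since `Δ` is
strictly lower triangular, `βⱼ` is only driven by traces `βₖ(t, 0)` with `k < j`, and weights `d`
growing fast enough as the index decreases make the outflow of `βₖ` dominate.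
-/

section Analysis

variable {E : Type*} [NormedAddCommGroup E] [NormedSpace ℝ E]

theorem le_exp_mul_of_deriv_le {V V' : ℝ → ℝ} {a c : ℝ} (hV : ContinuousOn V (Ici a))
    (hV' : ∀ t > a, HasDerivAt V (V' t) t) (hle : ∀ t > a, V' t ≤ -c * V t) {t : ℝ} (ht : a ≤ t) :
    V t ≤ exp (-c * (t - a)) * V a := by
  have hexp (s : ℝ) : HasDerivAt (fun s ↦ exp (c * s)) (exp (c * s) * c) s := by
    simpa using ((hasDerivAt_id s).const_mul c).exp
  have hderiv (s : ℝ) (hs : a < s) := (hexp s).fun_mul (hV' s hs)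
  have hanti : AntitoneOn (fun s ↦ exp (c * s) * V s) (Ici a) := by
    refine antitoneOn_of_hasDerivWithinAt_nonpos (convex_Ici a)
      (ContinuousOn.mul (by fun_prop) hV)
      (fun s hs ↦ (hderiv s (interior_Ici.subset hs)).hasDerivWithinAt) fun s hs ↦ ?_
    have := mul_le_mul_of_nonneg_left (hle s (interior_Ici.subset hs)) (exp_pos (c * s)).le
    linarith
  calc V t = exp (-c * t) * (exp (c * t) * V t) := by
        rw [← mul_assoc, ← exp_add]; simp
    _ ≤ exp (-c * t) * (exp (c * a) * V a) :=
        mul_le_mul_of_nonneg_left (hanti self_mem_Ici ht ht) (exp_pos _).le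
    _ = exp (-c * (t - a)) * V a := by
        rw [← mul_assoc, ← exp_add]; ring_nf

theorem continuousOn_slice {X Y Z : Type*} [TopologicalSpace X] [TopologicalSpace Y]
    [TopologicalSpace Z] {f : X → Y → Z} {s : Set X} {k : Set Y}
    (hf : ContinuousOn (fun p : X × Y ↦ f p.1 p.2) (s ×ˢ k)) {x : X} (hx : x ∈ s) :
    ContinuousOn (f x) k :=
  hf.comp (Continuous.prodMk_right x).continuousOn fun _ hy ↦ ⟨hx, hy⟩

theorem continuousOn_sum_sq {X κ : Type*} [TopologicalSpace X] [Fintype κ] {z : X → κ → ℝ}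
    {s : Set X} (hz : ContinuousOn z s) : ContinuousOn (fun x ↦ ∑ k, z x k ^ 2) s :=
  continuousOn_finsetSum _ fun k _ ↦ (continuousOn_pi.1 hz k).pow 2

theorem continuousOn_intervalIntegral {X : Type*} [TopologicalSpace X]
    {f : X → ℝ → E} {s : Set X} {a b : ℝ} (hab : a ≤ b)
    (hf : ContinuousOn (fun p : X × ℝ ↦ f p.1 p.2) (s ×ˢ Icc a b)) :
    ContinuousOn (fun x ↦ ∫ y in a..b, f x y) s := by
  rw [continuousOn_iff_continuous_domRestrict]
  have hproj : Continuous (Function.uncurry fun (x : s) y ↦ f x (projIcc a b hab y)) :=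
    hf.comp_continuous (f := fun p : s × ℝ ↦ ((p.1 : X), (projIcc a b hab p.2 : ℝ)))
      (by fun_prop) fun p ↦ ⟨p.1.2, (projIcc a b hab p.2).2⟩
  refine (intervalIntegral.continuous_parametric_intervalIntegral_of_continuous'
    (μ := volume) hproj a b).congr fun x ↦ intervalIntegral.integral_congr fun y hy ↦ ?_
  rw [uIcc_of_le hab] at hy
  simp only [projIcc_of_mem hab hy]

theorem hasDerivAt_intervalIntegral {f f' : ℝ → ℝ → E} {s : Set ℝ} {a b t : ℝ}
    (hab : a ≤ b) (hs : s ∈ nhds t)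
    (hf : ContinuousOn (fun p : ℝ × ℝ ↦ f p.1 p.2) (s ×ˢ Icc a b))
    (hf' : ContinuousOn (fun p : ℝ × ℝ ↦ f' p.1 p.2) (s ×ˢ Icc a b))
    (hderiv : ∀ τ ∈ s, ∀ x ∈ Icc a b, HasDerivAt (fun τ ↦ f τ x) (f' τ x) τ) :
    HasDerivAt (fun τ ↦ ∫ x in a..b, f τ x) (∫ x in a..b, f' t x) t := by
  obtain ⟨k, hkt, hks, hk⟩ := local_compact_nhds hs
  obtain ⟨C, hC⟩ := (hk.prod isCompact_Icc).exists_bound_of_continuousOn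
    (hf'.mono (prod_mono_left hks))
  have hint {g : ℝ → ℝ → E} (hg : ContinuousOn (fun p : ℝ × ℝ ↦ g p.1 p.2) (s ×ˢ Icc a b))
      {τ : ℝ} (hτ : τ ∈ s) : IntervalIntegrable (g τ) volume a b :=
    (continuousOn_slice hg hτ).intervalIntegrable_of_Icc hab
  have hsub : uIoc a b ⊆ Icc a b := (uIoc_of_le hab).trans_subset Ioc_subset_Icc_self
  refine (intervalIntegral.hasDerivAt_integral_of_dominated_loc_of_deriv_le
    (bound := fun _ ↦ C) hkt ?_ (hint hf (mem_of_mem_nhds hs))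
    (hint hf' (mem_of_mem_nhds hs)).def'.aestronglyMeasurable ?_ (by simp) ?_).2
  · filter_upwards [hs] with τ hτ using (hint hf hτ).def'.aestronglyMeasurable
  · exact .of_forall fun x hx τ hτ ↦ hC (τ, x) ⟨hτ, hsub hx⟩
  · exact .of_forall fun x hx τ hτ ↦ hderiv τ (hks hτ) x (hsub hx)

theorem exists_comparable_bounds {σ X : Type*} [Finite σ] [TopologicalSpace X] {p : σ → X → ℝ}
    {s : Set X} (hs : IsCompact s) (hpc : ∀ k, ContinuousOn (p k) s)
    (hp : ∀ k, ∀ x ∈ s, 0 < p k x) :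
    ∃ C : ℝ, 1 ≤ C ∧ ∀ k, ∀ x ∈ s, p k x ≤ C ∧ 1 ≤ C * p k x := by
  have := Fintype.ofFinite σ
  obtain ⟨C₁, hC₁⟩ := hs.exists_bound_of_continuousOn (continuousOn_pi.2 hpc)
  obtain ⟨C₂, hC₂⟩ := hs.exists_bound_of_continuousOn
    (continuousOn_pi.2 fun k ↦ (hpc k).inv₀ fun x hx ↦ (hp k x hx).ne')
  refine ⟨max 1 (max C₁ C₂), le_max_left _ _, fun k x hx ↦ ⟨?_, ?_⟩⟩
  · calc p k x ≤ ‖p k x‖ := le_norm_self _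
      _ ≤ C₁ := (norm_le_pi_norm (fun k ↦ p k x) k).trans (hC₁ x hx)
      _ ≤ max 1 (max C₁ C₂) := by simp
  · rw [← inv_le_iff_one_le_mul₀ (hp k x hx)]
    calc (p k x)⁻¹ ≤ ‖(p k x)⁻¹‖ := le_norm_self _
      _ ≤ C₂ := (norm_le_pi_norm (fun k ↦ (p k x)⁻¹) k).trans (hC₂ x hx)
      _ ≤ max 1 (max C₁ C₂) := by simp

end Analysis

section WeightedInner

variable {σ X : Type*} [Fintype σ]

/-- The weighted pointwise inner product `⟨y(x), z(x)⟩_w = ∑ₖ wₖ(x) yₖ(x) zₖ(x)` of two vector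
fields; its diagonal values are the densities of quadratic Lyapunov functionals. -/
def weightedInner (w : σ → X → ℝ) (y z : X → σ → ℝ) (x : X) : ℝ :=
  ∑ k, w k x * (y x k * z x k)

theorem continuousOn_weightedInner [TopologicalSpace X] {w : σ → X → ℝ} {y z : X → σ → ℝ}
    {s : Set X} (hw : ∀ k, ContinuousOn (w k) s) (hy : ContinuousOn y s) (hz : ContinuousOn z s) :
    ContinuousOn (weightedInner w y z) s :=
  continuousOn_finsetSum _ fun k _ ↦
    (hw k).mul ((continuousOn_pi.1 hy k).mul (continuousOn_pi.1 hz k))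

theorem weightedInner_self_le_mul {w w' : σ → X → ℝ} {z : X → σ → ℝ} {C : ℝ} {x : X}
    (h : ∀ k, w k x ≤ C * w' k x) : weightedInner w z z x ≤ C * weightedInner w' z z x := by
  simp only [weightedInner, Finset.mul_sum, ← mul_assoc C]
  exact Finset.sum_le_sum fun k _ ↦ mul_le_mul_of_nonneg_right (h k) (mul_self_nonneg _)

theorem weightedInner_one_self (z : X → σ → ℝ) (x : X) :
    weightedInner 1 z z x = ∑ k, z x k ^ 2 := by
  simp [weightedInner, sq]

theorem hasDerivWithinAt_weightedInner_self {w w' : σ → ℝ → ℝ} {z : ℝ → σ → ℝ} {z' : σ → ℝ}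
    {s : Set ℝ} {x : ℝ} (hw : ∀ k, HasDerivWithinAt (w k) (w' k x) s x)
    (hz : HasDerivWithinAt z z' s x) :
    HasDerivWithinAt (weightedInner w z z)
      (weightedInner w' z z x + 2 * ∑ k, w k x * (z x k * z' k)) s x := by
  have hz := hasDerivWithinAt_pi.1 hz
  convert! HasDerivWithinAt.fun_sum (u := Finset.univ)
    fun k _ ↦ (hw k).fun_mul ((hz k).fun_mul (hz k)) using 1
  rw [weightedInner, Finset.mul_sum, ← Finset.sum_add_distrib]
  exact Finset.sum_congr rfl fun k _ ↦ by ring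

/-- Multiplying `zt + s zx = F` by `(q / s) z` turns the transport term into half the derivative of
the flux `⟨z, z⟩_q`, up to the derivative of the weight. -/
theorem two_mul_integral_weightedInner_le_of_transport {q q' s : σ → ℝ → ℝ}
    {z zt zx F : ℝ → σ → ℝ} {φ : ℝ → ℝ} {a b : ℝ} (hab : a ≤ b)
    (hs : ∀ k, ∀ x ∈ Icc a b, s k x ≠ 0)
    (hq : ∀ k, ∀ x ∈ Icc a b, HasDerivWithinAt (q k) (q' k x) (Icc a b) x)
    (hz : ∀ x ∈ Icc a b, HasDerivWithinAt z (zx x) (Icc a b) x)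
    (htransport : ∀ x ∈ Icc a b, ∀ k, zt x k + s k x * zx x k = F x k)
    (hint : IntervalIntegrable (weightedInner (q / s) z zt) volume a b)
    (hφ : IntervalIntegrable φ volume a b)
    (hle : ∀ x ∈ Icc a b,
      weightedInner q' z z x + 2 * weightedInner (q / s) z F x ≤ φ x) :
    2 * ∫ x in a..b, weightedInner (q / s) z zt x
      ≤ (∫ x in a..b, φ x) + weightedInner q z z a - weightedInner q z z b := by
  have hflux (x) (hx : x ∈ Icc a b) := hasDerivWithinAt_weightedInner_self
    (fun k ↦ hq k x hx) (hz x hx)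
  have hexchange : ∀ x ∈ Icc a b, ∑ k, q k x * (z x k * zx x k)
      = weightedInner (q / s) z F x - weightedInner (q / s) z zt x := by
    intro x hx
    simp only [weightedInner, ← Finset.sum_sub_distrib]
    refine Finset.sum_congr rfl fun k _ ↦ ?_
    have := hs k x hx
    rw [← htransport x hx k, Pi.div_apply, Pi.div_apply]
    field_simp
    ring
  have hflux_le := intervalIntegral.sub_le_integral_of_hasDeriv_right_of_le hab
    (fun x hx ↦ (hflux x hx).continuousWithinAt)
    (fun x hx ↦ ((hflux x (Ioo_subset_Icc_self hx)).hasDerivAt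
      (Icc_mem_nhds hx.1 hx.2)).hasDerivWithinAt)
    ((intervalIntegrable_iff_integrableOn_Icc_of_le hab).1 (hφ.sub (hint.const_mul 2)))
    fun x hx ↦ by
      have hx := Ioo_subset_Icc_self hx
      linarith [hle x hx, hexchange x hx]
  rw [intervalIntegral.integral_sub hφ (hint.const_mul 2),
    intervalIntegral.integral_const_mul] at hflux_le
  linarith

theorem integral_weightedInner_self_le_exp_mul {p : σ → ℝ → ℝ} {z zt : ℝ → ℝ → σ → ℝ}
    {a b c : ℝ} (hab : a ≤ b) (hp : ∀ k, ContinuousOn (p k) (Icc a b))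
    (hz : ContinuousOn (fun r : ℝ × ℝ ↦ z r.1 r.2) (Ici 0 ×ˢ Icc a b))
    (hzt : ContinuousOn (fun r : ℝ × ℝ ↦ zt r.1 r.2) (Ici 0 ×ˢ Icc a b))
    (hderiv : ∀ t > 0, ∀ x ∈ Icc a b, HasDerivAt (fun s ↦ z s x) (zt t x) t)
    (hdiss : ∀ t > 0, 2 * ∫ x in a..b, weightedInner p (z t) (zt t) x
      ≤ -c * ∫ x in a..b, weightedInner p (z t) (z t) x) {t : ℝ} (ht : 0 ≤ t) :
    ∫ x in a..b, weightedInner p (z t) (z t) x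
      ≤ exp (-c * t) * ∫ x in a..b, weightedInner p (z 0) (z 0) x := by
  have hp₂ (k) : ContinuousOn (fun r : ℝ × ℝ ↦ p k r.2) (Ici 0 ×ˢ Icc a b) :=
    (hp k).comp continuousOn_snd fun _ hr ↦ hr.2
  have hV : ContinuousOn (fun r : ℝ × ℝ ↦ weightedInner p (z r.1) (z r.1) r.2)
      (Ici 0 ×ˢ Icc a b) := continuousOn_weightedInner hp₂ hz hz
  have hV' : ContinuousOn (fun r : ℝ × ℝ ↦ 2 * weightedInner p (z r.1) (zt r.1) r.2)
      (Ici 0 ×ˢ Icc a b) := continuousOn_const.mul (continuousOn_weightedInner hp₂ hz hzt)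
  have hVderiv (t : ℝ) (ht : 0 < t) (x : ℝ) (hx : x ∈ Icc a b) :
      HasDerivAt (fun s ↦ weightedInner p (z s) (z s) x)
        (2 * weightedInner p (z t) (zt t) x) t := by
    have h := hasDerivWithinAt_weightedInner_self (w := fun k _ ↦ p k x) (w' := 0) (s := univ)
      (fun k ↦ hasDerivWithinAt_const _ _ _) (hderiv t ht x hx).hasDerivWithinAt
    have hzero : weightedInner (0 : σ → ℝ → ℝ) (fun s ↦ z s x) (fun s ↦ z s x) t = 0 := by
      simp [weightedInner]
    rw [hzero, zero_add, hasDerivWithinAt_univ] at h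
    exact h
  have hsub : Ioi (0 : ℝ) ×ˢ Icc a b ⊆ Ici 0 ×ˢ Icc a b := prod_mono_left Ioi_subset_Ici_self
  have h := le_exp_mul_of_deriv_le (continuousOn_intervalIntegral hab hV)
    (fun t ht ↦ hasDerivAt_intervalIntegral hab (Ioi_mem_nhds ht) (hV.mono hsub) (hV'.mono hsub)
      hVderiv)
    (fun t ht ↦ by simpa only [intervalIntegral.integral_const_mul] using hdiss t ht) ht
  rwa [sub_zero] at h

theorem exists_sqrt_integral_le_exp_mul_of_lyapunov {p : σ → ℝ → ℝ} {a b : ℝ} (hab : a ≤ b)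
    (hpc : ∀ k, ContinuousOn (p k) (Icc a b)) (hp : ∀ k, ∀ x ∈ Icc a b, 0 < p k x) (c : ℝ) :
    ∃ K : ℝ, 1 ≤ K ∧ ∀ z zt : ℝ → ℝ → σ → ℝ,
      ContinuousOn (fun r : ℝ × ℝ ↦ z r.1 r.2) (Ici 0 ×ˢ Icc a b) →
      ContinuousOn (fun r : ℝ × ℝ ↦ zt r.1 r.2) (Ici 0 ×ˢ Icc a b) →
      (∀ t > 0, ∀ x ∈ Icc a b, HasDerivAt (fun s ↦ z s x) (zt t x) t) →
      (∀ t > 0, 2 * ∫ x in a..b, weightedInner p (z t) (zt t) x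
        ≤ -(2 * c) * ∫ x in a..b, weightedInner p (z t) (z t) x) →
      ∀ t ≥ 0, √(∫ x in a..b, ∑ k, z t x k ^ 2)
        ≤ K * exp (-c * t) * √(∫ x in a..b, ∑ k, z 0 x k ^ 2) := by
  obtain ⟨C, hC, hpC⟩ := exists_comparable_bounds isCompact_Icc hpc hp
  refine ⟨C, hC, fun z zt hz hzt hderiv hdiss t ht ↦ ?_⟩
  have hint {w : σ → ℝ → ℝ} (hw : ∀ k, ContinuousOn (w k) (Icc a b)) {τ : ℝ} (hτ : 0 ≤ τ) :
      IntervalIntegrable (weightedInner w (z τ) (z τ)) volume a b :=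
    (continuousOn_weightedInner hw (continuousOn_slice hz hτ)
      (continuousOn_slice hz hτ)).intervalIntegrable_of_Icc hab
  have hcompare {w w' : σ → ℝ → ℝ} (hw : ∀ k, ContinuousOn (w k) (Icc a b))
      (hw' : ∀ k, ContinuousOn (w' k) (Icc a b)) (h : ∀ x ∈ Icc a b, ∀ k, w k x ≤ C * w' k x)
      {τ : ℝ} (hτ : 0 ≤ τ) : ∫ x in a..b, weightedInner w (z τ) (z τ) x
        ≤ C * ∫ x in a..b, weightedInner w' (z τ) (z τ) x := by
    rw [← intervalIntegral.integral_const_mul]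
    exact intervalIntegral.integral_mono_on hab (hint hw hτ) ((hint hw' hτ).const_mul C)
      fun x hx ↦ weightedInner_self_le_mul (h x hx)
  have hone (k : σ) : ContinuousOn ((1 : σ → ℝ → ℝ) k) (Icc a b) := continuousOn_const
  have hdecay := integral_weightedInner_self_le_exp_mul hab hpc hz hzt hderiv hdiss ht
  simp only [← weightedInner_one_self]
  have hnonneg : 0 ≤ ∫ x in a..b, weightedInner 1 (z 0) (z 0) x :=
    intervalIntegral.integral_nonneg hab fun x _ ↦ by
      rw [weightedInner_one_self]
      positivity
  refine Real.sqrt_le_iff.2 ⟨by positivity, ?_⟩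
  calc ∫ x in a..b, weightedInner 1 (z t) (z t) x
      ≤ C * ∫ x in a..b, weightedInner p (z t) (z t) x :=
        hcompare hone hpc (fun x hx k ↦ (hpC k x hx).2) ht
    _ ≤ C * (exp (-(2 * c) * t) * ∫ x in a..b, weightedInner p (z 0) (z 0) x) := by gcongr
    _ ≤ C * (exp (-(2 * c) * t) * (C * ∫ x in a..b, weightedInner 1 (z 0) (z 0) x)) := by
        gcongr
        exact hcompare hpc hone (fun x hx k ↦ by simpa using (hpC k x hx).1) le_rfl
    _ = (C * exp (-c * t) * √(∫ x in a..b, weightedInner 1 (z 0) (z 0) x)) ^ 2 := by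
        rw [mul_pow, mul_pow, Real.sq_sqrt hnonneg, ← exp_nat_mul]
        ring_nf

end WeightedInner

section MatrixBounds

variable {ι κ : Type*}

theorem abs_apply_le_l2OpNorm {m n : ℕ} (A : Matrix (Fin m) (Fin n) ℝ) (i : Fin m) (j : Fin n) :
    |A i j| ≤ l2OpNorm A := by
  have h := (PiLp.norm_apply_le _ i).trans <| (LinearMap.toContinuousLinearMap
    (Matrix.toEuclideanLin A : EuclideanSpace ℝ (Fin n) →ₗ[ℝ] EuclideanSpace ℝ (Fin m))).le_opNorm
      (EuclideanSpace.single j 1)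
  simpa [l2OpNorm, Matrix.toEuclideanLin, Matrix.toLpLin_apply] using h

theorem two_mul_mul_sum_le {s : Finset κ} {a : κ → ℝ} {N : ℝ} (ha : ∀ j ∈ s, |a j| ≤ N) (p : ℝ)
    (q : κ → ℝ) :
    2 * p * ∑ j ∈ s, a j * q j ≤ N * (s.card * p ^ 2 + ∑ j ∈ s, q j ^ 2) := by
  have hterm : ∀ j ∈ s, 2 * p * (a j * q j) ≤ N * (p ^ 2 + q j ^ 2) := fun j hj ↦
    calc 2 * p * (a j * q j) ≤ |a j| * |2 * p * q j| := by
          rw [← abs_mul, show a j * (2 * p * q j) = 2 * p * (a j * q j) by ring]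
          exact le_abs_self _
      _ ≤ N * (p ^ 2 + q j ^ 2) :=
          mul_le_mul (ha j hj)
            (abs_le.2 ⟨by linarith [sq_nonneg (p + q j)], two_mul_le_add_sq p (q j)⟩)
            (abs_nonneg _) ((abs_nonneg _).trans (ha j hj))
  calc 2 * p * ∑ j ∈ s, a j * q j = ∑ j ∈ s, 2 * p * (a j * q j) := Finset.mul_sum ..
    _ ≤ ∑ j ∈ s, N * (p ^ 2 + q j ^ 2) := Finset.sum_le_sum hterm
    _ = N * (s.card * p ^ 2 + ∑ j ∈ s, q j ^ 2) := by
        rw [← Finset.mul_sum, Finset.sum_add_distrib, Finset.sum_const, nsmul_eq_mul]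

variable [Fintype κ]

theorem two_mul_mul_mulVec_le {A : Matrix ι κ ℝ} {N : ℝ} {i : ι} (hA : ∀ j, |A i j| ≤ N) (p : ℝ)
    (v : κ → ℝ) : 2 * p * (A *ᵥ v) i ≤ N * (Fintype.card κ * p ^ 2 + ∑ j, v j ^ 2) :=
  two_mul_mul_sum_le (fun j _ ↦ hA j) p v

theorem two_mul_mul_mulVec_le_of_strictLower [LinearOrder κ] {A : Matrix κ κ ℝ} {N : ℝ} {j : κ}
    (hN : 0 ≤ N) (hA : ∀ k, |A j k| ≤ N) (htri : ∀ k, j ≤ k → A j k = 0) (p : ℝ) (v : κ → ℝ) :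
    2 * p * (A *ᵥ v) j ≤ N * (Fintype.card κ * p ^ 2 + ∑ k with k < j, v k ^ 2) := by
  have hsum : (A *ᵥ v) j = ∑ k with k < j, A j k * v k := by
    refine (Finset.sum_filter_of_ne fun k _ hk ↦ ?_).symm
    contrapose! hk
    rw [htri k hk, zero_mul]
  rw [hsum]
  refine (two_mul_mul_sum_le (fun k _ ↦ hA k) p v).trans ?_
  gcongr
  exact Finset.card_le_univ _

theorem two_mul_mul_integral_mulVec_le [Fintype ι] {C : ℝ → Matrix ι κ ℝ} {v : ℝ → κ → ℝ}
    {a b N : ℝ} (hab : a ≤ b) (hC : ContinuousOn C (Icc a b)) (hv : ContinuousOn v (Icc a b))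
    {i : ι} (hCN : ∀ ξ ∈ Icc a b, ∀ j, |C ξ i j| ≤ N) (p : ℝ) :
    2 * p * (∫ ξ in a..b, C ξ *ᵥ v ξ) i
      ≤ N * ((b - a) * (Fintype.card κ * p ^ 2) + ∫ ξ in a..b, ∑ j, v ξ j ^ 2) := by
  have hCv : ContinuousOn (fun ξ ↦ C ξ *ᵥ v ξ) (Icc a b) :=
    (continuous_fst.matrix_mulVec continuous_snd).comp_continuousOn (hC.prodMk hv)
  have hcoord : (∫ ξ in a..b, C ξ *ᵥ v ξ) i = ∫ ξ in a..b, (C ξ *ᵥ v ξ) i :=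
    ((ContinuousLinearMap.proj (R := ℝ) (φ := fun _ : ι ↦ ℝ) i).intervalIntegral_comp_comm
      (hCv.intervalIntegrable_of_Icc hab)).symm
  have hsq := continuousOn_sum_sq hv
  calc 2 * p * (∫ ξ in a..b, C ξ *ᵥ v ξ) i = ∫ ξ in a..b, 2 * p * (C ξ *ᵥ v ξ) i := by
        rw [hcoord, intervalIntegral.integral_const_mul]
    _ ≤ ∫ ξ in a..b, N * (Fintype.card κ * p ^ 2 + ∑ j, v ξ j ^ 2) :=
        intervalIntegral.integral_mono_on hab
          ((continuousOn_pi.1 hCv i).const_mul _ |>.intervalIntegrable_of_Icc hab)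
          ((continuousOn_const.add hsq).const_mul _ |>.intervalIntegrable_of_Icc hab)
          fun ξ hξ ↦ two_mul_mul_mulVec_le (hCN ξ hξ) p (v ξ)
    _ = N * ((b - a) * (Fintype.card κ * p ^ 2) + ∫ ξ in a..b, ∑ j, v ξ j ^ 2) := by
        rw [intervalIntegral.integral_const_mul, intervalIntegral.integral_add (by simp)
          (hsq.intervalIntegrable_of_Icc hab), intervalIntegral.integral_const, smul_eq_mul]

theorem sum_mulVec_sq_le [Fintype ι] (Q : Matrix ι κ ℝ) (v : κ → ℝ) :
    ∑ i, (Q *ᵥ v) i ^ 2 ≤ (∑ i, ∑ j, Q i j ^ 2) * ∑ j, v j ^ 2 := by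
  rw [Finset.sum_mul]
  exact Finset.sum_le_sum fun i _ ↦ Finset.sum_mul_sq_le_sq_mul_sq Finset.univ (Q i) v

theorem exists_weights [Preorder κ] [DecidableLT κ] {q L : ℝ} (hq : 0 ≤ q) (hL : 0 ≤ L) :
    ∃ d : κ → ℝ, (∀ j, 1 ≤ d j) ∧ ∀ k, q + L * ∑ j with k < j, d j ≤ d k := by
  set R : ℝ := 1 + q + L * Fintype.card κ with hR
  have hcard : 0 ≤ L * Fintype.card κ := by positivity
  have hR1 : 1 ≤ R := by linarith
  set r : κ → ℕ := fun k ↦ ({j | k < j} : Finset κ).card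
  have hr {k j : κ} (hkj : k < j) : r j < r k :=
    Finset.card_lt_card <| Finset.ssubset_iff_of_subset
      (Finset.monotone_filter_right _ fun _ _ ↦ hkj.trans) |>.2 ⟨j, by simpa using hkj, by simp⟩
  refine ⟨fun k ↦ R ^ (r k + 1), fun _ ↦ one_le_pow₀ hR1, fun k ↦ ?_⟩
  have hsum : ∑ j with k < j, R ^ (r j + 1) ≤ Fintype.card κ * R ^ r k :=
    calc ∑ j with k < j, R ^ (r j + 1) ≤ ({j | k < j} : Finset κ).card • R ^ r k :=
          Finset.sum_le_card_nsmul _ _ _ fun j hj ↦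
            pow_le_pow_right₀ hR1 (hr (Finset.mem_filter.1 hj).2)
      _ ≤ Fintype.card κ * R ^ r k := by
          rw [nsmul_eq_mul]
          gcongr
          exact Finset.card_le_univ _
  calc q + L * ∑ j with k < j, R ^ (r j + 1)
      ≤ (1 + q) * R ^ r k + L * (Fintype.card κ * R ^ r k) := by
        gcongr
        nlinarith [one_le_pow₀ hR1 (n := r k)]
    _ = R ^ (r k + 1) := by
        rw [pow_succ, hR]
        ring

theorem sum_mulVec_sq_add_le [Fintype ι] [Preorder κ] [DecidableLT κ] {Q : Matrix ι κ ℝ}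
    {d : κ → ℝ} {L : ℝ} (hd : ∀ k, (∑ i, ∑ j, Q i j ^ 2) + L * ∑ j with k < j, d j ≤ d k)
    (v : κ → ℝ) :
    ∑ i, (Q *ᵥ v) i ^ 2 + L * ∑ j, d j * ∑ k with k < j, v k ^ 2 ≤ ∑ k, d k * v k ^ 2 := by
  have hswap : ∑ j, d j * ∑ k with k < j, v k ^ 2 = ∑ k, (∑ j with k < j, d j) * v k ^ 2 := by
    simp only [Finset.mul_sum, Finset.sum_mul]
    exact Finset.sum_comm' (by simp)
  calc ∑ i, (Q *ᵥ v) i ^ 2 + L * ∑ j, d j * ∑ k with k < j, v k ^ 2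
      ≤ (∑ i, ∑ j, Q i j ^ 2) * ∑ k, v k ^ 2 + L * ∑ k, (∑ j with k < j, d j) * v k ^ 2 := by
        rw [hswap]
        gcongr
        exact sum_mulVec_sq_le Q v
    _ = ∑ k, ((∑ i, ∑ j, Q i j ^ 2) + L * ∑ j with k < j, d j) * v k ^ 2 := by
        rw [Finset.mul_sum, Finset.mul_sum, ← Finset.sum_add_distrib]
        exact Finset.sum_congr rfl fun k _ ↦ by ring
    _ ≤ ∑ k, d k * v k ^ 2 :=
        Finset.sum_le_sum fun k _ ↦ mul_le_mul_of_nonneg_right (hd k) (sq_nonneg _)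

theorem div_mul_le_div_mul_of_le {e lo y X Y : ℝ} (hlo : 0 < lo) (hy : lo ≤ y) (he : 0 ≤ e)
    (hXY : X ≤ Y) (hY : 0 ≤ Y) : e / y * X ≤ e / lo * Y :=
  calc e / y * X ≤ e / y * Y := mul_le_mul_of_nonneg_left hXY (div_nonneg he (hlo.trans_le hy).le)
    _ ≤ e / lo * Y := by gcongr

end MatrixBounds

section ExponentialWeights

variable {ι κ X : Type*}

/-- The vector field with components `u` and `v`. -/
def stack (u : X → ι → ℝ) (v : X → κ → ℝ) (x : X) : ι ⊕ κ → ℝ :=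
  Sum.elim (u x) (v x)

theorem continuousOn_stack [TopologicalSpace X] {u : X → ι → ℝ} {v : X → κ → ℝ} {s : Set X}
    (hu : ContinuousOn u s) (hv : ContinuousOn v s) : ContinuousOn (stack u v) s :=
  continuousOn_pi.2 (Sum.rec (continuousOn_pi.1 hu) (continuousOn_pi.1 hv))

theorem hasDerivWithinAt_stack {u : ℝ → ι → ℝ} {v : ℝ → κ → ℝ} {u' : ι → ℝ} {v' : κ → ℝ}
    {s : Set ℝ} {x : ℝ} (hu : HasDerivWithinAt u u' s x) (hv : HasDerivWithinAt v v' s x) :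
    HasDerivWithinAt (stack u v) (Sum.elim u' v') s x :=
  hasDerivWithinAt_pi.2 (Sum.rec (hasDerivWithinAt_pi.1 hu) (hasDerivWithinAt_pi.1 hv))

/-- The weights of the Lyapunov energy: `e^{-νx}` on right-moving and `dⱼ e^{νx}` on left-moving
components, both decreasing in the direction of propagation. -/
noncomputable def energyWeight (ν : ℝ) (d : κ → ℝ) : ι ⊕ κ → ℝ → ℝ :=
  Sum.elim (fun _ x ↦ exp (-ν * x)) fun j x ↦ d j * exp (ν * x)

/-- The weights of the energy flux: `energyWeight` signed by the direction of propagation. -/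
noncomputable def fluxWeight (ν : ℝ) (d : κ → ℝ) : ι ⊕ κ → ℝ → ℝ :=
  Sum.elim (fun _ x ↦ exp (-ν * x)) fun j x ↦ -(d j * exp (ν * x))

theorem hasDerivAt_fluxWeight (ν : ℝ) (d : κ → ℝ) (k : ι ⊕ κ) (x : ℝ) :
    HasDerivAt (fluxWeight ν d k) (-ν * energyWeight ν d k x) x := by
  have hexp (a : ℝ) : HasDerivAt (fun x ↦ exp (a * x)) (a * exp (a * x)) x := by
    simpa [mul_comm] using ((hasDerivAt_id x).const_mul a).exp
  rcases k with _ | j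
  · exact hexp (-ν)
  · refine ((hexp ν).const_mul (d j)).fun_neg.congr_deriv ?_
    simp only [energyWeight, Sum.elim_inr]
    ring

variable [Fintype ι] [Fintype κ]

/-- The energy density of the right-moving components. -/
noncomputable def rightEnergy (ν : ℝ) (u : ℝ → ι → ℝ) (x : ℝ) : ℝ :=
  exp (-ν * x) * ∑ i, u x i ^ 2

/-- The energy density of the left-moving components. -/
noncomputable def leftEnergy (ν : ℝ) (d : κ → ℝ) (v : ℝ → κ → ℝ) (x : ℝ) : ℝ :=
  exp (ν * x) * ∑ j, d j * v x j ^ 2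

variable {ν : ℝ} {d : κ → ℝ} {u : ℝ → ι → ℝ} {v : ℝ → κ → ℝ} {x : ℝ}

theorem rightEnergy_nonneg : 0 ≤ rightEnergy ν u x := by
  unfold rightEnergy
  positivity

theorem leftEnergy_nonneg (hd : ∀ j, 0 ≤ d j) : 0 ≤ leftEnergy ν d v x :=
  mul_nonneg (exp_pos _).le (Finset.sum_nonneg fun j _ ↦ mul_nonneg (hd j) (sq_nonneg _))

theorem continuousOn_rightEnergy {s : Set ℝ} (hu : ContinuousOn u s) :
    ContinuousOn (rightEnergy ν u) s :=
  ContinuousOn.mul (by fun_prop) (continuousOn_sum_sq hu)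

theorem continuousOn_leftEnergy {s : Set ℝ} (hv : ContinuousOn v s) :
    ContinuousOn (leftEnergy ν d v) s :=
  ContinuousOn.mul (by fun_prop)
    (continuousOn_finsetSum _ fun j _ ↦ ((continuousOn_pi.1 hv j).pow 2).const_mul (d j))

theorem weightedInner_energyWeight_self :
    weightedInner (energyWeight ν d) (stack u v) (stack u v) x
      = rightEnergy ν u x + leftEnergy ν d v x := by
  simp only [weightedInner, energyWeight, stack, rightEnergy, leftEnergy, Fintype.sum_sum_type,
    Sum.elim_inl, Sum.elim_inr, Finset.mul_sum]
  congr! 2 <;> ring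

theorem weightedInner_fluxWeight_self :
    weightedInner (fluxWeight ν d) (stack u v) (stack u v) x
      = rightEnergy ν u x - leftEnergy ν d v x := by
  simp only [weightedInner, fluxWeight, stack, rightEnergy, leftEnergy, Fintype.sum_sum_type,
    Sum.elim_inl, Sum.elim_inr, Finset.mul_sum, sub_eq_add_neg, ← Finset.sum_neg_distrib]
  congr! 2 <;> ring

theorem exp_neg_mul_sum_sq_le_energy (hν : 0 ≤ ν) (hd : ∀ j, 1 ≤ d j) {ξ : ℝ} (hξ : 0 ≤ ξ)
    (hξx : ξ ≤ x) :
    exp (-ν * x) * (∑ i, u ξ i ^ 2 + ∑ j, v ξ j ^ 2) ≤ rightEnergy ν u ξ + leftEnergy ν d v ξ := by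
  have hright : -ν * x ≤ -ν * ξ := mul_le_mul_of_nonpos_left hξx (neg_nonpos.2 hν)
  have hleft : -ν * x ≤ ν * ξ := hright.trans (by nlinarith)
  rw [mul_add]
  refine add_le_add ?_ ?_
  · unfold rightEnergy
    gcongr
  · unfold leftEnergy
    gcongr with j
    exact le_mul_of_one_le_left (sq_nonneg _) (hd j)

theorem exp_neg_mul_integral_sum_sq_le_energy (hν : 0 ≤ ν) (hd : ∀ j, 1 ≤ d j) {b : ℝ}
    (hx : x ∈ Icc 0 b) (hu : ContinuousOn u (Icc 0 b)) (hv : ContinuousOn v (Icc 0 b)) :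
    exp (-ν * x) * ∫ ξ in 0..x, (∑ i, u ξ i ^ 2 + ∑ j, v ξ j ^ 2)
      ≤ ∫ ξ in 0..b, (rightEnergy ν u ξ + leftEnergy ν d v ξ) := by
  have hsub : Icc 0 x ⊆ Icc 0 b := Icc_subset_Icc_right hx.2
  have hsq : ContinuousOn (fun ξ ↦ ∑ i, u ξ i ^ 2 + ∑ j, v ξ j ^ 2) (Icc 0 b) :=
    (continuousOn_sum_sq hu).add (continuousOn_sum_sq hv)
  have henergy : ContinuousOn (fun ξ ↦ rightEnergy ν u ξ + leftEnergy ν d v ξ) (Icc 0 b) :=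
    (continuousOn_rightEnergy hu).add (continuousOn_leftEnergy hv)
  calc exp (-ν * x) * ∫ ξ in 0..x, (∑ i, u ξ i ^ 2 + ∑ j, v ξ j ^ 2)
      = ∫ ξ in 0..x, exp (-ν * x) * (∑ i, u ξ i ^ 2 + ∑ j, v ξ j ^ 2) :=
        (intervalIntegral.integral_const_mul _ _).symm
    _ ≤ ∫ ξ in 0..x, (rightEnergy ν u ξ + leftEnergy ν d v ξ) :=
        intervalIntegral.integral_mono_on hx.1
          (((hsq.mono hsub).const_mul _).intervalIntegrable_of_Icc hx.1)
          ((henergy.mono hsub).intervalIntegrable_of_Icc hx.1)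
          fun ξ hξ ↦ exp_neg_mul_sum_sq_le_energy hν hd hξ.1 hξ.2
    _ ≤ ∫ ξ in 0..b, (rightEnergy ν u ξ + leftEnergy ν d v ξ) :=
        intervalIntegral.integral_mono_interval le_rfl hx.1 hx.2
          (.of_forall fun ξ ↦ add_nonneg rightEnergy_nonneg
            (leftEnergy_nonneg fun j ↦ zero_le_one.trans (hd j)))
          (henergy.intervalIntegrable_of_Icc (hx.1.trans hx.2))

end ExponentialWeights

/-- The coefficients of the target system: speeds `Λʳ = diag lr` and `Λˡ = diag ll`, local coupling
`Sʳ`, `Sˡ`, integral coupling `Cʳ`, `Cˡ`, boundary coupling `Δ`, and reflection matrix `Q₀`. -/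
structure TargetSystem (ι κ : Type*) where
  lr : ι → ℝ → ℝ
  ll : κ → ℝ → ℝ
  Sr : ℝ → Matrix ι ι ℝ
  Sl : ℝ → Matrix ι κ ℝ
  Cr : ℝ → ℝ → Matrix ι ι ℝ
  Cl : ℝ → ℝ → Matrix ι κ ℝ
  Δ : ℝ → Matrix κ κ ℝ
  Q₀ : Matrix ι κ ℝ

namespace TargetSystem

variable {ι κ : Type*} {S : TargetSystem ι κ} {lo N ν : ℝ} {d : κ → ℝ} {x : ℝ}

/-- The signed propagation speeds, positive to the right. -/
def speed (S : TargetSystem ι κ) : ι ⊕ κ → ℝ → ℝ :=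
  Sum.elim S.lr (-S.ll)

/-- The weights of the Lyapunov functional: the energy weights divided by the absolute speeds. -/
noncomputable def lyapunovWeight (S : TargetSystem ι κ) (ν : ℝ) (d : κ → ℝ) : ι ⊕ κ → ℝ → ℝ :=
  fluxWeight ν d / S.speed

theorem lyapunovWeight_inl (i : ι) (x : ℝ) :
    S.lyapunovWeight ν d (.inl i) x = exp (-ν * x) / S.lr i x := rfl

theorem lyapunovWeight_inr (j : κ) (x : ℝ) :
    S.lyapunovWeight ν d (.inr j) x = d j * exp (ν * x) / S.ll j x :=
  neg_div_neg_eq _ _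

variable [LinearOrder κ]

/-- Standing assumptions on the coefficients: continuous speeds bounded below by `lo > 0`, coupling
matrices with entries bounded by `N`, and strictly lower triangular `Δ`. Continuity of the kernels
`Cʳ`, `Cˡ` in the second argument makes the integral terms genuine integrals. -/
structure IsAdmissible (S : TargetSystem ι κ) (lo N : ℝ) : Prop where
  lo_pos : 0 < lo
  bound_nonneg : 0 ≤ N
  continuousOn_lr : ∀ i, ContinuousOn (S.lr i) (Icc 0 1)
  continuousOn_ll : ∀ j, ContinuousOn (S.ll j) (Icc 0 1)
  lo_le_lr : ∀ i, ∀ x ∈ Icc (0 : ℝ) 1, lo ≤ S.lr i x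
  lo_le_ll : ∀ j, ∀ x ∈ Icc (0 : ℝ) 1, lo ≤ S.ll j x
  abs_Sr_le : ∀ x ∈ Icc (0 : ℝ) 1, ∀ i j, |S.Sr x i j| ≤ N
  abs_Sl_le : ∀ x ∈ Icc (0 : ℝ) 1, ∀ i j, |S.Sl x i j| ≤ N
  continuousOn_Cr : ∀ x ∈ Icc (0 : ℝ) 1, ContinuousOn (S.Cr x) (Icc 0 x)
  continuousOn_Cl : ∀ x ∈ Icc (0 : ℝ) 1, ContinuousOn (S.Cl x) (Icc 0 x)
  abs_Cr_le : ∀ x ∈ Icc (0 : ℝ) 1, ∀ ξ ∈ Icc 0 x, ∀ i j, |S.Cr x ξ i j| ≤ N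
  abs_Cl_le : ∀ x ∈ Icc (0 : ℝ) 1, ∀ ξ ∈ Icc 0 x, ∀ i j, |S.Cl x ξ i j| ≤ N
  abs_Δ_le : ∀ x ∈ Icc (0 : ℝ) 1, ∀ i j, |S.Δ x i j| ≤ N
  strictLower_Δ : ∀ x ∈ Icc (0 : ℝ) 1, ∀ i j, i ≤ j → S.Δ x i j = 0

theorem IsAdmissible.speed_ne_zero (hS : S.IsAdmissible lo N) (k : ι ⊕ κ)
    (hx : x ∈ Icc (0 : ℝ) 1) : S.speed k x ≠ 0 := by
  rcases k with i | j
  · exact (hS.lo_pos.trans_le (hS.lo_le_lr i x hx)).ne'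
  · exact neg_ne_zero.2 (hS.lo_pos.trans_le (hS.lo_le_ll j x hx)).ne'

theorem IsAdmissible.continuousOn_lyapunovWeight (hS : S.IsAdmissible lo N) (k : ι ⊕ κ) :
    ContinuousOn (S.lyapunovWeight ν d k) (Icc 0 1) := by
  refine ContinuousOn.div₀
    (fun x _ ↦ (hasDerivAt_fluxWeight ν d k x).continuousAt.continuousWithinAt) ?_
    fun x hx ↦ hS.speed_ne_zero k hx
  rcases k with i | j
  exacts [hS.continuousOn_lr i, (hS.continuousOn_ll j).neg]

theorem IsAdmissible.lyapunovWeight_pos (hS : S.IsAdmissible lo N) (hd : ∀ j, 0 < d j)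
    (k : ι ⊕ κ) (hx : x ∈ Icc (0 : ℝ) 1) :
    0 < S.lyapunovWeight ν d k x := by
  rcases k with i | j
  · rw [lyapunovWeight_inl]
    exact div_pos (exp_pos _) (hS.lo_pos.trans_le (hS.lo_le_lr i x hx))
  · rw [lyapunovWeight_inr]
    exact div_pos (mul_pos (hd j) (exp_pos _)) (hS.lo_pos.trans_le (hS.lo_le_ll j x hx))

theorem IsAdmissible.lyapunovWeight_le (hS : S.IsAdmissible lo N) (hd : ∀ j, 0 ≤ d j)
    (k : ι ⊕ κ) (hx : x ∈ Icc (0 : ℝ) 1) :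
    S.lyapunovWeight ν d k x ≤ lo⁻¹ * energyWeight ν d k x := by
  rw [← div_eq_inv_mul]
  rcases k with i | j
  · rw [lyapunovWeight_inl]
    exact div_le_div_of_nonneg_left (exp_pos _).le hS.lo_pos (hS.lo_le_lr i x hx)
  · rw [lyapunovWeight_inr]
    exact div_le_div_of_nonneg_left (mul_nonneg (hd j) (exp_pos _).le) hS.lo_pos
      (hS.lo_le_ll j x hx)

variable [Fintype ι] [Fintype κ] {u : ℝ → ι → ℝ} {v : ℝ → κ → ℝ}

/-- The right-hand side of the target system for a profile `(u, v)` at a fixed time. -/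
noncomputable def source (S : TargetSystem ι κ) (u : ℝ → ι → ℝ) (v : ℝ → κ → ℝ) (x : ℝ) :
    ι ⊕ κ → ℝ :=
  Sum.elim
    (S.Sr x *ᵥ u x + S.Sl x *ᵥ v x + (∫ ξ in 0..x, S.Cr x ξ *ᵥ u ξ) + ∫ ξ in 0..x, S.Cl x ξ *ᵥ v ξ)
    (S.Δ x *ᵥ v 0)

/-- Classical solutions `(ε, β)` on `[0, ∞) × [0, 1]`, with continuous time derivatives `εt`, `βt`
and space derivatives `εx`, `βx`. -/
structure IsSolution [DecidableEq ι] (S : TargetSystem ι κ) (ε εt εx : ℝ → ℝ → ι → ℝ)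
    (β βt βx : ℝ → ℝ → κ → ℝ) : Prop where
  continuousOn_ε : ContinuousOn (fun p : ℝ × ℝ ↦ ε p.1 p.2) (Ici 0 ×ˢ Icc 0 1)
  continuousOn_β : ContinuousOn (fun p : ℝ × ℝ ↦ β p.1 p.2) (Ici 0 ×ˢ Icc 0 1)
  continuousOn_εt : ContinuousOn (fun p : ℝ × ℝ ↦ εt p.1 p.2) (Ici 0 ×ˢ Icc 0 1)
  continuousOn_βt : ContinuousOn (fun p : ℝ × ℝ ↦ βt p.1 p.2) (Ici 0 ×ˢ Icc 0 1)
  hasDerivWithinAt : ∀ t ∈ Ici (0 : ℝ), ∀ x ∈ Icc (0 : ℝ) 1,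
    HasDerivWithinAt (fun s ↦ ε s x) (εt t x) (Ici 0) t ∧
    HasDerivWithinAt (fun y ↦ ε t y) (εx t x) (Icc 0 1) x ∧
    HasDerivWithinAt (fun s ↦ β s x) (βt t x) (Ici 0) t ∧
    HasDerivWithinAt (fun y ↦ β t y) (βx t x) (Icc 0 1) x
  eq_ε : ∀ t ∈ Ici (0 : ℝ), ∀ x ∈ Icc (0 : ℝ) 1,
    εt t x + (Matrix.diagonal fun i ↦ S.lr i x) *ᵥ εx t x
      = S.Sr x *ᵥ ε t x + S.Sl x *ᵥ β t x + (∫ ξ in 0..x, S.Cr x ξ *ᵥ ε t ξ)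
        + ∫ ξ in 0..x, S.Cl x ξ *ᵥ β t ξ
  eq_β : ∀ t ∈ Ici (0 : ℝ), ∀ x ∈ Icc (0 : ℝ) 1,
    βt t x - (Matrix.diagonal fun j ↦ S.ll j x) *ᵥ βx t x = S.Δ x *ᵥ β t 0
  boundary : ∀ t ∈ Ici (0 : ℝ), ε t 0 = S.Q₀ *ᵥ β t 0 ∧ β t 1 = 0

theorem IsAdmissible.two_mul_mul_source_inl_le (hS : S.IsAdmissible lo N)
    (hu : ContinuousOn u (Icc 0 1)) (hv : ContinuousOn v (Icc 0 1)) (hx : x ∈ Icc (0 : ℝ) 1)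
    (i : ι) :
    2 * u x i * S.source u v x (.inl i)
      ≤ N * (2 * (Fintype.card ι + Fintype.card κ) * u x i ^ 2
        + (∑ i, u x i ^ 2 + ∑ j, v x j ^ 2) + ∫ ξ in 0..x, (∑ i, u ξ i ^ 2 + ∑ j, v ξ j ^ 2)) := by
  have hsub : Icc 0 x ⊆ Icc 0 1 := Icc_subset_Icc_right hx.2
  have hSr := two_mul_mul_mulVec_le (hS.abs_Sr_le x hx i) (u x i) (u x)
  have hSl := two_mul_mul_mulVec_le (hS.abs_Sl_le x hx i) (u x i) (v x)
  have hCr := two_mul_mul_integral_mulVec_le hx.1 (hS.continuousOn_Cr x hx) (hu.mono hsub)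
    (fun ξ hξ ↦ hS.abs_Cr_le x hx ξ hξ i) (u x i)
  have hCl := two_mul_mul_integral_mulVec_le hx.1 (hS.continuousOn_Cl x hx) (hv.mono hsub)
    (fun ξ hξ ↦ hS.abs_Cl_le x hx ξ hξ i) (u x i)
  have hlength : N * ((x - 0) * ((Fintype.card ι + Fintype.card κ) * u x i ^ 2))
      ≤ N * ((Fintype.card ι + Fintype.card κ) * u x i ^ 2) :=
    mul_le_mul_of_nonneg_left (mul_le_of_le_one_left (by positivity) (by linarith [hx.2]))
      hS.bound_nonneg
  rw [intervalIntegral.integral_add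
    ((continuousOn_sum_sq (hu.mono hsub)).intervalIntegrable_of_Icc hx.1)
    ((continuousOn_sum_sq (hv.mono hsub)).intervalIntegrable_of_Icc hx.1)]
  simp only [source, Sum.elim_inl, Pi.add_apply]
  linarith

theorem IsAdmissible.two_mul_mul_source_inr_le (hS : S.IsAdmissible lo N)
    (hx : x ∈ Icc (0 : ℝ) 1) (j : κ) :
    2 * v x j * S.source u v x (.inr j)
      ≤ N * (Fintype.card κ * v x j ^ 2 + ∑ k with k < j, v 0 k ^ 2) :=
  two_mul_mul_mulVec_le_of_strictLower hS.bound_nonneg (hS.abs_Δ_le x hx j)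
    (hS.strictLower_Δ x hx j) (v x j) (v 0)

theorem IsAdmissible.two_mul_sum_lyapunovWeight_source_inl_le (hS : S.IsAdmissible lo N)
    (hν : 0 ≤ ν) (hd : ∀ j, 1 ≤ d j) (hu : ContinuousOn u (Icc 0 1))
    (hv : ContinuousOn v (Icc 0 1)) (hx : x ∈ Icc (0 : ℝ) 1) :
    2 * ∑ i, S.lyapunovWeight ν d (.inl i) x * (u x i * S.source u v x (.inl i))
      ≤ N / lo * (2 * (Fintype.card ι + Fintype.card κ) * rightEnergy ν u x
        + Fintype.card ι * ((rightEnergy ν u x + leftEnergy ν d v x)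
          + ∫ ξ in 0..1, (rightEnergy ν u ξ + leftEnergy ν d v ξ))) := by
  set a : ℝ → ℝ := fun ξ ↦ ∑ i, u ξ i ^ 2 + ∑ j, v ξ j ^ 2
  have hN := hS.bound_nonneg
  have hlo := hS.lo_pos
  have hIa : 0 ≤ ∫ ξ in 0..x, a ξ :=
    intervalIntegral.integral_nonneg hx.1 fun ξ _ ↦ by positivity
  have hterm (i : ι) : 2 * (S.lyapunovWeight ν d (.inl i) x * (u x i * S.source u v x (.inl i)))
      ≤ exp (-ν * x) / lo * (N * (2 * (Fintype.card ι + Fintype.card κ) * u x i ^ 2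
        + a x + ∫ ξ in 0..x, a ξ)) := by
    rw [lyapunovWeight_inl, mul_left_comm, ← mul_assoc 2 (u x i)]
    exact div_mul_le_div_mul_of_le hlo (hS.lo_le_lr i x hx) (exp_pos _).le
      (hS.two_mul_mul_source_inl_le hu hv hx i) (by positivity)
  calc 2 * ∑ i, S.lyapunovWeight ν d (.inl i) x * (u x i * S.source u v x (.inl i))
      ≤ ∑ i, exp (-ν * x) / lo * (N * (2 * (Fintype.card ι + Fintype.card κ) * u x i ^ 2
          + a x + ∫ ξ in 0..x, a ξ)) := by
        rw [Finset.mul_sum]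
        exact Finset.sum_le_sum fun i _ ↦ hterm i
    _ = N / lo * (2 * (Fintype.card ι + Fintype.card κ) * rightEnergy ν u x
          + Fintype.card ι * (exp (-ν * x) * a x + exp (-ν * x) * ∫ ξ in 0..x, a ξ)) := by
        simp only [rightEnergy, ← Finset.mul_sum, Finset.sum_add_distrib, Finset.sum_const,
          Finset.card_univ, nsmul_eq_mul]
        ring
    _ ≤ _ := by
        gcongr
        · exact exp_neg_mul_sum_sq_le_energy hν hd hx.1 le_rfl
        · exact exp_neg_mul_integral_sum_sq_le_energy hν hd hx hu hv

theorem IsAdmissible.two_mul_sum_lyapunovWeight_source_inr_le (hS : S.IsAdmissible lo N)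
    (hν : 0 ≤ ν) (hd : ∀ j, 0 ≤ d j) (hx : x ∈ Icc (0 : ℝ) 1) :
    2 * ∑ j, S.lyapunovWeight ν d (.inr j) x * (v x j * S.source u v x (.inr j))
      ≤ N / lo * (Fintype.card κ * leftEnergy ν d v x
        + exp ν * ∑ j, d j * ∑ k with k < j, v 0 k ^ 2) := by
  have hN := hS.bound_nonneg
  have hlo := hS.lo_pos
  have hterm (j : κ) : 2 * (S.lyapunovWeight ν d (.inr j) x * (v x j * S.source u v x (.inr j)))
      ≤ d j * exp (ν * x) / lo
        * (N * (Fintype.card κ * v x j ^ 2 + ∑ k with k < j, v 0 k ^ 2)) := by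
    rw [lyapunovWeight_inr, mul_left_comm, ← mul_assoc 2 (v x j)]
    exact div_mul_le_div_mul_of_le hlo (hS.lo_le_ll j x hx) (mul_nonneg (hd j) (exp_pos _).le)
      (hS.two_mul_mul_source_inr_le hx j) (by positivity)
  have hboundary : 0 ≤ ∑ j, d j * ∑ k with k < j, v 0 k ^ 2 :=
    Finset.sum_nonneg fun j _ ↦ mul_nonneg (hd j) (by positivity)
  calc 2 * ∑ j, S.lyapunovWeight ν d (.inr j) x * (v x j * S.source u v x (.inr j))
      ≤ ∑ j, d j * exp (ν * x) / lo
          * (N * (Fintype.card κ * v x j ^ 2 + ∑ k with k < j, v 0 k ^ 2)) := by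
        rw [Finset.mul_sum]
        exact Finset.sum_le_sum fun j _ ↦ hterm j
    _ = N / lo * (Fintype.card κ * leftEnergy ν d v x
          + exp (ν * x) * ∑ j, d j * ∑ k with k < j, v 0 k ^ 2) := by
        simp only [leftEnergy, mul_add (N / lo), Finset.mul_sum _ _ (exp _),
          Finset.mul_sum _ _ (N / lo), Finset.mul_sum _ _ (Fintype.card κ : ℝ),
          ← Finset.sum_add_distrib]
        exact Finset.sum_congr rfl fun j _ ↦ by ring
    _ ≤ _ := by
        gcongr
        exact mul_le_of_le_one_right hν hx.2

/-- At the outflow boundary `x = 0` of the left-moving components, the flux through the cascading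
weights `d` absorbs both the reflected components and the `Δ` coupling. -/
theorem flux_zero_add_le {L : ℝ}
    (hd : ∀ k, (∑ i, ∑ j, S.Q₀ i j ^ 2) + L * ∑ j with k < j, d j ≤ d k)
    (hu : u 0 = S.Q₀ *ᵥ v 0) :
    rightEnergy ν u 0 - leftEnergy ν d v 0 + L * ∑ j, d j * ∑ k with k < j, v 0 k ^ 2 ≤ 0 := by
  have := sum_mulVec_sq_add_le hd (v 0)
  simp only [rightEnergy, leftEnergy, hu, mul_zero, exp_zero, one_mul]
  linarith

theorem IsAdmissible.weightedInner_add_two_mul_source_le (hS : S.IsAdmissible lo N) {μ : ℝ}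
    (hμ : 0 ≤ μ) (hν : N / lo * (4 * Fintype.card ι + 2 * Fintype.card κ) + μ ≤ ν)
    (hd : ∀ j, 1 ≤ d j) (hu : ContinuousOn u (Icc 0 1)) (hv : ContinuousOn v (Icc 0 1))
    (hx : x ∈ Icc (0 : ℝ) 1) :
    weightedInner (fun k x ↦ -ν * energyWeight ν d k x) (stack u v) (stack u v) x
        + 2 * weightedInner (S.lyapunovWeight ν d) (stack u v) (S.source u v) x
      ≤ -(μ + N / lo * Fintype.card ι) * (rightEnergy ν u x + leftEnergy ν d v x)
        + N / lo * (Fintype.card ι * (∫ ξ in 0..1, (rightEnergy ν u ξ + leftEnergy ν d v ξ))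
          + exp ν * ∑ j, d j * ∑ k with k < j, v 0 k ^ 2) := by
  have hd0 (j : κ) : 0 ≤ d j := zero_le_one.trans (hd j)
  have hr : 0 ≤ N / lo := div_nonneg hS.bound_nonneg hS.lo_pos.le
  have hν0 : 0 ≤ ν := le_trans (by positivity) hν
  have hright : 0 ≤ rightEnergy ν u x := rightEnergy_nonneg
  have hleft : 0 ≤ leftEnergy ν d v x := leftEnergy_nonneg hd0
  have hsource_right := hS.two_mul_sum_lyapunovWeight_source_inl_le hν0 hd hu hv hx
  have hsource_left := hS.two_mul_sum_lyapunovWeight_source_inr_le (u := u) (v := v) hν0 hd0 hx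
  have hflux : weightedInner (fun k x ↦ -ν * energyWeight ν d k x) (stack u v) (stack u v) x
      = -ν * (rightEnergy ν u x + leftEnergy ν d v x) := by
    rw [← weightedInner_energyWeight_self, weightedInner, weightedInner, Finset.mul_sum]
    simp only [mul_assoc]
  have hsource : 2 * weightedInner (S.lyapunovWeight ν d) (stack u v) (S.source u v) x
      = 2 * (∑ i, S.lyapunovWeight ν d (.inl i) x * (u x i * S.source u v x (.inl i)))
        + 2 * ∑ j, S.lyapunovWeight ν d (.inr j) x * (v x j * S.source u v x (.inr j)) := by
    rw [weightedInner, Fintype.sum_sum_type, mul_add]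
    rfl
  have hdamping := mul_le_mul_of_nonneg_right hν (add_nonneg hright hleft)
  have hspare : 0 ≤ N / lo * ((Fintype.card κ + 2 * Fintype.card ι) * leftEnergy ν d v x) := by
    positivity
  rw [hflux, hsource]
  linarith

theorem IsAdmissible.mul_integral_weightedInner_le (hS : S.IsAdmissible lo N)
    (hd : ∀ j, 0 ≤ d j) (hu : ContinuousOn u (Icc 0 1)) (hv : ContinuousOn v (Icc 0 1)) :
    lo * ∫ x in 0..1, weightedInner (S.lyapunovWeight ν d) (stack u v) (stack u v) x
      ≤ ∫ x in 0..1, (rightEnergy ν u x + leftEnergy ν d v x) := by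
  have hz := continuousOn_stack hu hv
  rw [← intervalIntegral.integral_const_mul]
  refine intervalIntegral.integral_mono_on zero_le_one
    ((continuousOn_weightedInner hS.continuousOn_lyapunovWeight hz
      hz).const_mul lo |>.intervalIntegrable_of_Icc zero_le_one)
    (((continuousOn_rightEnergy hu).add
      (continuousOn_leftEnergy hv)).intervalIntegrable_of_Icc zero_le_one) fun x hx ↦ ?_
  rw [← weightedInner_energyWeight_self, ← le_inv_mul_iff₀ hS.lo_pos]
  exact weightedInner_self_le_mul fun k ↦ hS.lyapunovWeight_le hd k hx

variable [DecidableEq ι] {ε εt εx : ℝ → ℝ → ι → ℝ} {β βt βx : ℝ → ℝ → κ → ℝ} {t : ℝ}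

theorem IsSolution.transport (h : S.IsSolution ε εt εx β βt βx) (ht : 0 ≤ t)
    (hx : x ∈ Icc (0 : ℝ) 1) (k : ι ⊕ κ) :
    stack (εt t) (βt t) x k + S.speed k x * stack (εx t) (βx t) x k
      = S.source (ε t) (β t) x k := by
  rcases k with i | j
  · have := congrFun (h.eq_ε t ht x hx) i
    rw [Pi.add_apply, mulVec_diagonal] at this
    exact this
  · have := congrFun (h.eq_β t ht x hx) j
    rw [Pi.sub_apply, mulVec_diagonal, sub_eq_add_neg, ← neg_mul] at this
    exact this

theorem IsSolution.two_mul_integral_weightedInner_le_energy (h : S.IsSolution ε εt εx β βt βx)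
    (hS : S.IsAdmissible lo N) {μ : ℝ} (hμ : 0 ≤ μ)
    (hν : N / lo * (4 * Fintype.card ι + 2 * Fintype.card κ) + μ ≤ ν) (hd : ∀ j, 1 ≤ d j)
    (hdQ : ∀ k, (∑ i, ∑ j, S.Q₀ i j ^ 2) + N / lo * exp ν * ∑ j with k < j, d j ≤ d k)
    (ht : 0 ≤ t) :
    2 * ∫ x in 0..1, weightedInner (S.lyapunovWeight ν d) (stack (ε t) (β t))
        (stack (εt t) (βt t)) x
      ≤ -μ * ∫ x in 0..1, (rightEnergy ν (ε t) x + leftEnergy ν d (β t) x) := by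
  have hε := continuousOn_slice h.continuousOn_ε ht
  have hβ := continuousOn_slice h.continuousOn_β ht
  set energy : ℝ → ℝ := fun x ↦ rightEnergy ν (ε t) x + leftEnergy ν d (β t) x
  have hint_energy : IntervalIntegrable energy volume 0 1 :=
    ((continuousOn_rightEnergy hε).add
      (continuousOn_leftEnergy hβ)).intervalIntegrable_of_Icc zero_le_one
  have hint : IntervalIntegrable (weightedInner (S.lyapunovWeight ν d) (stack (ε t) (β t))
      (stack (εt t) (βt t))) volume 0 1 :=
    (continuousOn_weightedInner hS.continuousOn_lyapunovWeight (continuousOn_stack hε hβ)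
      (continuousOn_stack (continuousOn_slice h.continuousOn_εt ht)
        (continuousOn_slice h.continuousOn_βt ht))).intervalIntegrable_of_Icc zero_le_one
  have hbalance := two_mul_integral_weightedInner_le_of_transport zero_le_one
    (fun k x hx ↦ hS.speed_ne_zero k hx)
    (fun k x _ ↦ (hasDerivAt_fluxWeight ν d k x).hasDerivWithinAt)
    (fun x hx ↦ hasDerivWithinAt_stack (h.hasDerivWithinAt t ht x hx).2.1
      (h.hasDerivWithinAt t ht x hx).2.2.2)
    (fun x hx k ↦ h.transport ht hx k) hint
    ((hint_energy.const_mul _).add intervalIntegrable_const)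
    fun x hx ↦ hS.weightedInner_add_two_mul_source_le hμ hν hd hε hβ hx
  have hinflow := flux_zero_add_le (ν := ν) (v := β t) hdQ (h.boundary t ht).1
  have houtflow : 0 ≤ rightEnergy ν (ε t) 1 - leftEnergy ν d (β t) 1 := by
    have : leftEnergy ν d (β t) 1 = 0 := by simp [leftEnergy, (h.boundary t ht).2]
    rw [this, sub_zero]
    exact rightEnergy_nonneg
  rw [weightedInner_fluxWeight_self, weightedInner_fluxWeight_self, intervalIntegral.integral_add
    (hint_energy.const_mul _) intervalIntegrable_const, intervalIntegral.integral_const_mul,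
    intervalIntegral.integral_const] at hbalance
  simp only [sub_zero, one_smul] at hbalance
  refine hbalance.trans ?_
  linarith

theorem IsSolution.two_mul_integral_weightedInner_le_self (h : S.IsSolution ε εt εx β βt βx)
    (hS : S.IsAdmissible lo N) {μ : ℝ} (hμ : 0 ≤ μ)
    (hν : N / lo * (4 * Fintype.card ι + 2 * Fintype.card κ) + μ / lo ≤ ν) (hd : ∀ j, 1 ≤ d j)
    (hdQ : ∀ k, (∑ i, ∑ j, S.Q₀ i j ^ 2) + N / lo * exp ν * ∑ j with k < j, d j ≤ d k)
    (ht : 0 ≤ t) :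
    2 * ∫ x in 0..1, weightedInner (S.lyapunovWeight ν d) (stack (ε t) (β t))
        (stack (εt t) (βt t)) x
      ≤ -μ * ∫ x in 0..1, weightedInner (S.lyapunovWeight ν d) (stack (ε t) (β t))
        (stack (ε t) (β t)) x := by
  have hlo := hS.lo_pos
  have hcompare := hS.mul_integral_weightedInner_le (ν := ν) (fun j ↦ zero_le_one.trans (hd j))
    (continuousOn_slice h.continuousOn_ε ht) (continuousOn_slice h.continuousOn_β ht)
  refine (h.two_mul_integral_weightedInner_le_energy hS (div_nonneg hμ hlo.le) hν hd hdQ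
    ht).trans ?_
  rw [neg_mul, neg_mul, neg_le_neg_iff, div_mul_eq_mul_div, le_div_iff₀ hlo, mul_assoc,
    mul_comm _ lo]
  exact mul_le_mul_of_nonneg_left hcompare hμ

theorem IsSolution.hasDerivAt_stack (h : S.IsSolution ε εt εx β βt βx) (ht : 0 < t)
    (hx : x ∈ Icc (0 : ℝ) 1) :
    HasDerivAt (fun s ↦ stack (ε s) (β s) x) (stack (εt t) (βt t) x) t := by
  obtain ⟨hε, -, hβ, -⟩ := h.hasDerivWithinAt t ht.le x hx
  exact (hasDerivWithinAt_stack hε hβ).hasDerivAt (Ici_mem_nhds ht)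

end TargetSystem

theorem target_system_exponential_stability_general {ι κ : Type*} [Fintype ι] [DecidableEq ι]
    [Fintype κ] [LinearOrder κ] {S : TargetSystem ι κ} {lo N c : ℝ} (hS : S.IsAdmissible lo N)
    (hc : 0 ≤ c) :
    ∃ K : ℝ, 1 ≤ K ∧ ∀ (ε εt εx : ℝ → ℝ → ι → ℝ) (β βt βx : ℝ → ℝ → κ → ℝ),
      S.IsSolution ε εt εx β βt βx → ∀ t ∈ Ici (0 : ℝ),
        √(∫ x in (0 : ℝ)..1, ((∑ i, ε t x i ^ 2) + ∑ j, β t x j ^ 2))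
          ≤ K * exp (-c * t) * √(∫ x in (0 : ℝ)..1, ((∑ i, ε 0 x i ^ 2) + ∑ j, β 0 x j ^ 2)) := by
  have hr : 0 ≤ N / lo := div_nonneg hS.bound_nonneg hS.lo_pos.le
  set ν : ℝ := N / lo * (4 * Fintype.card ι + 2 * Fintype.card κ) + 2 * c / lo
  obtain ⟨d, hd, hdQ⟩ := exists_weights (κ := κ) (q := ∑ i, ∑ j, S.Q₀ i j ^ 2)
    (L := N / lo * exp ν) (by positivity) (by positivity)
  obtain ⟨K, hK, hdecay⟩ := exists_sqrt_integral_le_exp_mul_of_lyapunov zero_le_one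
    hS.continuousOn_lyapunovWeight
    (fun k _ hx ↦ hS.lyapunovWeight_pos (ν := ν) (fun j ↦ zero_lt_one.trans_le (hd j)) k hx) c
  refine ⟨K, hK, fun ε εt εx β βt βx h t ht ↦ ?_⟩
  have hstack := hdecay (fun t ↦ stack (ε t) (β t)) (fun t ↦ stack (εt t) (βt t))
    (continuousOn_stack h.continuousOn_ε h.continuousOn_β)
    (continuousOn_stack h.continuousOn_εt h.continuousOn_βt)
    (fun t ht x hx ↦ h.hasDerivAt_stack ht hx)
    (fun t ht ↦ h.two_mul_integral_weightedInner_le_self hS (by positivity) le_rfl hd hdQ ht.le)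
    t ht
  simp only [Fintype.sum_sum_type] at hstack
  exact hstack

theorem target_system_exponential_stability
    (n m : ℕ)
    (lr : Fin n → ℝ → ℝ) (ll : Fin m → ℝ → ℝ)
    (lamlo lamhi M B : ℝ) (hlamlo : 0 < lamlo)
    (hlrC1 : ∀ i, ContDiffOn ℝ 1 (lr i) (Icc 0 1))
    (hllC1 : ∀ j, ContDiffOn ℝ 1 (ll j) (Icc 0 1))
    (hlrb : ∀ i, ∀ x ∈ Icc (0:ℝ) 1, lamlo ≤ lr i x ∧ lr i x ≤ lamhi)
    (hllb : ∀ j, ∀ x ∈ Icc (0:ℝ) 1, lamlo ≤ ll j x ∧ ll j x ≤ lamhi)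
    (Sr : ℝ → Matrix (Fin n) (Fin n) ℝ) (Sl : ℝ → Matrix (Fin n) (Fin m) ℝ)
    (hSrc : ContinuousOn Sr (Icc 0 1)) (hSlc : ContinuousOn Sl (Icc 0 1))
    (hSrM : ∀ x ∈ Icc (0:ℝ) 1, l2OpNorm (Sr x) ≤ M)
    (hSlM : ∀ x ∈ Icc (0:ℝ) 1, l2OpNorm (Sl x) ≤ M)
    (Cr : ℝ → ℝ → Matrix (Fin n) (Fin n) ℝ) (Cl : ℝ → ℝ → Matrix (Fin n) (Fin m) ℝ)
    (hCrc : ContinuousOn (fun p : ℝ × ℝ => Cr p.1 p.2)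
      {p : ℝ × ℝ | 0 ≤ p.2 ∧ p.2 ≤ p.1 ∧ p.1 ≤ 1})
    (hClc : ContinuousOn (fun p : ℝ × ℝ => Cl p.1 p.2)
      {p : ℝ × ℝ | 0 ≤ p.2 ∧ p.2 ≤ p.1 ∧ p.1 ≤ 1})
    (hCrM : ∀ x ξ : ℝ, 0 ≤ ξ → ξ ≤ x → x ≤ 1 → l2OpNorm (Cr x ξ) ≤ M)
    (hClM : ∀ x ξ : ℝ, 0 ≤ ξ → ξ ≤ x → x ≤ 1 → l2OpNorm (Cl x ξ) ≤ M)
    (Δ : ℝ → Matrix (Fin m) (Fin m) ℝ)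
    (hΔc : ContinuousOn Δ (Icc 0 1))
    (hΔb : ∀ x ∈ Icc (0:ℝ) 1, l2OpNorm (Δ x) ≤ B)
    (hΔtri : ∀ x ∈ Icc (0:ℝ) 1, ∀ i j : Fin m, i ≤ j → Δ x i j = 0)
    (Q0 : Matrix (Fin n) (Fin m) ℝ) :
    ∃ K c : ℝ, 1 ≤ K ∧ 0 < c ∧
      ∀ (ε εt εx : ℝ → ℝ → Fin n → ℝ) (β βt βx : ℝ → ℝ → Fin m → ℝ),
        ContinuousOn (fun p : ℝ × ℝ => ε p.1 p.2) (Ici 0 ×ˢ Icc 0 1) →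
        ContinuousOn (fun p : ℝ × ℝ => β p.1 p.2) (Ici 0 ×ˢ Icc 0 1) →
        ContinuousOn (fun p : ℝ × ℝ => εt p.1 p.2) (Ici 0 ×ˢ Icc 0 1) →
        ContinuousOn (fun p : ℝ × ℝ => εx p.1 p.2) (Ici 0 ×ˢ Icc 0 1) →
        ContinuousOn (fun p : ℝ × ℝ => βt p.1 p.2) (Ici 0 ×ˢ Icc 0 1) →
        ContinuousOn (fun p : ℝ × ℝ => βx p.1 p.2) (Ici 0 ×ˢ Icc 0 1) →
        (∀ t ∈ Ici (0:ℝ), ∀ x ∈ Icc (0:ℝ) 1,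
          HasDerivWithinAt (fun s => ε s x) (εt t x) (Ici 0) t ∧
          HasDerivWithinAt (fun y => ε t y) (εx t x) (Icc 0 1) x ∧
          HasDerivWithinAt (fun s => β s x) (βt t x) (Ici 0) t ∧
          HasDerivWithinAt (fun y => β t y) (βx t x) (Icc 0 1) x) →
        (∀ t ∈ Ici (0:ℝ), ∀ x ∈ Icc (0:ℝ) 1,
          εt t x + (Matrix.diagonal fun i => lr i x).mulVec (εx t x)
            = (Sr x).mulVec (ε t x) + (Sl x).mulVec (β t x)
              + (∫ ξ in (0:ℝ)..x, (Cr x ξ).mulVec (ε t ξ))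
              + ∫ ξ in (0:ℝ)..x, (Cl x ξ).mulVec (β t ξ)) →
        (∀ t ∈ Ici (0:ℝ), ∀ x ∈ Icc (0:ℝ) 1,
          βt t x - (Matrix.diagonal fun j => ll j x).mulVec (βx t x)
            = (Δ x).mulVec (β t 0)) →
        (∀ t ∈ Ici (0:ℝ), ε t 0 = Q0.mulVec (β t 0) ∧ β t 1 = 0) →
        ∀ t ∈ Ici (0:ℝ),
          Real.sqrt (∫ x in (0:ℝ)..1,
              ((∑ i, (ε t x i) ^ 2) + ∑ j, (β t x j) ^ 2))
            ≤ K * Real.exp (-c * t) *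
              Real.sqrt (∫ x in (0:ℝ)..1,
                ((∑ i, (ε 0 x i) ^ 2) + ∑ j, (β 0 x j) ^ 2)) := by
  let S : TargetSystem (Fin n) (Fin m) := ⟨lr, ll, Sr, Sl, Cr, Cl, Δ, Q0⟩
  have hM : M ≤ max |M| |B| := (le_abs_self M).trans (le_max_left _ _)
  have hB : B ≤ max |M| |B| := (le_abs_self B).trans (le_max_right _ _)
  have hentry {k l : ℕ} (A : Matrix (Fin k) (Fin l) ℝ) (hA : l2OpNorm A ≤ max |M| |B|) (i j) :
      |A i j| ≤ max |M| |B| := (abs_apply_le_l2OpNorm A i j).trans hA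
  have hS : S.IsAdmissible lamlo (max |M| |B|) :=
    { lo_pos := hlamlo
      bound_nonneg := (abs_nonneg M).trans (le_max_left _ _)
      continuousOn_lr := fun i ↦ (hlrC1 i).continuousOn
      continuousOn_ll := fun j ↦ (hllC1 j).continuousOn
      lo_le_lr := fun i x hx ↦ (hlrb i x hx).1
      lo_le_ll := fun j x hx ↦ (hllb j x hx).1
      abs_Sr_le := fun x hx ↦ hentry _ ((hSrM x hx).trans hM)
      abs_Sl_le := fun x hx ↦ hentry _ ((hSlM x hx).trans hM)
      continuousOn_Cr := fun x hx ↦ hCrc.comp (f := fun ξ ↦ (x, ξ)) (by fun_prop)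
        fun ξ hξ ↦ ⟨hξ.1, hξ.2, hx.2⟩
      continuousOn_Cl := fun x hx ↦ hClc.comp (f := fun ξ ↦ (x, ξ)) (by fun_prop)
        fun ξ hξ ↦ ⟨hξ.1, hξ.2, hx.2⟩
      abs_Cr_le := fun x hx ξ hξ ↦ hentry _ ((hCrM x ξ hξ.1 hξ.2 hx.2).trans hM)
      abs_Cl_le := fun x hx ξ hξ ↦ hentry _ ((hClM x ξ hξ.1 hξ.2 hx.2).trans hM)
      abs_Δ_le := fun x hx ↦ hentry _ ((hΔb x hx).trans hB)
      strictLower_Δ := hΔtri }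
  obtain ⟨K, hK, hdecay⟩ := target_system_exponential_stability_general hS zero_le_one
  exact ⟨K, 1, hK, one_pos, fun ε εt εx β βt βx hε hβ hεt _ hβt _ hderiv heqε heqβ hbdry ↦
    hdecay ε εt εx β βt βx ⟨hε, hβ, hεt, hβt, hderiv, heqε, heqβ, hbdry⟩⟩
end

section
/- Exponential stability of the closed-loop system under the backstepping boundary control (Theorem 1): Suppose Λʳ(x) = diag(λʳ₁(x),…,λʳₙ(x)) and Λˡ(x) = diag(λˡ₁(x),…,λˡₘ(x)) are C¹ diagonal matrix functions on [0,1] whose entries satisfy 0 < λ̲ ≤ λʳᵢ(x), λˡⱼ(x) ≤ λ̄; Sʳ, Sˡ, Sᵒ are continuous and bounded by M in matrix norm; Q₀ ∈ ℝ^{n×m}, R₁ ∈ ℝ^{m×n}. Suppose the kernels G₂₁: 𝕋 → ℝ^{m×n} and G₂₂: 𝕋 → ℝ^{m×m} are C¹ and satisfy the kernel equations (K1), (K2) and boundary conditions (B1), (B2), the matrix Δ(x) := G₂₂(x,0)Λˡ(0) − G₂₁(x,0)Λʳ(0)Q₀ is strictly lower triangular for every x ∈ [0,1], and Cʳ: 𝕋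 → ℝ^{n×n}, Cˡ: 𝕋 → ℝ^{n×m} are continuous and satisfy the relations Cʳ(x,ξ) = Sˡ(x)G₂₁(x,ξ) + ∫_ξˣ Cˡ(x,η)G₂₁(η,ξ)dη and Cˡ(x,ξ) = Sˡ(x)G₂₂(x,ξ) + ∫_ξˣ Cˡ(x,η)G₂₂(η,ξ)dη. Then there exist constants K ≥ 1 and c > 0 such that every classical C¹ solution (u, v) of the plant system with boundary conditions u(t,0) = Q₀v(t,0) and v(t,1) = R₁u(t,1) + 𝔘(t), where the feedback control is 𝔘(t) = −R₁u(t,1) + ∫₀¹ [G₂₁(1,ξ)u(t,ξ) + G₂₂(1,ξ)v(t,ξ)] dξ, satisfies ‖(u(t,·), v(t,·))‖_{L²(0,1)} ≤ K e^{−ct} ‖(u(0,·), v(0,·))‖_{L²(0,1)} for all t ≥ 0. -/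
open MeasureTheory Set Matrix Real

/-!
The transformation `β(t, x) = v(t, x) - ∫₀ˣ (G₂₁(x, ξ) u(t, ξ) + G₂₂(x, ξ) v(t, ξ)) dξ` turns
the closed loop into `∂ₜu + Λʳ∂ₓu = Sʳu + Sˡv`, `∂ₜβ - Λˡ∂ₓβ = Δ(x) β(t, 0)`, with
`u(t, 0) = Q₀ β(t, 0)` and `β(t, 1) = 0`. The decay rate of the functional
`∫₀¹ (e^{-δx} ∑ᵢ uᵢ² / λʳᵢ + e^{δx} ∑ⱼ wⱼ βⱼ² / λˡⱼ) dx` is made as large as desired by `δ` and the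
weights `wⱼ`. Against the weight `e^{-δx}` a Volterra integral has norm `O(1 / √δ)`, so `v` is
controlled by `u` and `β` directly from the definition of `β`, without inverse kernels. Since
`β(t, 0)` enters with a strictly lower triangular matrix, each boundary term `βₖ(t, 0)²` only
perturbs the equations of index `j > k`, and is absorbed once `wₖ` dominates those `wⱼ`.
-/

section Triangle

/-- The triangle `a ≤ ξ ≤ x ≤ b` of points `(x, ξ)`, the domain of a Volterra kernel. -/
def volterraTriangle (a b : ℝ) : Set (ℝ × ℝ) := {p | a ≤ p.2 ∧ p.2 ≤ p.1 ∧ p.1 ≤ b}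

theorem isCompact_volterraTriangle (a b : ℝ) : IsCompact (volterraTriangle a b) := by
  refine (isCompact_Icc.prod isCompact_Icc : IsCompact (Icc a b ×ˢ Icc a b)).of_isClosed_subset
    ?_ fun p hp => ⟨⟨hp.1.trans hp.2.1, hp.2.2⟩, hp.1, hp.2.1.trans hp.2.2⟩
  exact (isClosed_le continuous_const continuous_snd).inter
    ((isClosed_le continuous_snd continuous_fst).inter
      (isClosed_le continuous_fst continuous_const))

variable {a b : ℝ}

section Slices

variable {F : Type*} [TopologicalSpace F] {k : ℝ → ℝ → F}

theorem continuousOn_row (hk : ContinuousOn (fun p : ℝ × ℝ => k p.1 p.2) (volterraTriangle a b))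
    {x : ℝ} (hx : x ≤ b) : ContinuousOn (k x) (Icc a x) :=
  hk.comp (f := fun ξ => (x, ξ)) (by fun_prop) fun _ hξ => ⟨hξ.1, hξ.2, hx⟩

theorem continuousOn_column (hk : ContinuousOn (fun p : ℝ × ℝ => k p.1 p.2) (volterraTriangle a b))
    {ξ : ℝ} (hξ : a ≤ ξ) : ContinuousOn (fun x => k x ξ) (Icc ξ b) :=
  hk.comp (f := fun x => (x, ξ)) (by fun_prop) fun _ hx => ⟨hξ, hx.1, hx.2⟩

theorem continuousOn_diagonal
    (hk : ContinuousOn (fun p : ℝ × ℝ => k p.1 p.2) (volterraTriangle a b)) :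
    ContinuousOn (fun x => k x x) (Icc a b) :=
  hk.comp (f := fun x => (x, x)) (by fun_prop) fun _ hx => ⟨hx.1, le_rfl, hx.2⟩

end Slices

variable {E : Type*} [NormedAddCommGroup E] [NormedSpace ℝ E] {k : ℝ → ℝ → E}

theorem continuousOn_integral_of_continuousOn_triangle {X : Type*} [TopologicalSpace X] {S : Set X}
    {k : X → ℝ → ℝ → E}
    (hk : ContinuousOn (fun p : X × ℝ × ℝ => k p.1 p.2.1 p.2.2) (S ×ˢ volterraTriangle a b)) :
    ContinuousOn (fun p : X × ℝ => ∫ ξ in a..p.2, k p.1 p.2 ξ) (S ×ˢ Icc a b) := by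
  rw [continuousOn_iff_continuous_domRestrict]
  -- Clamping `ξ` to `[a, x]` extends the integrand continuously to every `ξ`.
  have hclamp : Continuous fun q : (S ×ˢ Icc a b : Set (X × ℝ)) × ℝ =>
      k q.1.1.1 q.1.1.2 (max a (min q.2 q.1.1.2)) :=
    hk.comp_continuous
      (f := fun q : (S ×ˢ Icc a b : Set (X × ℝ)) × ℝ =>
        (q.1.1.1, q.1.1.2, max a (min q.2 q.1.1.2)))
      (by fun_prop)
      fun q => ⟨q.1.2.1, le_max_left _ _, max_le q.1.2.2.1 (min_le_right _ _), q.1.2.2.2⟩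
  have hint := intervalIntegral.continuous_parametric_intervalIntegral_of_continuous (μ := volume)
    (f := fun (q : (S ×ˢ Icc a b : Set (X × ℝ))) ξ => k q.1.1 q.1.2 (max a (min ξ q.1.2)))
    (a₀ := a) hclamp (s := fun q : (S ×ˢ Icc a b : Set (X × ℝ)) => q.1.2) (by fun_prop)
  convert hint using 2 with q
  refine intervalIntegral.integral_congr fun ξ hξ => ?_
  rw [uIcc_of_le q.2.2.1] at hξ
  simp only [min_eq_left hξ.2, max_eq_right hξ.1]

theorem continuousOn_integral_of_continuousOn_prod {X : Type*} [TopologicalSpace X] {S : Set X}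
    (hab : a ≤ b) {f : X → ℝ → E} (hf : ContinuousOn (fun p : X × ℝ => f p.1 p.2) (S ×ˢ Icc a b)) :
    ContinuousOn (fun s => ∫ x in a..b, f s x) S :=
  (continuousOn_integral_of_continuousOn_triangle (k := fun s _ x => f s x)
    (hf.comp (f := fun p : X × ℝ × ℝ => (p.1, p.2.2)) (by fun_prop)
      fun _ hp => ⟨hp.1, hp.2.1, hp.2.2.1.trans hp.2.2.2⟩)).comp
    (f := fun s => (s, b)) (by fun_prop) fun _ hs => ⟨hs, right_mem_Icc.2 hab⟩

theorem continuousOn_integral_row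
    (hk : ContinuousOn (fun p : ℝ × ℝ => k p.1 p.2) (volterraTriangle a b)) :
    ContinuousOn (fun x => ∫ ξ in a..x, k x ξ) (Icc a b) :=
  (continuousOn_integral_of_continuousOn_triangle (S := univ) (k := fun _ : Unit => k)
    (hk.comp (f := Prod.snd) (by fun_prop) fun p hp => hp.2)).comp
    (f := fun x => ((), x)) (by fun_prop) fun _ hx => ⟨mem_univ _, hx⟩

theorem continuousOn_integral_of_continuousOn {f : ℝ → E} (hf : ContinuousOn f (Icc a b)) :
    ContinuousOn (fun x => ∫ ξ in a..x, f ξ) (Icc a b) :=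
  continuousOn_integral_row (k := fun _ => f) <|
    hf.comp (by fun_prop) fun _ hp => ⟨hp.1, hp.2.1.trans hp.2.2⟩

theorem hasDerivAt_integral_of_continuousOn [CompleteSpace E] {f : ℝ → E}
    (hf : ContinuousOn f (Icc a b)) {x : ℝ} (hx : x ∈ Ioo a b) :
    HasDerivAt (fun y => ∫ ξ in a..y, f ξ) (f x) x :=
  have hnhds : Icc a b ∈ nhds x := Icc_mem_nhds hx.1 hx.2
  intervalIntegral.integral_hasDerivAt_right
    ((hf.mono (Icc_subset_Icc_right hx.2.le)).intervalIntegrable_of_Icc hx.1.le)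
    ⟨Icc a b, hnhds, hf.aestronglyMeasurable measurableSet_Icc⟩ (hf.continuousAt hnhds)

theorem integral_triangle_swap (hab : a ≤ b)
    (hk : ContinuousOn (fun p : ℝ × ℝ => k p.1 p.2) (volterraTriangle a b)) :
    ∫ ξ in a..b, ∫ x in ξ..b, k x ξ = ∫ x in a..b, ∫ ξ in a..x, k x ξ := by
  set F : ℝ → ℝ → E := fun x ξ => indicator {p : ℝ × ℝ | p.2 ≤ p.1} (fun p => k p.1 p.2) (x, ξ)
  have hint : IntegrableOn F.uncurry (uIoc a b ×ˢ uIoc a b) := by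
    have hm : MeasurableSet {p : ℝ × ℝ | p.2 ≤ p.1} :=
      measurableSet_le measurable_snd measurable_fst
    refine (integrableOn_indicator_iff hm).2 ?_
    refine (hk.integrableOn_compact (isCompact_volterraTriangle a b)).mono_set ?_
    rw [uIoc_of_le hab]
    exact fun p hp => ⟨hp.2.2.1.le, hp.1, hp.2.1.2⟩
  have hx : ∀ x ∈ uIcc a b, ∫ ξ in a..b, F x ξ = ∫ ξ in a..x, k x ξ := fun x hx =>
    intervalIntegral.integral_indicator (f := k x) (by rwa [uIcc_of_le hab] at hx)
  have hξ : ∀ ξ ∈ uIcc a b, ∫ x in a..b, F x ξ = ∫ x in ξ..b, k x ξ := fun ξ hξ => by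
    rw [uIcc_of_le hab] at hξ
    change ∫ x in a..b, (Ici ξ).indicator (fun x => k x ξ) x = _
    rw [intervalIntegral.integral_of_le hab, intervalIntegral.integral_of_le hξ.2,
      setIntegral_indicator measurableSet_Ici]
    refine setIntegral_congr_set ?_
    have hIoc : Ioc a b ∩ Ioi ξ = Ioc ξ b := by rw [Ioc_inter_Ioi, max_eq_right hξ.1]
    exact hIoc ▸ (ae_eq_refl _).inter Ioi_ae_eq_Ici.symm
  rw [← intervalIntegral.integral_congr hx, intervalIntegral_intervalIntegral_swap hint,
    intervalIntegral.integral_congr hξ]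

variable [CompleteSpace E] {kx : ℝ → ℝ → E}

theorem integral_row_eq_integral
    (hk : ContinuousOn (fun p : ℝ × ℝ => k p.1 p.2) (volterraTriangle a b))
    (hkx : ContinuousOn (fun p : ℝ × ℝ => kx p.1 p.2) (volterraTriangle a b))
    (hderiv : ∀ ξ ∈ Icc a b, ∀ x ∈ Ioo ξ b, HasDerivAt (fun y => k y ξ) (kx x ξ) x)
    {y : ℝ} (hy : y ∈ Icc a b) :
    ∫ ξ in a..y, k y ξ = ∫ x in a..y, (k x x + ∫ ξ in a..x, kx x ξ) := by
  have hmono : volterraTriangle a y ⊆ volterraTriangle a b := fun p hp =>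
    ⟨hp.1, hp.2.1, hp.2.2.trans hy.2⟩
  have hdiag : IntervalIntegrable (fun x => k x x) volume a y :=
    (continuousOn_diagonal (hk.mono hmono)).intervalIntegrable_of_Icc hy.1
  have hrow : IntervalIntegrable (fun ξ => k y ξ) volume a y :=
    (continuousOn_row hk hy.2).intervalIntegrable_of_Icc hy.1
  have hinner : IntervalIntegrable (fun x => ∫ ξ in a..x, kx x ξ) volume a y :=
    ContinuousOn.intervalIntegrable_of_Icc hy.1 <|
      continuousOn_integral_row (hkx.mono hmono)
  have hFTC : ∀ ξ ∈ uIcc a y, ∫ x in ξ..y, kx x ξ = k y ξ - k ξ ξ := fun ξ hξ => by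
    rw [uIcc_of_le hy.1] at hξ
    exact intervalIntegral.integral_eq_sub_of_hasDerivAt_of_le hξ.2
      (continuousOn_column (hk.mono hmono) hξ.1)
      (fun x hx => hderiv ξ ⟨hξ.1, hξ.2.trans hy.2⟩ x ⟨hx.1, hx.2.trans_le hy.2⟩)
      ((continuousOn_column (hkx.mono hmono) hξ.1).intervalIntegrable_of_Icc hξ.2)
  rw [intervalIntegral.integral_add hdiag hinner, ← integral_triangle_swap hy.1 (hkx.mono hmono),
    intervalIntegral.integral_congr hFTC, intervalIntegral.integral_sub hrow hdiag,
    add_sub_cancel]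

theorem hasDerivAt_integral_row
    (hk : ContinuousOn (fun p : ℝ × ℝ => k p.1 p.2) (volterraTriangle a b))
    (hkx : ContinuousOn (fun p : ℝ × ℝ => kx p.1 p.2) (volterraTriangle a b))
    (hderiv : ∀ ξ ∈ Icc a b, ∀ x ∈ Ioo ξ b, HasDerivAt (fun y => k y ξ) (kx x ξ) x)
    {x : ℝ} (hx : x ∈ Ioo a b) :
    HasDerivAt (fun y => ∫ ξ in a..y, k y ξ) (k x x + ∫ ξ in a..x, kx x ξ) x := by
  have hcont : ContinuousOn (fun y => k y y + ∫ ξ in a..y, kx y ξ) (Icc a b) :=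
    (continuousOn_diagonal hk).add (continuousOn_integral_row hkx)
  have hnhds : Icc a b ∈ nhds x := Icc_mem_nhds hx.1 hx.2
  refine HasDerivAt.congr_of_eventuallyEq (hasDerivAt_integral_of_continuousOn hcont hx) ?_
  filter_upwards [hnhds] with y hy using integral_row_eq_integral hk hkx hderiv hy

end Triangle

section Integral

theorem hasDerivAt_integral_of_continuousOn_deriv {E : Type*} [NormedAddCommGroup E]
    [NormedSpace ℝ E] {f f' : ℝ → ℝ → E} {a b t : ℝ} {s : Set ℝ} (hab : a ≤ b) (hs : s ∈ nhds t)
    (hf : ContinuousOn (fun p : ℝ × ℝ => f p.1 p.2) (s ×ˢ Icc a b))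
    (hf' : ContinuousOn (fun p : ℝ × ℝ => f' p.1 p.2) (s ×ˢ Icc a b))
    (hderiv : ∀ r ∈ s, ∀ x ∈ Icc a b, HasDerivAt (fun q => f q x) (f' r x) r) :
    HasDerivAt (fun q => ∫ x in a..b, f q x) (∫ x in a..b, f' t x) t := by
  obtain ⟨K, hK, hKs, hKc⟩ := local_compact_nhds hs
  obtain ⟨B, hB⟩ := (hKc.prod isCompact_Icc).exists_bound_of_continuousOn
    (hf'.mono (prod_mono_left hKs))
  have hslice {g : ℝ → ℝ → E} (hg : ContinuousOn (fun p : ℝ × ℝ => g p.1 p.2) (s ×ˢ Icc a b))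
      {r : ℝ} (hr : r ∈ s) : IntervalIntegrable (g r) volume a b :=
    (hg.comp (f := fun x => (r, x)) (by fun_prop) fun x hx => ⟨hr, hx⟩).intervalIntegrable_of_Icc
      hab
  have hsub : uIoc a b ⊆ Icc a b := uIoc_of_le hab ▸ Ioc_subset_Icc_self
  refine (intervalIntegral.hasDerivAt_integral_of_dominated_loc_of_deriv_le
    (bound := fun _ => B) hK ?_ (hslice hf (mem_of_mem_nhds hs))
    (hslice hf' (mem_of_mem_nhds hs)).def'.aestronglyMeasurable
    (.of_forall fun x hx r hr => hB (r, x) ⟨hr, hsub hx⟩) intervalIntegrable_const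
    (.of_forall fun x hx r hr => hderiv r (hKs hr) x (hsub hx))).2
  filter_upwards [hs] with r hr using (hslice hf hr).def'.aestronglyMeasurable

theorem sq_integral_le_mul_integral_sq {a b : ℝ} {h : ℝ → ℝ} (hab : a ≤ b)
    (hh : ContinuousOn h (Icc a b)) :
    (∫ x in a..b, h x) ^ 2 ≤ (b - a) * ∫ x in a..b, h x ^ 2 := by
  rcases hab.eq_or_lt with rfl | hlt
  · simp
  set I := ∫ x in a..b, h x with hI
  have ih := (hh.intervalIntegrable_of_Icc hab (μ := volume)).const_mul (2 * ((b - a) * I))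
  have ihh := ((hh.fun_pow 2).intervalIntegrable_of_Icc hab (μ := volume)).const_mul ((b - a) ^ 2)
  have hvar : ∫ x in a..b, ((b - a) * h x - I) ^ 2
      = (b - a) * ((b - a) * (∫ x in a..b, h x ^ 2) - I ^ 2) := by
    have hexp : ∀ x, ((b - a) * h x - I) ^ 2
        = (b - a) ^ 2 * h x ^ 2 - 2 * ((b - a) * I) * h x + I ^ 2 := fun x => by ring
    simp only [hexp]
    rw [intervalIntegral.integral_add (ihh.sub ih) intervalIntegrable_const,
      intervalIntegral.integral_sub ihh ih, intervalIntegral.integral_const_mul,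
      intervalIntegral.integral_const_mul, intervalIntegral.integral_const, ← hI, smul_eq_mul]
    ring
  have hnonneg : 0 ≤ ∫ x in a..b, ((b - a) * h x - I) ^ 2 :=
    intervalIntegral.integral_nonneg hab fun x _ => sq_nonneg _
  rw [hvar] at hnonneg
  exact sub_nonneg.1 (nonneg_of_mul_nonneg_right hnonneg (sub_pos.2 hlt))

theorem integral_exp_neg_mul_integral_le {a b δ : ℝ} {g : ℝ → ℝ} (hab : a ≤ b) (hδ : 0 < δ)
    (hg : ContinuousOn g (Icc a b)) (hg₀ : ∀ x ∈ Icc a b, 0 ≤ g x) :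
    ∫ x in a..b, exp (-δ * x) * ∫ ξ in a..x, g ξ ≤ δ⁻¹ * ∫ x in a..b, exp (-δ * x) * g x := by
  have hprim := continuousOn_integral_of_continuousOn hg
  have ig : IntervalIntegrable (fun x => exp (-δ * x) * g x) volume a b :=
    ContinuousOn.intervalIntegrable_of_Icc hab (by fun_prop)
  have iprim : IntervalIntegrable (fun x => exp (-δ * x) * ∫ ξ in a..x, g ξ) volume a b :=
    ContinuousOn.intervalIntegrable_of_Icc hab (by fun_prop)
  have hderiv : ∀ x ∈ Ioo a b, HasDerivAt (fun x => exp (-δ * x) * ∫ ξ in a..x, g ξ)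
      (exp (-δ * x) * g x - δ * (exp (-δ * x) * ∫ ξ in a..x, g ξ)) x := fun x hx =>
    ((((hasDerivAt_id x).const_mul (-δ)).exp).mul
      (hasDerivAt_integral_of_continuousOn hg hx)).congr_deriv (by simp only [id]; ring)
  have hFTC := intervalIntegral.integral_eq_sub_of_hasDerivAt_of_le hab (by fun_prop) hderiv
    (ig.sub (iprim.const_mul δ))
  rw [intervalIntegral.integral_sub ig (iprim.const_mul δ), intervalIntegral.integral_const_mul,
    intervalIntegral.integral_same, mul_zero, sub_zero] at hFTC
  have hend : 0 ≤ exp (-δ * b) * ∫ ξ in a..b, g ξ :=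
    mul_nonneg (exp_pos _).le (intervalIntegral.integral_nonneg hab hg₀)
  rw [inv_mul_eq_div, le_div_iff₀ hδ]
  linarith

end Integral

theorem le_exp_mul_of_hasDerivAt_le {V V' : ℝ → ℝ} {c : ℝ} (hV : ContinuousOn V (Ici 0))
    (hderiv : ∀ t, 0 < t → HasDerivAt V (V' t) t) (hle : ∀ t, 0 < t → V' t ≤ -c * V t)
    {t : ℝ} (ht : 0 ≤ t) : V t ≤ exp (-c * t) * V 0 := by
  have hanti : AntitoneOn (fun s => exp (c * s) * V s) (Ici 0) := by
    have hprod : ∀ s, 0 < s → HasDerivAt (fun s => exp (c * s) * V s)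
        (exp (c * s) * (c * V s + V' s)) s := fun s hs =>
      ((((hasDerivAt_id s).const_mul c).exp).mul (hderiv s hs)).congr_deriv
        (by simp only [id]; ring)
    refine antitoneOn_of_deriv_nonpos (convex_Ici 0) (by fun_prop) ?_ ?_ <;>
      rw [interior_Ici] <;> intro s hs
    · exact (hprod s hs).differentiableAt.differentiableWithinAt
    · rw [(hprod s hs).deriv]
      exact mul_nonpos_of_nonneg_of_nonpos (exp_pos _).le (by linarith [hle s hs])
  have h := hanti self_mem_Ici ht ht
  simp only [mul_zero, exp_zero, one_mul] at h
  calc V t = exp (-c * t) * (exp (c * t) * V t) := by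
        rw [← mul_assoc, ← exp_add]; simp
    _ ≤ exp (-c * t) * V 0 := by gcongr

section TriangularWeights

variable {κ : Type*} [Fintype κ] [LinearOrder κ]

theorem exists_triangular_weights {a p : ℝ} (ha : 0 ≤ a) (hp : 0 ≤ p) :
    ∃ w : κ → ℝ, ∀ k, p ≤ w k ∧ p + a * ∑ j with k < j, w j = w k := by
  refine ⟨fun k => p * ∏ j with k < j, (1 + a), fun k => ⟨?_, ?_⟩⟩
  · exact le_mul_of_one_le_right hp (Finset.one_le_prod fun _ _ => by linarith)
  · have hprod (s : Finset κ) : ∏ _ ∈ s, (1 + a) = 1 + ∑ j ∈ s, a * ∏ i ∈ s with j < i, (1 + a) :=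
      Finset.prod_one_add_ordered (ι := κᵒᵈ) s fun _ => a
    have hcollapse : ∀ j ∈ ({j | k < j} : Finset κ),
        ∏ i ∈ {i | k < i} with j < i, (1 + a) = ∏ i with j < i, (1 + a) := fun j hj => by
      rw [Finset.filter_filter]
      refine Finset.prod_congr (Finset.filter_congr fun i _ => ?_) fun _ _ => rfl
      exact and_iff_right_of_imp (Finset.mem_filter.1 hj).2.trans
    beta_reduce
    rw [hprod, ← Finset.mul_sum, ← Finset.mul_sum, Finset.sum_congr rfl hcollapse]
    ring

theorem sum_mul_sum_lt_comm (w y : κ → ℝ) :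
    ∑ j, w j * ∑ k with k < j, y k = ∑ k, (∑ j with k < j, w j) * y k := by
  simp only [Finset.sum_filter, Finset.mul_sum, Finset.sum_mul, mul_ite, ite_mul, mul_zero,
    zero_mul]
  exact Finset.sum_comm

end TriangularWeights

section Energy

/-- The weights `aᵢ e^{σ x}`, which turn advection into damping. -/
noncomputable def expWeight {ι : Type*} (a : ι → ℝ) (σ : ℝ) (i : ι) (x : ℝ) : ℝ :=
  a i * exp (σ * x)

theorem continuous_expWeight {ι : Type*} (a : ι → ℝ) (σ : ℝ) (i : ι) :
    Continuous (expWeight a σ i) := by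
  unfold expWeight
  fun_prop

theorem expWeight_nonneg {ι : Type*} {a : ι → ℝ} (ha : ∀ i, 0 ≤ a i) (σ : ℝ) (i : ι) (x : ℝ) :
    0 ≤ expWeight a σ i x :=
  mul_nonneg (ha i) (exp_pos _).le

/-- Transport speeds on `[0, 1]`, bounded below by `lo > 0` and above by `hi`. -/
structure IsTransportSpeed {ι : Type*} (lo hi : ℝ) (lam : ι → ℝ → ℝ) : Prop where
  lo_pos : 0 < lo
  continuousOn : ∀ i, ContinuousOn (lam i) (Icc 0 1)
  lo_le : ∀ i, ∀ x ∈ Icc (0 : ℝ) 1, lo ≤ lam i x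
  le_hi : ∀ i, ∀ x ∈ Icc (0 : ℝ) 1, lam i x ≤ hi

theorem IsTransportSpeed.pos {ι : Type*} {lo hi : ℝ} {lam : ι → ℝ → ℝ}
    (hlam : IsTransportSpeed lo hi lam) (i : ι) {x : ℝ} (hx : x ∈ Icc (0 : ℝ) 1) : 0 < lam i x :=
  hlam.lo_pos.trans_le (hlam.lo_le i x hx)

theorem IsTransportSpeed.continuousOn_expWeight_div {ι : Type*} {lo hi : ℝ} {lam : ι → ℝ → ℝ}
    (hlam : IsTransportSpeed lo hi lam) (a : ι → ℝ) (σ : ℝ) (i : ι) :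
    ContinuousOn (fun x => expWeight a σ i x / lam i x) (Icc 0 1) :=
  (continuous_expWeight a σ i).continuousOn.div (hlam.continuousOn i) fun _ hx =>
    (hlam.pos i hx).ne'

variable {ι : Type*} [Fintype ι]

/-- The weighted energy `∫₀¹ ∑ᵢ ρᵢ(x) fᵢ(x)² dx` of a vector profile `f` on `[0, 1]`; every
quadratic functional of the stability analysis is one of these. -/
noncomputable def weightedEnergy (ρ : ι → ℝ → ℝ) (f : ℝ → ι → ℝ) : ℝ :=
  ∫ x in (0 : ℝ)..1, ∑ i, ρ i x * f x i ^ 2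

variable {ρ : ι → ℝ → ℝ} {f : ℝ → ι → ℝ}

theorem continuousOn_energyDensity (hρ : ∀ i, ContinuousOn (ρ i) (Icc 0 1))
    (hf : ContinuousOn f (Icc 0 1)) :
    ContinuousOn (fun x => ∑ i, ρ i x * f x i ^ 2) (Icc 0 1) :=
  continuousOn_finsetSum _ fun i _ => (hρ i).mul ((continuousOn_pi.1 hf i).pow 2)

theorem intervalIntegrable_energyDensity (hρ : ∀ i, ContinuousOn (ρ i) (Icc 0 1))
    (hf : ContinuousOn f (Icc 0 1)) :
    IntervalIntegrable (fun x => ∑ i, ρ i x * f x i ^ 2) volume 0 1 :=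
  (continuousOn_energyDensity hρ hf).intervalIntegrable_of_Icc zero_le_one

theorem weightedEnergy_nonneg (hρ : ∀ i, ∀ x ∈ Icc (0 : ℝ) 1, 0 ≤ ρ i x) :
    0 ≤ weightedEnergy ρ f :=
  intervalIntegral.integral_nonneg zero_le_one fun x hx =>
    Finset.sum_nonneg fun i _ => mul_nonneg (hρ i x hx) (sq_nonneg _)

theorem weightedEnergy_le_mul {τ : ι → ℝ → ℝ} {c : ℝ} (hρ : ∀ i, ContinuousOn (ρ i) (Icc 0 1))
    (hτ : ∀ i, ContinuousOn (τ i) (Icc 0 1)) (hf : ContinuousOn f (Icc 0 1))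
    (hle : ∀ i, ∀ x ∈ Icc (0 : ℝ) 1, ρ i x ≤ c * τ i x) :
    weightedEnergy ρ f ≤ c * weightedEnergy τ f := by
  unfold weightedEnergy
  rw [← intervalIntegral.integral_const_mul]
  refine intervalIntegral.integral_mono_on zero_le_one (intervalIntegrable_energyDensity hρ hf)
    ((intervalIntegrable_energyDensity hτ hf).const_mul c) fun x hx => ?_
  rw [Finset.mul_sum]
  refine Finset.sum_le_sum fun i _ => ?_
  rw [← mul_assoc]
  exact mul_le_mul_of_nonneg_right (hle i x hx) (sq_nonneg _)

theorem weightedEnergy_div_speed_le {lo hi : ℝ} {lam : ι → ℝ → ℝ}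
    (hlam : IsTransportSpeed lo hi lam) {a : ι → ℝ} (ha : ∀ i, 0 ≤ a i) {σ : ℝ}
    (hf : ContinuousOn f (Icc 0 1)) :
    weightedEnergy (fun i x => expWeight a σ i x / lam i x) f
      ≤ lo⁻¹ * weightedEnergy (expWeight a σ) f :=
  weightedEnergy_le_mul (hlam.continuousOn_expWeight_div a σ)
    (fun i => (continuous_expWeight a σ i).continuousOn) hf fun i x hx => by
      rw [inv_mul_eq_div]
      exact div_le_div_of_nonneg_left (expWeight_nonneg ha σ i x) hlam.lo_pos (hlam.lo_le i x hx)

theorem weightedEnergy_le_mul_div_speed {lo hi : ℝ} {lam : ι → ℝ → ℝ}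
    (hlam : IsTransportSpeed lo hi lam) {a : ι → ℝ} (ha : ∀ i, 0 ≤ a i) {σ : ℝ}
    (hf : ContinuousOn f (Icc 0 1)) :
    weightedEnergy (expWeight a σ) f
      ≤ |hi| * weightedEnergy (fun i x => expWeight a σ i x / lam i x) f :=
  weightedEnergy_le_mul (fun i => (continuous_expWeight a σ i).continuousOn)
    (hlam.continuousOn_expWeight_div a σ) hf fun i x hx => by
      rw [mul_div_left_comm]
      exact le_mul_of_one_le_right (expWeight_nonneg ha σ i x)
        ((one_le_div (hlam.pos i hx)).2 ((hlam.le_hi i x hx).trans (le_abs_self hi)))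

theorem continuousOn_weightedEnergy {S : Set ℝ} {f : ℝ → ℝ → ι → ℝ}
    (hρ : ∀ i, ContinuousOn (ρ i) (Icc 0 1))
    (hf : ContinuousOn (fun p : ℝ × ℝ => f p.1 p.2) (S ×ˢ Icc 0 1)) :
    ContinuousOn (fun t => weightedEnergy ρ (f t)) S :=
  continuousOn_integral_of_continuousOn_prod zero_le_one <| continuousOn_finsetSum _ fun i _ =>
    ((hρ i).comp continuousOn_snd fun _ hp => hp.2).mul ((continuousOn_pi.1 hf i).pow 2)

theorem hasDerivAt_weightedEnergy {S : Set ℝ} {t : ℝ} {f f' : ℝ → ℝ → ι → ℝ} (hS : S ∈ nhds t)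
    (hρ : ∀ i, ContinuousOn (ρ i) (Icc 0 1))
    (hf : ContinuousOn (fun p : ℝ × ℝ => f p.1 p.2) (S ×ˢ Icc 0 1))
    (hf' : ContinuousOn (fun p : ℝ × ℝ => f' p.1 p.2) (S ×ˢ Icc 0 1))
    (hderiv : ∀ r ∈ S, ∀ x ∈ Icc (0 : ℝ) 1, HasDerivAt (fun s => f s x) (f' r x) r) :
    HasDerivAt (fun s => weightedEnergy ρ (f s))
      (∫ x in (0 : ℝ)..1, ∑ i, 2 * ρ i x * f t x i * f' t x i) t := by
  have hρ' (i : ι) : ContinuousOn (fun p : ℝ × ℝ => ρ i p.2) (S ×ˢ Icc 0 1) :=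
    (hρ i).comp continuousOn_snd fun _ hp => hp.2
  refine hasDerivAt_integral_of_continuousOn_deriv (f := fun s x => ∑ i, ρ i x * f s x i ^ 2)
    (f' := fun s x => ∑ i, 2 * ρ i x * f s x i * f' s x i) zero_le_one hS ?_ ?_
    fun r hr x hx => ?_
  · exact continuousOn_finsetSum _ fun i _ => (hρ' i).mul ((continuousOn_pi.1 hf i).pow 2)
  · exact continuousOn_finsetSum _ fun i _ =>
      ((continuousOn_const.mul (hρ' i)).mul (continuousOn_pi.1 hf i)).mul (continuousOn_pi.1 hf' i)
  · refine HasDerivAt.fun_sum fun i _ => ?_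
    refine (((hasDerivAt_pi.1 (hderiv r hr x hx) i).fun_pow 2).const_mul (ρ i x)).congr_deriv ?_
    simp only [Nat.cast_ofNat, Nat.add_one_sub_one, pow_one]
    ring

theorem two_mul_mul_transport_le {lo lam e y yx yt ε : ℝ} (hlo : 0 < lo) (hlam : lo ≤ lam)
    (he : 0 ≤ e) :
    2 * (e / lam) * y * yt
      ≤ ε * (e * (2 * y * yx)) + e * y ^ 2 + (lo ^ 2)⁻¹ * (e * (yt - ε * lam * yx) ^ 2) := by
  have hlam₀ : 0 < lam := hlo.trans_le hlam
  set F := yt - ε * lam * yx with hF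
  have hsplit : 2 * (e / lam) * y * yt = ε * (e * (2 * y * yx)) + e * (2 * y * (F / lam)) := by
    rw [hF]
    field_simp
    ring
  have hF_le : (F / lam) ^ 2 ≤ (lo ^ 2)⁻¹ * F ^ 2 := by
    rw [div_pow, div_eq_inv_mul]
    gcongr
  have hyoung : 2 * y * (F / lam) ≤ y ^ 2 + (lo ^ 2)⁻¹ * F ^ 2 :=
    (two_mul_le_add_sq _ _).trans (by gcongr)
  rw [hsplit]
  linarith [mul_le_mul_of_nonneg_left hyoung he]

theorem integral_deriv_energyDensity {a : ι → ℝ} {σ : ℝ} {fx : ℝ → ι → ℝ}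
    (hf : ContinuousOn f (Icc 0 1)) (hfx : ContinuousOn fx (Icc 0 1))
    (hderiv : ∀ x ∈ Ioo (0 : ℝ) 1, HasDerivAt f (fx x) x) :
    ∫ x in (0 : ℝ)..1, ∑ i, expWeight a σ i x * (2 * f x i * fx x i)
      = ∑ i, a i * (exp σ * f 1 i ^ 2 - f 0 i ^ 2) - σ * weightedEnergy (expWeight a σ) f := by
  have hw (i : ι) : ContinuousOn (expWeight a σ i) (Icc 0 1) :=
    (continuous_expWeight a σ i).continuousOn
  have hi : IntervalIntegrable (fun x => ∑ i, expWeight a σ i x * (2 * f x i * fx x i))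
      volume 0 1 :=
    ContinuousOn.intervalIntegrable_of_Icc zero_le_one <| continuousOn_finsetSum _ fun i _ =>
      (hw i).mul ((continuousOn_const.mul (continuousOn_pi.1 hf i)).mul (continuousOn_pi.1 hfx i))
  have hE := (intervalIntegrable_energyDensity hw hf).const_mul σ
  have hprod : ∀ x ∈ Ioo (0 : ℝ) 1, HasDerivAt (fun x => ∑ i, expWeight a σ i x * f x i ^ 2)
      (∑ i, expWeight a σ i x * (2 * f x i * fx x i)
        + σ * ∑ i, expWeight a σ i x * f x i ^ 2) x := fun x hx => by
    rw [Finset.mul_sum, ← Finset.sum_add_distrib]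
    refine HasDerivAt.fun_sum fun i _ => ?_
    refine (((((hasDerivAt_id x).const_mul σ).exp).const_mul (a i)).mul
      ((hasDerivAt_pi.1 (hderiv x hx) i).fun_pow 2)).congr_deriv ?_
    simp only [expWeight, id, Nat.cast_ofNat, Nat.add_one_sub_one, pow_one]
    ring
  have hFTC := intervalIntegral.integral_eq_sub_of_hasDerivAt_of_le zero_le_one
    (continuousOn_energyDensity hw hf) hprod (hi.add hE)
  rw [intervalIntegral.integral_add hi hE, intervalIntegral.integral_const_mul,
    ← Finset.sum_sub_distrib] at hFTC
  rw [weightedEnergy, eq_sub_iff_add_eq, hFTC]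
  refine Finset.sum_congr rfl fun i _ => ?_
  simp only [expWeight, mul_one, mul_zero, exp_zero]
  ring

-- The weight `1 / lam` makes the transport term an exact derivative, so that `lam` need not be
-- differentiated; the residual `ft - ε lam fx` is absorbed by Young's inequality.
theorem transport_energy_rate_le {lo hi : ℝ} {lam : ι → ℝ → ℝ} (hlam : IsTransportSpeed lo hi lam)
    {a : ι → ℝ} (ha : ∀ i, 0 ≤ a i) (ε σ : ℝ) {ft fx : ℝ → ι → ℝ}
    (hf : ContinuousOn f (Icc 0 1)) (hft : ContinuousOn ft (Icc 0 1))
    (hfx : ContinuousOn fx (Icc 0 1)) (hderiv : ∀ x ∈ Ioo (0 : ℝ) 1, HasDerivAt f (fx x) x) :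
    ∫ x in (0 : ℝ)..1, ∑ i, 2 * (expWeight a σ i x / lam i x) * f x i * ft x i
      ≤ ε * ∑ i, a i * (exp σ * f 1 i ^ 2 - f 0 i ^ 2)
        - (ε * σ - 1) * weightedEnergy (expWeight a σ) f
        + (lo ^ 2)⁻¹ * weightedEnergy (expWeight a σ) fun x i => ft x i - ε * lam i x * fx x i := by
  have hw (i : ι) : ContinuousOn (expWeight a σ i) (Icc 0 1) :=
    (continuous_expWeight a σ i).continuousOn
  have hfi (i : ι) := continuousOn_pi.1 hf i
  have hfti (i : ι) := continuousOn_pi.1 hft i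
  have hfxi (i : ι) := continuousOn_pi.1 hfx i
  have hlami := hlam.continuousOn
  have hadv : IntervalIntegrable (fun x => ∑ i, expWeight a σ i x * (2 * f x i * fx x i))
      volume 0 1 :=
    ContinuousOn.intervalIntegrable_of_Icc zero_le_one (by fun_prop)
  have hE := intervalIntegrable_energyDensity hw hf
  have hR := intervalIntegrable_energyDensity (f := fun x i => ft x i - ε * lam i x * fx x i) hw
    (by fun_prop)
  have hdens := hlam.continuousOn_expWeight_div a σ
  have hmono := intervalIntegral.integral_mono_on zero_le_one
    (ContinuousOn.intervalIntegrable_of_Icc zero_le_one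
      (u := fun x => ∑ i, 2 * (expWeight a σ i x / lam i x) * f x i * ft x i) (by fun_prop))
    (((hadv.const_mul ε).add hE).add (hR.const_mul (lo ^ 2)⁻¹)) fun x hx => by
      simp only [Finset.mul_sum, ← Finset.sum_add_distrib]
      exact Finset.sum_le_sum fun i _ => two_mul_mul_transport_le hlam.lo_pos (hlam.lo_le i x hx)
        (expWeight_nonneg ha σ i x)
  rw [intervalIntegral.integral_add ((hadv.const_mul ε).add hE) (hR.const_mul _),
    intervalIntegral.integral_add (hadv.const_mul ε) hE, intervalIntegral.integral_const_mul,
    intervalIntegral.integral_const_mul, integral_deriv_energyDensity hf hfx hderiv] at hmono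
  refine hmono.trans_eq ?_
  unfold weightedEnergy
  ring

end Energy

section TargetSystem

variable {ι κ : Type*} [Fintype ι] [Fintype κ]

theorem integral_mul_add_sq {ω : ℝ → ℝ} {u : ℝ → ι → ℝ} {v : ℝ → κ → ℝ}
    (hω : ContinuousOn ω (Icc 0 1)) (hu : ContinuousOn u (Icc 0 1))
    (hv : ContinuousOn v (Icc 0 1)) :
    ∫ x in (0 : ℝ)..1, ω x * ((∑ i, u x i ^ 2) + ∑ j, v x j ^ 2)
      = weightedEnergy (fun _ => ω) u + weightedEnergy (fun _ => ω) v := by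
  unfold weightedEnergy
  rw [← intervalIntegral.integral_add (intervalIntegrable_energyDensity (fun _ => hω) hu)
    (intervalIntegrable_energyDensity (fun _ => hω) hv)]
  simp only [mul_add, Finset.mul_sum]

/-- The squared norm `‖(u, v)‖²` in `L²(0, 1)`. -/
noncomputable def sqNormL2 (u : ℝ → ι → ℝ) (v : ℝ → κ → ℝ) : ℝ :=
  ∫ x in (0 : ℝ)..1, ((∑ i, u x i ^ 2) + ∑ j, v x j ^ 2)

theorem sqNormL2_eq_add {u : ℝ → ι → ℝ} {v : ℝ → κ → ℝ} (hu : ContinuousOn u (Icc 0 1))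
    (hv : ContinuousOn v (Icc 0 1)) :
    sqNormL2 u v = weightedEnergy 1 u + weightedEnergy 1 v := by
  rw [sqNormL2]
  exact (integral_mul_add_sq (ω := 1) continuousOn_const hu hv).symm ▸ by
    simp only [Pi.one_apply, one_mul]

theorem expWeight_one (ι : Type*) (σ : ℝ) : expWeight (1 : ι → ℝ) σ = fun _ x => exp (σ * x) := by
  ext
  simp only [expWeight, Pi.one_apply, one_mul]

theorem weightedEnergy_one_le_exp_mul {δ : ℝ} {f : ℝ → ι → ℝ} (hδ : 0 ≤ δ)
    (hf : ContinuousOn f (Icc 0 1)) :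
    weightedEnergy 1 f ≤ exp δ * weightedEnergy (expWeight 1 (-δ)) f :=
  weightedEnergy_le_mul (fun _ => continuousOn_const)
    (fun i => (continuous_expWeight 1 (-δ) i).continuousOn) hf fun i x hx => by
      rw [expWeight_one, ← exp_add]
      exact one_le_exp (by nlinarith [hx.2])

theorem sum_sq_le_two_mul_add (y z : κ → ℝ) :
    ∑ j, y j ^ 2 ≤ 2 * ∑ j, z j ^ 2 + 2 * ∑ j, (y j - z j) ^ 2 := by
  simp only [Finset.mul_sum, ← Finset.sum_add_distrib]
  exact Finset.sum_le_sum fun j _ => by linarith [sq_nonneg (y j - 2 * z j)]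

theorem weightedEnergy_le_of_volterra {C δ : ℝ} {u : ℝ → ι → ℝ} {v b : ℝ → κ → ℝ} (hC : 0 ≤ C)
    (hδ : 0 < δ) (hCδ : 4 * C ≤ δ) (hu : ContinuousOn u (Icc 0 1)) (hv : ContinuousOn v (Icc 0 1))
    (hb : ContinuousOn b (Icc 0 1))
    (hvb : ∀ x ∈ Icc (0 : ℝ) 1, ∑ j, (v x j - b x j) ^ 2
      ≤ C * ∫ ξ in (0 : ℝ)..x, ((∑ i, u ξ i ^ 2) + ∑ j, v ξ j ^ 2)) :
    weightedEnergy (expWeight 1 (-δ)) v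
      ≤ 4 * weightedEnergy (expWeight 1 (-δ)) b + weightedEnergy (expWeight 1 (-δ)) u := by
  simp only [expWeight_one]
  set ω : ℝ → ℝ := fun x => exp (-δ * x)
  set g : ℝ → ℝ := fun x => (∑ i, u x i ^ 2) + ∑ j, v x j ^ 2 with hg
  have hω : ContinuousOn ω (Icc 0 1) := by fun_prop
  have hg_cont : ContinuousOn g (Icc 0 1) := by fun_prop
  have hprim := continuousOn_integral_of_continuousOn hg_cont
  have iv := intervalIntegrable_energyDensity (fun _ => hω) hv
  have ib := (intervalIntegrable_energyDensity (fun _ => hω) hb).const_mul 2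
  have ig : IntervalIntegrable (fun x => 2 * C * (ω x * ∫ ξ in (0 : ℝ)..x, g ξ)) volume 0 1 :=
    ContinuousOn.intervalIntegrable_of_Icc zero_le_one (by fun_prop)
  have hmono := intervalIntegral.integral_mono_on zero_le_one iv (ib.add ig) fun x hx => by
    have hpt : ∑ j, v x j ^ 2 ≤ 2 * ∑ j, b x j ^ 2 + 2 * (C * ∫ ξ in (0 : ℝ)..x, g ξ) :=
      (sum_sq_le_two_mul_add (v x) (b x)).trans (by gcongr; exact hvb x hx)
    simp only [← Finset.mul_sum]
    linarith [mul_le_mul_of_nonneg_left hpt (exp_pos (-δ * x)).le]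
  rw [intervalIntegral.integral_add ib ig, intervalIntegral.integral_const_mul,
    intervalIntegral.integral_const_mul] at hmono
  have hgronwall := integral_exp_neg_mul_integral_le zero_le_one hδ hg_cont fun x _ => by
    simp only [hg]
    positivity
  rw [integral_mul_add_sq hω hu hv] at hgronwall
  have hsmall : 2 * C * δ⁻¹ ≤ 1 / 2 := by
    rw [← div_eq_mul_inv, div_le_iff₀ hδ]
    linarith
  have hnonneg : 0 ≤ weightedEnergy (fun _ => ω) u + weightedEnergy (fun _ => ω) v :=
    add_nonneg (weightedEnergy_nonneg fun _ _ _ => (exp_pos _).le)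
      (weightedEnergy_nonneg fun _ _ _ => (exp_pos _).le)
  have hint := mul_le_mul_of_nonneg_left hgronwall (mul_nonneg zero_le_two hC)
  have habsorb := mul_le_mul_of_nonneg_right hsmall hnonneg
  change weightedEnergy (fun _ => ω) v ≤ 2 * weightedEnergy (fun _ => ω) b + _ at hmono
  linarith

/-- The Lyapunov functional of the target system. The weights grow against the direction of
transport, so that advection dissipates energy, and `w` is to be chosen so that the boundary
dissipation of each component of `b` dominates the triangular coupling. -/
noncomputable def lyapunov (lr : ι → ℝ → ℝ) (ll : κ → ℝ → ℝ) (w : κ → ℝ) (δ : ℝ)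
    (u : ℝ → ι → ℝ) (b : ℝ → κ → ℝ) : ℝ :=
  weightedEnergy (fun i x => expWeight 1 (-δ) i x / lr i x) u
    + weightedEnergy (fun j x => expWeight w δ j x / ll j x) b

variable [LinearOrder κ]

/-- An instant of the backstepping target system, for the state `(u, b)` and the original variable
`v`, with constants absorbed into `C`. The `u`-equation is a transport equation with an `L²` source,
the `b`-equation is a transport equation driven by the trace `b(0)` through a strictly lower
triangular coupling, and `v` is related to `b` by a Volterra equation. The profiles `ut`, `bt`
stand for the time derivatives and `ux`, `bx` for the space derivatives. -/
structure IsTargetProfile (C : ℝ) (lr : ι → ℝ → ℝ) (ll : κ → ℝ → ℝ) (u ut ux : ℝ → ι → ℝ)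
    (v b bt bx : ℝ → κ → ℝ) : Prop where
  continuousOn_u : ContinuousOn u (Icc 0 1)
  continuousOn_ut : ContinuousOn ut (Icc 0 1)
  continuousOn_ux : ContinuousOn ux (Icc 0 1)
  continuousOn_v : ContinuousOn v (Icc 0 1)
  continuousOn_b : ContinuousOn b (Icc 0 1)
  continuousOn_bt : ContinuousOn bt (Icc 0 1)
  continuousOn_bx : ContinuousOn bx (Icc 0 1)
  hasDerivAt_u : ∀ x ∈ Ioo (0 : ℝ) 1, HasDerivAt u (ux x) x
  hasDerivAt_b : ∀ x ∈ Ioo (0 : ℝ) 1, HasDerivAt b (bx x) x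
  sum_source_sq_le : ∀ x ∈ Icc (0 : ℝ) 1,
    ∑ i, (ut x i + lr i x * ux x i) ^ 2 ≤ C * ((∑ i, u x i ^ 2) + ∑ j, v x j ^ 2)
  trace_source_sq_le : ∀ x ∈ Icc (0 : ℝ) 1, ∀ j,
    (bt x j - ll j x * bx x j) ^ 2 ≤ C * ∑ k with k < j, b 0 k ^ 2
  sum_inflow_sq_le : ∑ i, u 0 i ^ 2 ≤ C * ∑ j, b 0 j ^ 2
  b_one : b 1 = 0
  volterra_sq_le : ∀ x ∈ Icc (0 : ℝ) 1,
    ∑ j, (v x j - b x j) ^ 2 ≤ C * ∫ ξ in (0 : ℝ)..x, ((∑ i, u ξ i ^ 2) + ∑ j, v ξ j ^ 2)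

namespace IsTargetProfile

variable {C lo hi δ : ℝ} {lr : ι → ℝ → ℝ} {ll : κ → ℝ → ℝ} {u ut ux : ℝ → ι → ℝ}
  {v b bt bx : ℝ → κ → ℝ} {w : κ → ℝ}

theorem weightedEnergy_source_le (h : IsTargetProfile C lr ll u ut ux v b bt bx)
    (hlr : ∀ i, ContinuousOn (lr i) (Icc 0 1)) :
    weightedEnergy (expWeight 1 (-δ)) (fun x i => ut x i + lr i x * ux x i)
      ≤ C * (weightedEnergy (expWeight 1 (-δ)) u + weightedEnergy (expWeight 1 (-δ)) v) := by
  have hω : ContinuousOn (fun x => exp (-δ * x)) (Icc 0 1) := by fun_prop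
  have hu := h.continuousOn_u
  have hut := h.continuousOn_ut
  have hux := h.continuousOn_ux
  have hv := h.continuousOn_v
  simp only [expWeight_one]
  rw [← integral_mul_add_sq hω hu hv, ← intervalIntegral.integral_const_mul]
  refine intervalIntegral.integral_mono_on zero_le_one
    (ContinuousOn.intervalIntegrable_of_Icc zero_le_one (by fun_prop))
    (ContinuousOn.intervalIntegrable_of_Icc zero_le_one (by fun_prop)) fun x hx => ?_
  rw [← Finset.mul_sum, mul_left_comm]
  exact mul_le_mul_of_nonneg_left (h.sum_source_sq_le x hx) (exp_pos _).le

theorem energy_rate_u_le (h : IsTargetProfile C lr ll u ut ux v b bt bx)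
    (hlr : IsTransportSpeed lo hi lr) :
    ∫ x in (0 : ℝ)..1, ∑ i, 2 * (expWeight 1 (-δ) i x / lr i x) * u x i * ut x i
      ≤ C * ∑ j, b 0 j ^ 2 - (δ - 1) * weightedEnergy (expWeight 1 (-δ)) u
        + C / lo ^ 2 * (weightedEnergy (expWeight 1 (-δ)) u
          + weightedEnergy (expWeight 1 (-δ)) v) := by
  have hrate := transport_energy_rate_le hlr (a := 1) (fun _ => zero_le_one) (-1) (-δ)
    h.continuousOn_u h.continuousOn_ut h.continuousOn_ux h.hasDerivAt_u
  simp only [neg_mul, one_mul, sub_neg_eq_add, neg_neg] at hrate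
  have hboundary : -∑ i, u 0 i ^ 2 ≤ ∑ i, (1 : ι → ℝ) i * (exp (-δ) * u 1 i ^ 2 - u 0 i ^ 2) := by
    rw [← Finset.sum_neg_distrib]
    refine Finset.sum_le_sum fun i _ => ?_
    simp only [Pi.one_apply, one_mul]
    linarith [mul_nonneg (exp_pos (-δ)).le (sq_nonneg (u 1 i))]
  have hsource := mul_le_mul_of_nonneg_left (h.weightedEnergy_source_le (δ := δ) hlr.continuousOn)
    (inv_nonneg.2 (sq_nonneg lo))
  rw [div_eq_inv_mul, mul_assoc]
  linarith [h.sum_inflow_sq_le]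

theorem weightedEnergy_trace_source_le (h : IsTargetProfile C lr ll u ut ux v b bt bx)
    (hll : ∀ j, ContinuousOn (ll j) (Icc 0 1)) (hδ : 0 ≤ δ) (hw : ∀ j, 0 ≤ w j) :
    weightedEnergy (expWeight w δ) (fun x j => bt x j - ll j x * bx x j)
      ≤ C * exp δ * ∑ k, (∑ j with k < j, w j) * b 0 k ^ 2 := by
  have hbt := h.continuousOn_bt
  have hbx := h.continuousOn_bx
  have hbound : ∀ x ∈ Icc (0 : ℝ) 1, ∑ j, expWeight w δ j x * (bt x j - ll j x * bx x j) ^ 2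
      ≤ C * exp δ * ∑ k, (∑ j with k < j, w j) * b 0 k ^ 2 := fun x hx => by
    rw [← sum_mul_sum_lt_comm, Finset.mul_sum]
    refine Finset.sum_le_sum fun j _ => ?_
    have hexp : exp (δ * x) ≤ exp δ := exp_le_exp.2 (mul_le_of_le_one_right hδ hx.2)
    have hwj := hw j
    calc w j * exp (δ * x) * (bt x j - ll j x * bx x j) ^ 2
        ≤ w j * exp δ * (C * ∑ k with k < j, b 0 k ^ 2) := by
          gcongr
          exact h.trace_source_sq_le x hx j
      _ = C * exp δ * (w j * ∑ k with k < j, b 0 k ^ 2) := by ring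
  refine (intervalIntegral.integral_mono_on zero_le_one
    (intervalIntegrable_energyDensity (fun j => (continuous_expWeight w δ j).continuousOn)
      (by fun_prop)) intervalIntegrable_const hbound).trans_eq ?_
  rw [intervalIntegral.integral_const, sub_zero, one_smul]

theorem energy_rate_b_le (h : IsTargetProfile C lr ll u ut ux v b bt bx)
    (hll : IsTransportSpeed lo hi ll) (hδ : 0 ≤ δ) (hw : ∀ j, 0 ≤ w j) :
    ∫ x in (0 : ℝ)..1, ∑ j, 2 * (expWeight w δ j x / ll j x) * b x j * bt x j
      ≤ -∑ k, (w k - C / lo ^ 2 * exp δ * ∑ j with k < j, w j) * b 0 k ^ 2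
        - (δ - 1) * weightedEnergy (expWeight w δ) b := by
  have hrate := transport_energy_rate_le hll hw 1 δ h.continuousOn_b h.continuousOn_bt
    h.continuousOn_bx h.hasDerivAt_b
  simp only [one_mul, h.b_one, Pi.zero_apply, ne_eq, OfNat.ofNat_ne_zero, not_false_eq_true,
    zero_pow, mul_zero, zero_sub, mul_neg, Finset.sum_neg_distrib] at hrate
  have htrace := mul_le_mul_of_nonneg_left (h.weightedEnergy_trace_source_le hll.continuousOn hδ
    hw) (inv_nonneg.2 (sq_nonneg lo))
  have hsplit : ∑ k, (w k - C / lo ^ 2 * exp δ * ∑ j with k < j, w j) * b 0 k ^ 2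
      = ∑ k, w k * b 0 k ^ 2
        - (lo ^ 2)⁻¹ * (C * exp δ * ∑ k, (∑ j with k < j, w j) * b 0 k ^ 2) := by
    rw [← mul_assoc, Finset.mul_sum, ← Finset.sum_sub_distrib]
    exact Finset.sum_congr rfl fun k _ => by ring
  linarith

theorem weightedEnergy_one_neg_le (h : IsTargetProfile C lr ll u ut ux v b bt bx) (hδ : 0 ≤ δ)
    (hw : ∀ j, 1 ≤ w j) :
    weightedEnergy (expWeight 1 (-δ)) b ≤ weightedEnergy (expWeight w δ) b := by
  refine (weightedEnergy_le_mul (fun j => (continuous_expWeight 1 (-δ) j).continuousOn)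
    (fun j => (continuous_expWeight w δ j).continuousOn) h.continuousOn_b
    fun j x hx => ?_).trans_eq (one_mul _)
  rw [one_mul]
  refine mul_le_mul (hw j) (exp_le_exp.2 ?_) (exp_pos _).le (zero_le_one.trans (hw j))
  exact mul_le_mul_of_nonneg_right (neg_le_self hδ) hx.1

theorem lyapunov_rate_le (h : IsTargetProfile C lr ll u ut ux v b bt bx)
    (hlr : IsTransportSpeed lo hi lr) (hll : IsTransportSpeed lo hi ll) (hC : 0 ≤ C) {r : ℝ}
    (hr : 0 ≤ r) (hδ : 1 + 4 * C + 4 * (C / lo ^ 2) + r * lo⁻¹ ≤ δ)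
    (hw : ∀ k, C + 1 + C / lo ^ 2 * exp δ * ∑ j with k < j, w j = w k) (hw₁ : ∀ k, 1 ≤ w k) :
    (∫ x in (0 : ℝ)..1, ∑ i, 2 * (expWeight 1 (-δ) i x / lr i x) * u x i * ut x i)
        + ∫ x in (0 : ℝ)..1, ∑ j, 2 * (expWeight w δ j x / ll j x) * b x j * bt x j
      ≤ -r * lyapunov lr ll w δ u b := by
  have hw₀ : ∀ k, 0 ≤ w k := fun k => zero_le_one.trans (hw₁ k)
  have hL : 0 ≤ C / lo ^ 2 := by positivity
  have hrlo : 0 ≤ r * lo⁻¹ := mul_nonneg hr (inv_nonneg.2 hlr.lo_pos.le)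
  have hδ₀ : 0 < δ := by linarith
  set U := weightedEnergy (expWeight 1 (-δ)) u
  set B := weightedEnergy (expWeight w δ) b
  have hU : 0 ≤ U :=
    weightedEnergy_nonneg fun i x _ => expWeight_nonneg (fun _ => zero_le_one) _ i x
  have hB : 0 ≤ B := weightedEnergy_nonneg fun i x _ => expWeight_nonneg hw₀ _ i x
  have hV : lyapunov lr ll w δ u b ≤ lo⁻¹ * (U + B) := by
    rw [mul_add]
    exact add_le_add (weightedEnergy_div_speed_le hlr (fun _ => zero_le_one) h.continuousOn_u)
      (weightedEnergy_div_speed_le hll hw₀ h.continuousOn_b)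
  have hv : weightedEnergy (expWeight 1 (-δ)) v ≤ 4 * B + U :=
    (weightedEnergy_le_of_volterra hC hδ₀ (by linarith) h.continuousOn_u h.continuousOn_v
      h.continuousOn_b h.volterra_sq_le).trans
      (by linarith [h.weightedEnergy_one_neg_le hδ₀.le hw₁])
  have hrate_u : _ ≤ C * ∑ j, b 0 j ^ 2 - (δ - 1) * U + C / lo ^ 2 * (U + _) :=
    h.energy_rate_u_le (δ := δ) hlr
  have hrate_b : _ ≤ _ - (δ - 1) * B := h.energy_rate_b_le hll hδ₀.le hw₀
  have hgain : ∑ k, (w k - C / lo ^ 2 * exp δ * ∑ j with k < j, w j) * b 0 k ^ 2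
      = (C + 1) * ∑ k, b 0 k ^ 2 := by
    rw [Finset.mul_sum]
    exact Finset.sum_congr rfl fun k _ => by rw [← hw k, add_sub_cancel_right]
  have htrace : 0 ≤ ∑ k, b 0 k ^ 2 := Finset.sum_nonneg fun _ _ => sq_nonneg _
  calc _ ≤ -(δ - 1) * (U + B) + C / lo ^ 2 * (2 * U + 4 * B) := by
        rw [hgain] at hrate_b
        linarith [mul_le_mul_of_nonneg_left hv hL]
    _ ≤ -(r * lo⁻¹) * (U + B) := by
        nlinarith [mul_nonneg hL hU, mul_le_mul_of_nonneg_right hδ (add_nonneg hU hB),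
          mul_nonneg hC (add_nonneg hU hB)]
    _ ≤ -r * lyapunov lr ll w δ u b := by linarith [mul_le_mul_of_nonneg_left hV hr]

theorem sqNormL2_le_lyapunov (h : IsTargetProfile C lr ll u ut ux v b bt bx)
    (hlr : IsTransportSpeed lo hi lr) (hll : IsTransportSpeed lo hi ll) (hC : 0 ≤ C)
    (hδ : 0 < δ) (hCδ : 4 * C ≤ δ) (hw : ∀ k, 1 ≤ w k) :
    sqNormL2 u v ≤ 4 * exp δ * |hi| * lyapunov lr ll w δ u b := by
  set U := weightedEnergy (expWeight 1 (-δ)) u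
  set W := weightedEnergy (expWeight 1 (-δ)) v
  set B := weightedEnergy (expWeight w δ) b
  have hN : sqNormL2 u v ≤ exp δ * (U + W) := by
    rw [sqNormL2_eq_add h.continuousOn_u h.continuousOn_v, mul_add]
    exact add_le_add (weightedEnergy_one_le_exp_mul hδ.le h.continuousOn_u)
      (weightedEnergy_one_le_exp_mul hδ.le h.continuousOn_v)
  have hU : 0 ≤ U :=
    weightedEnergy_nonneg fun i x _ => expWeight_nonneg (fun _ => zero_le_one) _ i x
  have hW : W ≤ 4 * B + U :=
    (weightedEnergy_le_of_volterra hC hδ hCδ h.continuousOn_u h.continuousOn_v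
      h.continuousOn_b h.volterra_sq_le).trans
      (by linarith [h.weightedEnergy_one_neg_le hδ.le hw])
  have hV : U + B ≤ |hi| * lyapunov lr ll w δ u b := by
    rw [lyapunov, mul_add]
    exact add_le_add (weightedEnergy_le_mul_div_speed hlr (fun _ => zero_le_one) h.continuousOn_u)
      (weightedEnergy_le_mul_div_speed hll (fun k => zero_le_one.trans (hw k)) h.continuousOn_b)
  calc sqNormL2 u v ≤ exp δ * (4 * (U + B)) := hN.trans (by gcongr; linarith)
    _ ≤ exp δ * (4 * (|hi| * lyapunov lr ll w δ u b)) := by gcongr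
    _ = 4 * exp δ * |hi| * lyapunov lr ll w δ u b := by ring

theorem weightedEnergy_b_le_sqNormL2 (h : IsTargetProfile C lr ll u ut ux v b bt bx) (hC : 0 ≤ C) :
    weightedEnergy 1 b ≤ (2 + 2 * C) * sqNormL2 u v := by
  have hu := h.continuousOn_u
  have hv := h.continuousOn_v
  have hg : IntervalIntegrable (fun x => (∑ i, u x i ^ 2) + ∑ j, v x j ^ 2) volume 0 1 :=
    ContinuousOn.intervalIntegrable_of_Icc zero_le_one (by fun_prop)
  have hg₀ (x : ℝ) : 0 ≤ (∑ i, u x i ^ 2) + ∑ j, v x j ^ 2 := by positivity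
  have hpt : ∀ x ∈ Icc (0 : ℝ) 1, ∑ j, (1 : κ → ℝ → ℝ) j x * b x j ^ 2
      ≤ 2 * ((∑ i, u x i ^ 2) + ∑ j, v x j ^ 2) + 2 * (C * sqNormL2 u v) := fun x hx => by
    have hmono : ∫ ξ in (0 : ℝ)..x, ((∑ i, u ξ i ^ 2) + ∑ j, v ξ j ^ 2) ≤ sqNormL2 u v :=
      intervalIntegral.integral_mono_interval le_rfl hx.1 hx.2 (.of_forall hg₀) hg
    have hsq := sum_sq_le_two_mul_add (b x) (v x)
    simp only [Pi.one_apply, one_mul, sub_sq_comm (b x _)] at hsq ⊢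
    linarith [h.volterra_sq_le x hx, mul_le_mul_of_nonneg_left hmono hC,
      Finset.sum_nonneg fun i (_ : i ∈ Finset.univ) => sq_nonneg (u x i)]
  refine (intervalIntegral.integral_mono_on zero_le_one
    (intervalIntegrable_energyDensity (fun _ => continuousOn_const) h.continuousOn_b)
    ((hg.const_mul 2).add intervalIntegrable_const) hpt).trans_eq ?_
  rw [intervalIntegral.integral_add (hg.const_mul 2) intervalIntegrable_const,
    intervalIntegral.integral_const_mul, intervalIntegral.integral_const, sub_zero, one_smul,
    ← sqNormL2]
  ring

theorem lyapunov_le_sqNormL2 (h : IsTargetProfile C lr ll u ut ux v b bt bx)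
    (hlr : IsTransportSpeed lo hi lr) (hll : IsTransportSpeed lo hi ll) (hC : 0 ≤ C)
    (hδ : 0 ≤ δ) (hw : ∀ k, 0 ≤ w k) :
    lyapunov lr ll w δ u b
      ≤ lo⁻¹ * (1 + (∑ k, w k) * exp δ * (2 + 2 * C)) * sqNormL2 u v := by
  have hU : weightedEnergy (expWeight 1 (-δ)) u ≤ sqNormL2 u v := by
    rw [sqNormL2_eq_add h.continuousOn_u h.continuousOn_v]
    refine (weightedEnergy_le_mul (c := 1) (τ := 1)
      (fun i => (continuous_expWeight 1 (-δ) i).continuousOn) (fun _ => continuousOn_const)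
      h.continuousOn_u fun i x hx => ?_).trans ?_
    · simp only [expWeight, Pi.one_apply, one_mul]
      exact exp_le_one_iff.2 (by nlinarith [hx.1])
    · rw [one_mul]
      exact le_add_of_nonneg_right (weightedEnergy_nonneg fun _ _ _ => zero_le_one)
  have hB : weightedEnergy (expWeight w δ) b
      ≤ (∑ k, w k) * exp δ * ((2 + 2 * C) * sqNormL2 u v) := by
    refine (weightedEnergy_le_mul (τ := 1) (fun j => (continuous_expWeight w δ j).continuousOn)
      (fun _ => continuousOn_const) h.continuousOn_b fun j x hx => ?_).trans
      (mul_le_mul_of_nonneg_left (h.weightedEnergy_b_le_sqNormL2 hC)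
        (mul_nonneg (Finset.sum_nonneg fun k _ => hw k) (exp_pos δ).le))
    rw [Pi.one_apply, Pi.one_apply, mul_one]
    exact mul_le_mul (Finset.single_le_sum (fun k _ => hw k) (Finset.mem_univ j))
      (exp_le_exp.2 (mul_le_of_le_one_right hδ hx.2)) (exp_pos _).le
      (Finset.sum_nonneg fun k _ => hw k)
  have hlo : 0 ≤ lo⁻¹ := inv_nonneg.2 hlr.lo_pos.le
  calc lyapunov lr ll w δ u b
      ≤ lo⁻¹ * weightedEnergy (expWeight 1 (-δ)) u + lo⁻¹ * weightedEnergy (expWeight w δ) b :=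
        add_le_add (weightedEnergy_div_speed_le hlr (fun _ => zero_le_one) h.continuousOn_u)
          (weightedEnergy_div_speed_le hll hw h.continuousOn_b)
    _ ≤ lo⁻¹ * sqNormL2 u v + lo⁻¹ * ((∑ k, w k) * exp δ * ((2 + 2 * C) * sqNormL2 u v)) := by
        gcongr
    _ = _ := by ring

end IsTargetProfile

/-- A solution of the backstepping target system on `[0, ∞) × [0, 1]`: `IsTargetProfile` holds at
all times, and `ut`, `bt` are the time derivatives of `u`, `b` at positive times. -/
structure IsTargetSolution (C : ℝ) (lr : ι → ℝ → ℝ) (ll : κ → ℝ → ℝ) (u ut ux : ℝ → ℝ → ι → ℝ)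
    (v b bt bx : ℝ → ℝ → κ → ℝ) : Prop where
  continuousOn_u : ContinuousOn (fun p : ℝ × ℝ => u p.1 p.2) (Ici 0 ×ˢ Icc 0 1)
  continuousOn_ut : ContinuousOn (fun p : ℝ × ℝ => ut p.1 p.2) (Ici 0 ×ˢ Icc 0 1)
  continuousOn_b : ContinuousOn (fun p : ℝ × ℝ => b p.1 p.2) (Ici 0 ×ˢ Icc 0 1)
  continuousOn_bt : ContinuousOn (fun p : ℝ × ℝ => bt p.1 p.2) (Ici 0 ×ˢ Icc 0 1)
  hasDerivAt_u : ∀ t ∈ Ioi (0 : ℝ), ∀ x ∈ Icc (0 : ℝ) 1, HasDerivAt (fun s => u s x) (ut t x) t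
  hasDerivAt_b : ∀ t ∈ Ioi (0 : ℝ), ∀ x ∈ Icc (0 : ℝ) 1, HasDerivAt (fun s => b s x) (bt t x) t
  profile : ∀ t ∈ Ici (0 : ℝ),
    IsTargetProfile C lr ll (u t) (ut t) (ux t) (v t) (b t) (bt t) (bx t)

namespace IsTargetSolution

variable {C lo hi δ r : ℝ} {lr : ι → ℝ → ℝ} {ll : κ → ℝ → ℝ} {u ut ux : ℝ → ℝ → ι → ℝ}
  {v b bt bx : ℝ → ℝ → κ → ℝ} {w : κ → ℝ}

theorem lyapunov_le_exp_mul (h : IsTargetSolution C lr ll u ut ux v b bt bx)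
    (hlr : IsTransportSpeed lo hi lr) (hll : IsTransportSpeed lo hi ll) (hC : 0 ≤ C)
    (hr : 0 ≤ r) (hδ : 1 + 4 * C + 4 * (C / lo ^ 2) + r * lo⁻¹ ≤ δ)
    (hw : ∀ k, C + 1 + C / lo ^ 2 * exp δ * ∑ j with k < j, w j = w k) (hw₁ : ∀ k, 1 ≤ w k)
    {t : ℝ} (ht : 0 ≤ t) :
    lyapunov lr ll w δ (u t) (b t) ≤ exp (-r * t) * lyapunov lr ll w δ (u 0) (b 0) := by
  have hρu := hlr.continuousOn_expWeight_div 1 (-δ)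
  have hρb := hll.continuousOn_expWeight_div w δ
  have hsub : Ioi (0 : ℝ) ×ˢ Icc (0 : ℝ) 1 ⊆ Ici 0 ×ˢ Icc 0 1 := prod_mono_left Ioi_subset_Ici_self
  refine le_exp_mul_of_hasDerivAt_le (V := fun s => lyapunov lr ll w δ (u s) (b s))
    ((continuousOn_weightedEnergy hρu h.continuousOn_u).add
      (continuousOn_weightedEnergy hρb h.continuousOn_b)) (fun s hs => ?_)
    (fun s hs => (h.profile s hs.le).lyapunov_rate_le hlr hll hC hr hδ hw hw₁) ht
  exact (hasDerivAt_weightedEnergy (Ioi_mem_nhds hs) hρu (h.continuousOn_u.mono hsub)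
    (h.continuousOn_ut.mono hsub) h.hasDerivAt_u).add
    (hasDerivAt_weightedEnergy (Ioi_mem_nhds hs) hρb (h.continuousOn_b.mono hsub)
    (h.continuousOn_bt.mono hsub) h.hasDerivAt_b)

theorem exists_sqrt_sqNormL2_le (hlr : IsTransportSpeed lo hi lr) (hll : IsTransportSpeed lo hi ll)
    (hC : 0 ≤ C) {c : ℝ} (hc : 0 ≤ c) :
    ∃ K, 1 ≤ K ∧ ∀ (u ut ux : ℝ → ℝ → ι → ℝ) (v b bt bx : ℝ → ℝ → κ → ℝ),
      IsTargetSolution C lr ll u ut ux v b bt bx → ∀ t ∈ Ici (0 : ℝ),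
        √(sqNormL2 (u t) (v t)) ≤ K * exp (-c * t) * √(sqNormL2 (u 0) (v 0)) := by
  have hL : 0 ≤ C / lo ^ 2 := by positivity
  have hlo : 0 ≤ lo⁻¹ := inv_nonneg.2 hlr.lo_pos.le
  set δ := 1 + 4 * C + 4 * (C / lo ^ 2) + 2 * c * lo⁻¹ with hδ
  have hclo : 0 ≤ c * lo⁻¹ := mul_nonneg hc hlo
  have hδ₀ : 0 < δ := by linarith
  obtain ⟨w, hw⟩ := exists_triangular_weights (κ := κ) (mul_nonneg hL (exp_pos δ).le)
    (add_nonneg hC zero_le_one)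
  have hw₁ : ∀ k, 1 ≤ w k := fun k => by linarith [(hw k).1]
  have hw₀ : ∀ k, 0 ≤ w k := fun k => zero_le_one.trans (hw₁ k)
  set A := 4 * exp δ * |hi|
  set A' := lo⁻¹ * (1 + (∑ k, w k) * exp δ * (2 + 2 * C))
  have hA' : 0 ≤ A' := by
    have hsum : 0 ≤ ∑ k, w k := Finset.sum_nonneg fun k _ => hw₀ k
    exact mul_nonneg hlo (by positivity)
  refine ⟨1 + √(A * A'), le_add_of_nonneg_right (sqrt_nonneg _), ?_⟩
  intro u ut ux v b bt bx h t ht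
  have hN : sqNormL2 (u t) (v t) ≤ A * A' * exp (-c * t) ^ 2 * sqNormL2 (u 0) (v 0) := by
    calc sqNormL2 (u t) (v t) ≤ A * lyapunov lr ll w δ (u t) (b t) :=
          (h.profile t ht).sqNormL2_le_lyapunov hlr hll hC hδ₀ (by linarith) hw₁
      _ ≤ A * (exp (-(2 * c) * t) * (A' * sqNormL2 (u 0) (v 0))) := by
          gcongr
          refine (h.lyapunov_le_exp_mul hlr hll hC (by linarith) hδ.ge (fun k => (hw k).2) hw₁
            ht).trans ?_
          gcongr
          exact (h.profile 0 self_mem_Ici).lyapunov_le_sqNormL2 hlr hll hC hδ₀.le hw₀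
      _ = _ := by
          rw [← exp_nat_mul]
          push_cast
          ring_nf
  calc √(sqNormL2 (u t) (v t)) ≤ √(A * A') * exp (-c * t) * √(sqNormL2 (u 0) (v 0)) := by
        refine (sqrt_le_sqrt hN).trans_eq ?_
        rw [sqrt_mul (by positivity), sqrt_mul (by positivity), sqrt_sq (exp_pos _).le]
    _ ≤ (1 + √(A * A')) * exp (-c * t) * √(sqNormL2 (u 0) (v 0)) := by
        gcongr
        exact le_add_of_nonneg_left zero_le_one

end IsTargetSolution

end TargetSystem

section MulVec

variable {m n : Type*} [Fintype n]

theorem continuousOn_mulVec {X : Type*} [TopologicalSpace X] {s : Set X} {A : X → Matrix m n ℝ}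
    {w : X → n → ℝ} (hA : ContinuousOn A s) (hw : ContinuousOn w s) :
    ContinuousOn (fun x => A x *ᵥ w x) s := by
  rw [continuousOn_iff_continuous_domRestrict] at hA hw ⊢
  exact hA.matrix_mulVec hw

theorem hasDerivWithinAt_mulVec {A : ℝ → Matrix m n ℝ} {A' : Matrix m n ℝ}
    {w : ℝ → n → ℝ} {w' : n → ℝ} {s : Set ℝ} {x : ℝ}
    (hA : ∀ i j, HasDerivWithinAt (fun y => A y i j) (A' i j) s x)
    (hw : HasDerivWithinAt w w' s x) :
    HasDerivWithinAt (fun y => A y *ᵥ w y) (A' *ᵥ w x + A x *ᵥ w') s x := by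
  refine hasDerivWithinAt_pi.2 fun i => ?_
  simp only [mulVec, dotProduct, Pi.add_apply, ← Finset.sum_add_distrib]
  exact HasDerivWithinAt.fun_sum fun j _ => (hA i j).mul (hasDerivWithinAt_pi.1 hw j)

theorem hasDerivWithinAt_diagonal_mulVec [DecidableEq n] {lam : n → ℝ → ℝ} {lam' : n → ℝ}
    {w : ℝ → n → ℝ} {w' : n → ℝ} {s : Set ℝ} {x : ℝ}
    (hlam : ∀ i, HasDerivWithinAt (lam i) (lam' i) s x) (hw : HasDerivWithinAt w w' s x) :
    HasDerivWithinAt (fun y => diagonal (fun i => lam i y) *ᵥ w y)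
      (diagonal lam' *ᵥ w x + diagonal (fun i => lam i x) *ᵥ w') s x :=
  hasDerivWithinAt_pi.2 fun i => by
    simpa only [mulVec_diagonal, Pi.add_apply]
      using (hlam i).fun_mul (hasDerivWithinAt_pi.1 hw i)

theorem hasDerivAt_const_mulVec (A : Matrix m n ℝ) {w : ℝ → n → ℝ} {w' : n → ℝ} {x : ℝ}
    (hw : HasDerivAt w w' x) : HasDerivAt (fun y => A *ᵥ w y) (A *ᵥ w') x :=
  hasDerivAt_pi.2 fun i =>
    HasDerivAt.fun_sum fun j _ => (hasDerivAt_pi.1 hw j).const_mul (A i j)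

variable [Fintype m]

theorem mulVec_integral (A : Matrix m n ℝ) {a b : ℝ} {w : ℝ → n → ℝ}
    (hw : IntervalIntegrable w volume a b) :
    A *ᵥ ∫ x in a..b, w x = ∫ x in a..b, A *ᵥ w x :=
  ((LinearMap.toContinuousLinearMap A.mulVecLin).intervalIntegral_comp_comm hw).symm

theorem sum_mulVec_sq_le_s1 (A : Matrix m n ℝ) (w : n → ℝ) :
    ∑ i, (A *ᵥ w) i ^ 2 ≤ (∑ i, ∑ j, A i j ^ 2) * ∑ j, w j ^ 2 := by
  rw [Finset.sum_mul]
  exact Finset.sum_le_sum fun i _ => Finset.sum_mul_sq_le_sq_mul_sq _ _ _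

theorem mulVec_sq_le_of_strictlyLowerTriangular [LinearOrder n] {A : Matrix n n ℝ}
    (hA : ∀ i j, i ≤ j → A i j = 0) (w : n → ℝ) (i : n) :
    (A *ᵥ w) i ^ 2 ≤ (∑ i, ∑ j, A i j ^ 2) * ∑ j with j < i, w j ^ 2 := by
  have hrow : (A *ᵥ w) i = ∑ j with j < i, A i j * w j :=
    (Finset.sum_filter_of_ne fun j _ hj => lt_of_not_ge fun hij => hj <| by
      simp only [hA i j hij, zero_mul]).symm
  have hnorm : ∑ j with j < i, A i j ^ 2 ≤ ∑ i, ∑ j, A i j ^ 2 :=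
    (Finset.sum_le_sum_of_subset_of_nonneg (Finset.filter_subset _ _) fun j _ _ =>
      sq_nonneg _).trans
      (Finset.single_le_sum (f := fun i => ∑ j, A i j ^ 2)
        (fun i _ => Finset.sum_nonneg fun j _ => sq_nonneg _) (Finset.mem_univ i))
  rw [hrow]
  exact (Finset.sum_mul_sq_le_sq_mul_sq _ _ _).trans
    (mul_le_mul_of_nonneg_right hnorm (Finset.sum_nonneg fun j _ => sq_nonneg _))

variable {X : Type*} [TopologicalSpace X] {s : Set X} {A : X → Matrix m n ℝ}

theorem eventually_sum_sq_le_of_continuousOn (hs : IsCompact s) (hA : ContinuousOn A s) :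
    ∀ᶠ C : ℝ in Filter.atTop, ∀ x ∈ s, ∑ i, ∑ j, A x i j ^ 2 ≤ C := by
  have hentry (i : m) (j : n) : ContinuousOn (fun x => A x i j) s :=
    (continuous_id.matrix_elem i j).comp_continuousOn hA
  obtain ⟨B, hB⟩ := hs.bddAbove_image (f := fun x => ∑ i, ∑ j, A x i j ^ 2) (by fun_prop)
  filter_upwards [Filter.eventually_ge_atTop B] with C hBC x hx
  exact (hB ⟨x, hx, rfl⟩).trans hBC

theorem eventually_sum_mulVec_sq_le (hs : IsCompact s) (hA : ContinuousOn A s) :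
    ∀ᶠ C : ℝ in Filter.atTop, ∀ x ∈ s, ∀ w, ∑ i, (A x *ᵥ w) i ^ 2 ≤ C * ∑ j, w j ^ 2 := by
  filter_upwards [eventually_sum_sq_le_of_continuousOn hs hA] with C hC x hx w
  exact (sum_mulVec_sq_le_s1 _ _).trans
    (mul_le_mul_of_nonneg_right (hC x hx) (Finset.sum_nonneg fun j _ => sq_nonneg _))

theorem eventually_sum_mulVec_add_mulVec_sq_le {p : Type*} [Fintype p] {B : X → Matrix m p ℝ}
    (hs : IsCompact s) (hA : ContinuousOn A s) (hB : ContinuousOn B s) :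
    ∀ᶠ C : ℝ in Filter.atTop, ∀ x ∈ s, ∀ w z,
      ∑ i, (A x *ᵥ w + B x *ᵥ z) i ^ 2 ≤ C * ((∑ j, w j ^ 2) + ∑ k, z k ^ 2) := by
  have hAB : ContinuousOn (fun x => fromCols (A x) (B x)) s := by
    refine continuousOn_pi.2 fun i => continuousOn_pi.2 fun j => ?_
    rcases j with j | j
    exacts [(continuous_id.matrix_elem i j).comp_continuousOn hA,
      (continuous_id.matrix_elem i j).comp_continuousOn hB]
  filter_upwards [eventually_sum_mulVec_sq_le hs hAB] with C hC x hx w z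
  simpa only [fromCols_mulVec_sumElim, Fintype.sum_sum_type, Sum.elim_inl, Sum.elim_inr]
    using hC x hx (Sum.elim w z)

end MulVec

section VolterraIntegral

variable {ι κ m : Type*} [Fintype ι] [Fintype κ]

variable {k₁ k₁x : ℝ → ℝ → Matrix m ι ℝ} {k₂ k₂x : ℝ → ℝ → Matrix m κ ℝ}

theorem continuousOn_volterraIntegrand
    (hk₁ : ContinuousOn (fun p : ℝ × ℝ => k₁ p.1 p.2) (volterraTriangle 0 1))
    (hk₂ : ContinuousOn (fun p : ℝ × ℝ => k₂ p.1 p.2) (volterraTriangle 0 1))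
    {X : Type*} [TopologicalSpace X] {S : Set X} {u : X → ℝ → ι → ℝ} {v : X → ℝ → κ → ℝ}
    (hu : ContinuousOn (fun p : X × ℝ => u p.1 p.2) (S ×ˢ Icc 0 1))
    (hv : ContinuousOn (fun p : X × ℝ => v p.1 p.2) (S ×ˢ Icc 0 1)) :
    ContinuousOn
      (fun p : X × ℝ × ℝ => k₁ p.2.1 p.2.2 *ᵥ u p.1 p.2.2 + k₂ p.2.1 p.2.2 *ᵥ v p.1 p.2.2)
      (S ×ˢ volterraTriangle 0 1) := by
  have hker : MapsTo (Prod.snd : X × ℝ × ℝ → ℝ × ℝ) (S ×ˢ volterraTriangle 0 1)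
    (volterraTriangle 0 1) := fun p hp => hp.2
  have hfun : MapsTo (fun p : X × ℝ × ℝ => (p.1, p.2.2)) (S ×ˢ volterraTriangle 0 1)
    (S ×ˢ Icc 0 1) := fun p hp => ⟨hp.1, hp.2.1, hp.2.2.1.trans hp.2.2.2⟩
  exact (continuousOn_mulVec (hk₁.comp (by fun_prop) hker) (hu.comp (by fun_prop) hfun)).add
    (continuousOn_mulVec (hk₂.comp (by fun_prop) hker) (hv.comp (by fun_prop) hfun))

theorem continuousOn_volterraIntegrand_slice
    (hk₁ : ContinuousOn (fun p : ℝ × ℝ => k₁ p.1 p.2) (volterraTriangle 0 1))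
    (hk₂ : ContinuousOn (fun p : ℝ × ℝ => k₂ p.1 p.2) (volterraTriangle 0 1))
    {u : ℝ → ι → ℝ} {v : ℝ → κ → ℝ} (hu : ContinuousOn u (Icc 0 1))
    (hv : ContinuousOn v (Icc 0 1)) :
    ContinuousOn (fun p : ℝ × ℝ => k₁ p.1 p.2 *ᵥ u p.2 + k₂ p.1 p.2 *ᵥ v p.2)
      (volterraTriangle 0 1) :=
  (continuousOn_volterraIntegrand (S := (univ : Set Unit)) (u := fun _ => u) (v := fun _ => v)
    hk₁ hk₂ (hu.comp (by fun_prop) fun _ hp => hp.2) (hv.comp (by fun_prop) fun _ hp => hp.2)).comp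
    (f := fun p => ((), p)) (by fun_prop) fun _ hp => ⟨mem_univ _, hp⟩

variable [Fintype m]

/-- The Volterra integral operator on `[0, 1]` with kernels `k₁`, `k₂`, applied to a pair of
vector-valued functions. -/
noncomputable def volterraIntegral (k₁ : ℝ → ℝ → Matrix m ι ℝ) (k₂ : ℝ → ℝ → Matrix m κ ℝ)
    (u : ℝ → ι → ℝ) (v : ℝ → κ → ℝ) (x : ℝ) : m → ℝ :=
  ∫ ξ in (0 : ℝ)..x, (k₁ x ξ *ᵥ u ξ + k₂ x ξ *ᵥ v ξ)

theorem continuousOn_volterraIntegral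
    (hk₁ : ContinuousOn (fun p : ℝ × ℝ => k₁ p.1 p.2) (volterraTriangle 0 1))
    (hk₂ : ContinuousOn (fun p : ℝ × ℝ => k₂ p.1 p.2) (volterraTriangle 0 1))
    {X : Type*} [TopologicalSpace X] {S : Set X} {u : X → ℝ → ι → ℝ} {v : X → ℝ → κ → ℝ}
    (hu : ContinuousOn (fun p : X × ℝ => u p.1 p.2) (S ×ˢ Icc 0 1))
    (hv : ContinuousOn (fun p : X × ℝ => v p.1 p.2) (S ×ˢ Icc 0 1)) :
    ContinuousOn (fun p : X × ℝ => volterraIntegral k₁ k₂ (u p.1) (v p.1) p.2) (S ×ˢ Icc 0 1) :=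
  continuousOn_integral_of_continuousOn_triangle
    (k := fun s x ξ => k₁ x ξ *ᵥ u s ξ + k₂ x ξ *ᵥ v s ξ)
    (continuousOn_volterraIntegrand hk₁ hk₂ hu hv)

theorem hasDerivAt_volterraIntegral_param
    (hk₁ : ContinuousOn (fun p : ℝ × ℝ => k₁ p.1 p.2) (volterraTriangle 0 1))
    (hk₂ : ContinuousOn (fun p : ℝ × ℝ => k₂ p.1 p.2) (volterraTriangle 0 1))
    {S : Set ℝ} {t : ℝ} (hS : S ∈ nhds t) {u ut : ℝ → ℝ → ι → ℝ} {v vt : ℝ → ℝ → κ → ℝ}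
    (hu : ContinuousOn (fun p : ℝ × ℝ => u p.1 p.2) (S ×ˢ Icc 0 1))
    (hut : ContinuousOn (fun p : ℝ × ℝ => ut p.1 p.2) (S ×ˢ Icc 0 1))
    (hv : ContinuousOn (fun p : ℝ × ℝ => v p.1 p.2) (S ×ˢ Icc 0 1))
    (hvt : ContinuousOn (fun p : ℝ × ℝ => vt p.1 p.2) (S ×ˢ Icc 0 1))
    (hdu : ∀ s ∈ S, ∀ ξ ∈ Icc (0 : ℝ) 1, HasDerivAt (fun r => u r ξ) (ut s ξ) s)
    (hdv : ∀ s ∈ S, ∀ ξ ∈ Icc (0 : ℝ) 1, HasDerivAt (fun r => v r ξ) (vt s ξ) s)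
    {x : ℝ} (hx : x ∈ Icc (0 : ℝ) 1) :
    HasDerivAt (fun s => volterraIntegral k₁ k₂ (u s) (v s) x)
      (volterraIntegral k₁ k₂ (ut t) (vt t) x) t := by
  have hcont : ContinuousOn (fun p : ℝ × ℝ => (p.1, x, p.2)) (S ×ˢ Icc 0 x) := by fun_prop
  have hmaps : MapsTo (fun p : ℝ × ℝ => (p.1, x, p.2)) (S ×ˢ Icc 0 x)
      (S ×ˢ volterraTriangle 0 1) := fun p hp => ⟨hp.1, hp.2.1, hp.2.2, hx.2⟩
  refine hasDerivAt_integral_of_continuousOn_deriv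
    (f := fun s ξ => k₁ x ξ *ᵥ u s ξ + k₂ x ξ *ᵥ v s ξ)
    (f' := fun s ξ => k₁ x ξ *ᵥ ut s ξ + k₂ x ξ *ᵥ vt s ξ) hx.1 hS
    ((continuousOn_volterraIntegrand hk₁ hk₂ hu hv).comp hcont hmaps)
    ((continuousOn_volterraIntegrand hk₁ hk₂ hut hvt).comp hcont hmaps) fun s hs ξ hξ => ?_
  have hξ' : ξ ∈ Icc (0 : ℝ) 1 := ⟨hξ.1, hξ.2.trans hx.2⟩
  exact (hasDerivAt_const_mulVec _ (hdu s hs ξ hξ')).add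
    (hasDerivAt_const_mulVec _ (hdv s hs ξ hξ'))

theorem hasDerivAt_volterraIntegral
    (hk₁ : ContinuousOn (fun p : ℝ × ℝ => k₁ p.1 p.2) (volterraTriangle 0 1))
    (hk₁x : ContinuousOn (fun p : ℝ × ℝ => k₁x p.1 p.2) (volterraTriangle 0 1))
    (hk₂ : ContinuousOn (fun p : ℝ × ℝ => k₂ p.1 p.2) (volterraTriangle 0 1))
    (hk₂x : ContinuousOn (fun p : ℝ × ℝ => k₂x p.1 p.2) (volterraTriangle 0 1))
    (hdk₁ : ∀ p ∈ volterraTriangle 0 1, ∀ i j,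
      HasDerivWithinAt (fun y => k₁ y p.2 i j) (k₁x p.1 p.2 i j) (Icc p.2 1) p.1)
    (hdk₂ : ∀ p ∈ volterraTriangle 0 1, ∀ i j,
      HasDerivWithinAt (fun y => k₂ y p.2 i j) (k₂x p.1 p.2 i j) (Icc p.2 1) p.1)
    {u : ℝ → ι → ℝ} {v : ℝ → κ → ℝ} (hu : ContinuousOn u (Icc 0 1)) (hv : ContinuousOn v (Icc 0 1))
    {x : ℝ} (hx : x ∈ Ioo (0 : ℝ) 1) :
    HasDerivAt (volterraIntegral k₁ k₂ u v)
      (k₁ x x *ᵥ u x + k₂ x x *ᵥ v x + volterraIntegral k₁x k₂x u v x) x := by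
  refine hasDerivAt_integral_row (k := fun x ξ => k₁ x ξ *ᵥ u ξ + k₂ x ξ *ᵥ v ξ)
    (kx := fun x ξ => k₁x x ξ *ᵥ u ξ + k₂x x ξ *ᵥ v ξ)
    (continuousOn_volterraIntegrand_slice hk₁ hk₂ hu hv)
    (continuousOn_volterraIntegrand_slice hk₁x hk₂x hu hv) (fun ξ hξ y hy => ?_) hx
  have hp : (y, ξ) ∈ volterraTriangle 0 1 := ⟨hξ.1, hy.1.le, hy.2.le⟩
  refine HasDerivWithinAt.hasDerivAt (s := Icc ξ 1) ?_ (Icc_mem_nhds hy.1 hy.2)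
  have hderiv := (hasDerivWithinAt_mulVec (hdk₁ _ hp) (hasDerivWithinAt_const y _ (u ξ))).fun_add
    (hasDerivWithinAt_mulVec (hdk₂ _ hp) (hasDerivWithinAt_const y _ (v ξ)))
  simpa only [mulVec_zero, add_zero] using hderiv

theorem eventually_sum_volterraIntegral_sq_le
    (hk₁ : ContinuousOn (fun p : ℝ × ℝ => k₁ p.1 p.2) (volterraTriangle 0 1))
    (hk₂ : ContinuousOn (fun p : ℝ × ℝ => k₂ p.1 p.2) (volterraTriangle 0 1)) :
    ∀ᶠ C : ℝ in Filter.atTop, ∀ u v, ContinuousOn u (Icc 0 1) → ContinuousOn v (Icc 0 1) →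
      ∀ x ∈ Icc (0 : ℝ) 1, ∑ j, volterraIntegral k₁ k₂ u v x j ^ 2
        ≤ C * ∫ ξ in (0 : ℝ)..x, ((∑ i, u ξ i ^ 2) + ∑ j, v ξ j ^ 2) := by
  filter_upwards [eventually_sum_mulVec_add_mulVec_sq_le (isCompact_volterraTriangle 0 1) hk₁ hk₂]
    with C hC u v hu hv x hx
  set h := fun ξ => k₁ x ξ *ᵥ u ξ + k₂ x ξ *ᵥ v ξ
  have hsub : Icc 0 x ⊆ Icc 0 1 := Icc_subset_Icc_right hx.2
  have hh : ContinuousOn h (Icc 0 x) :=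
    continuousOn_row (k := fun x ξ => k₁ x ξ *ᵥ u ξ + k₂ x ξ *ᵥ v ξ)
      (continuousOn_volterraIntegrand_slice hk₁ hk₂ hu hv) hx.2
  have hcoord (j : m) : ContinuousOn (fun ξ => h ξ j) (Icc 0 x) := by fun_prop
  have hu' := hu.mono hsub
  have hv' := hv.mono hsub
  have hproj (j : m) : volterraIntegral k₁ k₂ u v x j = ∫ ξ in (0 : ℝ)..x, h ξ j :=
    ((ContinuousLinearMap.proj (R := ℝ) j).intervalIntegral_comp_comm
      (hh.intervalIntegrable_of_Icc hx.1)).symm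
  have hcauchySchwarz (j : m) : volterraIntegral k₁ k₂ u v x j ^ 2
      ≤ ∫ ξ in (0 : ℝ)..x, h ξ j ^ 2 := by
    rw [hproj]
    refine (sq_integral_le_mul_integral_sq hx.1 (hcoord j)).trans
      (mul_le_of_le_one_left (intervalIntegral.integral_nonneg hx.1 fun _ _ => sq_nonneg _) ?_)
    rw [sub_zero]
    exact hx.2
  refine (Finset.sum_le_sum fun j _ => hcauchySchwarz j).trans ?_
  rw [← intervalIntegral.integral_finsetSum fun j _ =>
    ((hcoord j).fun_pow 2).intervalIntegrable_of_Icc hx.1, ← intervalIntegral.integral_const_mul]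
  exact intervalIntegral.integral_mono_on hx.1
    (ContinuousOn.intervalIntegrable_of_Icc hx.1 (by fun_prop))
    (ContinuousOn.intervalIntegrable_of_Icc hx.1 (by fun_prop))
    fun ξ hξ => hC (x, ξ) ⟨hξ.1, hξ.2, hx.2⟩ (u ξ) (v ξ)

end VolterraIntegral

section Backstepping

/-- Coefficients of a linear hyperbolic system on `[0, 1]`: `u` travels to the right with speeds
`lr` and `v` to the left with speeds `ll`, `Sr`, `Sl`, `So` are the in-domain couplings, and `Q0`
is the reflection at `x = 0`. The functions `lr'`, `ll'` are the derivatives of the speeds. -/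
structure HyperbolicPlant (ι κ : Type*) where
  (lr lr' : ι → ℝ → ℝ)
  (ll ll' : κ → ℝ → ℝ)
  (lo hi : ℝ)
  Sr : ℝ → Matrix ι ι ℝ
  Sl : ℝ → Matrix ι κ ℝ
  So : ℝ → Matrix κ ι ℝ
  Q0 : Matrix ι κ ℝ
  isTransportSpeed_lr : IsTransportSpeed lo hi lr
  isTransportSpeed_ll : IsTransportSpeed lo hi ll
  hasDerivWithinAt_lr : ∀ i, ∀ x ∈ Icc (0 : ℝ) 1, HasDerivWithinAt (lr i) (lr' i x) (Icc 0 1) x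
  hasDerivWithinAt_ll : ∀ j, ∀ x ∈ Icc (0 : ℝ) 1, HasDerivWithinAt (ll j) (ll' j x) (Icc 0 1) x
  continuousOn_Sr : ContinuousOn Sr (Icc 0 1)
  continuousOn_Sl : ContinuousOn Sl (Icc 0 1)

variable {ι κ : Type*} [Fintype ι] [Fintype κ] [DecidableEq ι] [LinearOrder κ]

/-- Backstepping kernels of a plant: `C¹` solutions on the triangle `0 ≤ ξ ≤ x ≤ 1` of the kernel
equations (`kernel_eq_G21`, `kernel_eq_G22`) and of the conditions on the diagonal
(`diagonal_eq_G21`, `diagonal_eq_G22`), such that the coupling of the target system to its trace at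
`x = 0` is strictly lower triangular. The suffixes `x` and `xi` denote partial derivatives. -/
structure BacksteppingKernel (P : HyperbolicPlant ι κ) where
  (G21 G21x G21xi : ℝ → ℝ → Matrix κ ι ℝ)
  (G22 G22x G22xi : ℝ → ℝ → Matrix κ κ ℝ)
  continuousOn_G21 : ContinuousOn (fun p : ℝ × ℝ => G21 p.1 p.2) (volterraTriangle 0 1)
  continuousOn_G22 : ContinuousOn (fun p : ℝ × ℝ => G22 p.1 p.2) (volterraTriangle 0 1)
  continuousOn_G21x : ContinuousOn (fun p : ℝ × ℝ => G21x p.1 p.2) (volterraTriangle 0 1)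
  continuousOn_G22x : ContinuousOn (fun p : ℝ × ℝ => G22x p.1 p.2) (volterraTriangle 0 1)
  hasDerivWithinAt_G21 : ∀ x ξ : ℝ, 0 ≤ ξ → ξ ≤ x → x ≤ 1 → ∀ i j,
    HasDerivWithinAt (fun y => G21 y ξ i j) (G21x x ξ i j) (Icc ξ 1) x ∧
      HasDerivWithinAt (fun η => G21 x η i j) (G21xi x ξ i j) (Icc 0 x) ξ
  hasDerivWithinAt_G22 : ∀ x ξ : ℝ, 0 ≤ ξ → ξ ≤ x → x ≤ 1 → ∀ i j,
    HasDerivWithinAt (fun y => G22 y ξ i j) (G22x x ξ i j) (Icc ξ 1) x ∧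
      HasDerivWithinAt (fun η => G22 x η i j) (G22xi x ξ i j) (Icc 0 x) ξ
  kernel_eq_G21 : ∀ x ξ : ℝ, 0 ≤ ξ → ξ ≤ x → x ≤ 1 →
    G21xi x ξ * diagonal (fun i => P.lr i ξ) - diagonal (fun j => P.ll j x) * G21x x ξ
      = -(G21 x ξ * diagonal fun i => P.lr' i ξ) - G21 x ξ * P.Sr ξ - G22 x ξ * P.So ξ
  kernel_eq_G22 : ∀ x ξ : ℝ, 0 ≤ ξ → ξ ≤ x → x ≤ 1 →
    G22xi x ξ * diagonal (fun j => P.ll j ξ) + diagonal (fun j => P.ll j x) * G22x x ξ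
      = -(G22 x ξ * diagonal fun j => P.ll' j ξ) + G21 x ξ * P.Sl ξ
  diagonal_eq_G21 : ∀ x ∈ Icc (0 : ℝ) 1,
    G21 x x * diagonal (fun i => P.lr i x) + diagonal (fun j => P.ll j x) * G21 x x = -P.So x
  diagonal_eq_G22 : ∀ x ∈ Icc (0 : ℝ) 1,
    diagonal (fun j => P.ll j x) * G22 x x = G22 x x * diagonal (fun j => P.ll j x)
  trace_eq_zero : ∀ x ∈ Icc (0 : ℝ) 1, ∀ i j, i ≤ j →
    (G22 x 0 * diagonal (fun k => P.ll k 0) - G21 x 0 * diagonal (fun k => P.lr k 0) * P.Q0) i j = 0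

variable {P : HyperbolicPlant ι κ}

/-- Classical solutions of the plant under the backstepping feedback, which cancels the reflection
at `x = 1`. The functions `ut`, `ux`, `vt`, `vx` are the partial derivatives of `u`, `v`. -/
structure IsClosedLoopSolution (G : BacksteppingKernel P) (u ut ux : ℝ → ℝ → ι → ℝ)
    (v vt vx : ℝ → ℝ → κ → ℝ) : Prop where
  continuousOn_u : ContinuousOn (fun p : ℝ × ℝ => u p.1 p.2) (Ici 0 ×ˢ Icc 0 1)
  continuousOn_v : ContinuousOn (fun p : ℝ × ℝ => v p.1 p.2) (Ici 0 ×ˢ Icc 0 1)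
  continuousOn_ut : ContinuousOn (fun p : ℝ × ℝ => ut p.1 p.2) (Ici 0 ×ˢ Icc 0 1)
  continuousOn_ux : ContinuousOn (fun p : ℝ × ℝ => ux p.1 p.2) (Ici 0 ×ˢ Icc 0 1)
  continuousOn_vt : ContinuousOn (fun p : ℝ × ℝ => vt p.1 p.2) (Ici 0 ×ˢ Icc 0 1)
  continuousOn_vx : ContinuousOn (fun p : ℝ × ℝ => vx p.1 p.2) (Ici 0 ×ˢ Icc 0 1)
  hasDerivWithinAt : ∀ t ∈ Ici (0 : ℝ), ∀ x ∈ Icc (0 : ℝ) 1,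
    HasDerivWithinAt (fun s => u s x) (ut t x) (Ici 0) t ∧
      HasDerivWithinAt (fun y => u t y) (ux t x) (Icc 0 1) x ∧
      HasDerivWithinAt (fun s => v s x) (vt t x) (Ici 0) t ∧
      HasDerivWithinAt (fun y => v t y) (vx t x) (Icc 0 1) x
  plant_eq_u : ∀ t ∈ Ici (0 : ℝ), ∀ x ∈ Icc (0 : ℝ) 1,
    ut t x + diagonal (fun i => P.lr i x) *ᵥ ux t x = P.Sr x *ᵥ u t x + P.Sl x *ᵥ v t x
  plant_eq_v : ∀ t ∈ Ici (0 : ℝ), ∀ x ∈ Icc (0 : ℝ) 1,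
    vt t x - diagonal (fun j => P.ll j x) *ᵥ vx t x = P.So x *ᵥ u t x
  inflow_eq : ∀ t ∈ Ici (0 : ℝ), u t 0 = P.Q0 *ᵥ v t 0
  feedback_eq : ∀ t ∈ Ici (0 : ℝ), v t 1 = volterraIntegral G.G21 G.G22 (u t) (v t) 1

namespace BacksteppingKernel

variable (G : BacksteppingKernel P)

/-- The backstepping transformation `v ↦ v(x) - ∫₀ˣ (G₂₁(x, ξ) u(ξ) + G₂₂(x, ξ) v(ξ)) dξ`. -/
noncomputable def transform (u : ℝ → ι → ℝ) (v : ℝ → κ → ℝ) (x : ℝ) : κ → ℝ :=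
  v x - volterraIntegral G.G21 G.G22 u v x

/-- The space derivative of `transform u v`, given that `vx` is the space derivative of `v`. -/
noncomputable def transformDeriv (u : ℝ → ι → ℝ) (v vx : ℝ → κ → ℝ) (x : ℝ) : κ → ℝ :=
  vx x - (G.G21 x x *ᵥ u x + G.G22 x x *ᵥ v x + volterraIntegral G.G21x G.G22x u v x)

/-- The boundary term produced by integrating the space derivatives of the plant by parts against
the kernels. -/
def flux (u : ℝ → ι → ℝ) (v : ℝ → κ → ℝ) (x ξ : ℝ) : κ → ℝ :=
  G.G22 x ξ *ᵥ (diagonal (fun j => P.ll j ξ) *ᵥ v ξ)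
    - G.G21 x ξ *ᵥ (diagonal (fun i => P.lr i ξ) *ᵥ u ξ)

/-- The matrix `Δ(x) = G₂₂(x, 0) Λˡ(0) - G₂₁(x, 0) Λʳ(0) Q₀` coupling the target system to its
trace at `x = 0`. -/
def traceCoupling (x : ℝ) : Matrix κ κ ℝ :=
  G.G22 x 0 * diagonal (fun j => P.ll j 0) - G.G21 x 0 * diagonal (fun i => P.lr i 0) * P.Q0

variable {G} {u ut ux : ℝ → ℝ → ι → ℝ} {v vt vx : ℝ → ℝ → κ → ℝ} {t x ξ : ℝ}

theorem hasDerivWithinAt_flux (h : IsClosedLoopSolution G u ut ux v vt vx) (ht : 0 ≤ t)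
    (hx : x ≤ 1) (hξ : ξ ∈ Icc 0 x) :
    HasDerivWithinAt (G.flux (u t) (v t) x)
      (G.G21 x ξ *ᵥ ut t ξ + G.G22 x ξ *ᵥ vt t ξ
        - diagonal (fun j => P.ll j x) *ᵥ (G.G21x x ξ *ᵥ u t ξ + G.G22x x ξ *ᵥ v t ξ))
      (Icc 0 x) ξ := by
  have hsub : Icc 0 x ⊆ Icc 0 1 := Icc_subset_Icc_right hx
  obtain ⟨-, hu, -, hv⟩ := h.hasDerivWithinAt t ht ξ (hsub hξ)
  refine ((hasDerivWithinAt_mulVec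
    (fun i j => (G.hasDerivWithinAt_G22 x ξ hξ.1 hξ.2 hx i j).2)
    (hasDerivWithinAt_diagonal_mulVec
      (fun j => (P.hasDerivWithinAt_ll j ξ (hsub hξ)).mono hsub) (hv.mono hsub))).sub
    (hasDerivWithinAt_mulVec
    (fun i j => (G.hasDerivWithinAt_G21 x ξ hξ.1 hξ.2 hx i j).2)
    (hasDerivWithinAt_diagonal_mulVec
      (fun i => (P.hasDerivWithinAt_lr i ξ (hsub hξ)).mono hsub) (hu.mono hsub)))).congr_deriv ?_
  have hut : diagonal (fun i => P.lr i ξ) *ᵥ ux t ξ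
      = P.Sr ξ *ᵥ u t ξ + P.Sl ξ *ᵥ v t ξ - ut t ξ :=
    eq_sub_of_add_eq' (h.plant_eq_u t ht ξ (hsub hξ))
  have hvt : diagonal (fun j => P.ll j ξ) *ᵥ vx t ξ = vt t ξ - P.So ξ *ᵥ u t ξ := by
    rw [← h.plant_eq_v t ht ξ (hsub hξ), sub_sub_cancel]
  have hK₁ := congrArg (· *ᵥ u t ξ) (G.kernel_eq_G21 x ξ hξ.1 hξ.2 hx)
  have hK₂ := congrArg (· *ᵥ v t ξ) (G.kernel_eq_G22 x ξ hξ.1 hξ.2 hx)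
  rw [hut, hvt]
  simp only [sub_mulVec, add_mulVec, neg_mulVec, ← mulVec_mulVec, mulVec_add, mulVec_sub]
    at hK₁ hK₂ ⊢
  linear_combination hK₂ - hK₁

theorem volterraIntegral_sub_mulVec_eq_flux_sub (h : IsClosedLoopSolution G u ut ux v vt vx)
    (ht : 0 ≤ t) (hx : x ∈ Icc (0 : ℝ) 1) :
    volterraIntegral G.G21 G.G22 (ut t) (vt t) x
        - diagonal (fun j => P.ll j x) *ᵥ volterraIntegral G.G21x G.G22x (u t) (v t) x
      = G.flux (u t) (v t) x x - G.flux (u t) (v t) x 0 := by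
  have hu : ContinuousOn (u t) (Icc 0 1) := ContinuousOn.uncurry_left t ht h.continuousOn_u
  have hv : ContinuousOn (v t) (Icc 0 1) := ContinuousOn.uncurry_left t ht h.continuousOn_v
  have hut : ContinuousOn (ut t) (Icc 0 1) := ContinuousOn.uncurry_left t ht h.continuousOn_ut
  have hvt : ContinuousOn (vt t) (Icc 0 1) := ContinuousOn.uncurry_left t ht h.continuousOn_vt
  have hint := (continuousOn_row (k := fun x ξ => G.G21 x ξ *ᵥ ut t ξ + G.G22 x ξ *ᵥ vt t ξ)
    (continuousOn_volterraIntegrand_slice G.continuousOn_G21 G.continuousOn_G22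
      hut hvt) hx.2).intervalIntegrable_of_Icc
      (μ := volume) hx.1
  have hrow := continuousOn_row (k := fun x ξ => G.G21x x ξ *ᵥ u t ξ + G.G22x x ξ *ᵥ v t ξ)
    (continuousOn_volterraIntegrand_slice G.continuousOn_G21x G.continuousOn_G22x
      hu hv) hx.2
  have hint' := (continuousOn_mulVec (A := fun _ => diagonal fun j => P.ll j x)
    continuousOn_const hrow).intervalIntegrable_of_Icc (μ := volume) hx.1
  have hflux : ∀ ξ ∈ Icc 0 x, HasDerivWithinAt _ _ (Icc 0 x) ξ :=
    fun ξ hξ => hasDerivWithinAt_flux h ht hx.2 hξ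
  rw [volterraIntegral, volterraIntegral, mulVec_integral _ (hrow.intervalIntegrable_of_Icc hx.1),
    ← intervalIntegral.integral_sub hint hint']
  exact intervalIntegral.integral_eq_sub_of_hasDerivAt_of_le hx.1
    (fun ξ hξ => (hflux ξ hξ).continuousWithinAt)
    (fun ξ hξ => (hflux ξ (Ioo_subset_Icc_self hξ)).hasDerivAt (Icc_mem_nhds hξ.1 hξ.2))
    (hint.sub hint')

theorem transform_zero (u : ℝ → ι → ℝ) (v : ℝ → κ → ℝ) : G.transform u v 0 = v 0 := by
  rw [transform, volterraIntegral, intervalIntegral.integral_same, sub_zero]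

theorem transform_sub_mulVec_transformDeriv (h : IsClosedLoopSolution G u ut ux v vt vx)
    (ht : 0 ≤ t) (hx : x ∈ Icc (0 : ℝ) 1) :
    G.transform (ut t) (vt t) x
        - diagonal (fun j => P.ll j x) *ᵥ G.transformDeriv (u t) (v t) (vx t) x
      = G.traceCoupling x *ᵥ v t 0 := by
  have hflux := volterraIntegral_sub_mulVec_eq_flux_sub h ht hx
  have hplant := h.plant_eq_v t ht x hx
  have hB₁ := congrArg (· *ᵥ u t x) (G.diagonal_eq_G21 x hx)
  have hB₂ := congrArg (· *ᵥ v t x) (G.diagonal_eq_G22 x hx)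
  simp only [flux, h.inflow_eq t ht] at hflux
  simp only [transform, transformDeriv, traceCoupling, sub_mulVec, add_mulVec, neg_mulVec,
    ← mulVec_mulVec, mulVec_add, mulVec_sub] at hB₁ hB₂ ⊢
  linear_combination hplant - hflux + hB₁ + hB₂

theorem continuousOn_traceCoupling (G : BacksteppingKernel P) :
    ContinuousOn G.traceCoupling (Icc 0 1) := by
  have h21 := continuousOn_column G.continuousOn_G21 le_rfl
  have h22 := continuousOn_column G.continuousOn_G22 le_rfl
  exact ((continuous_id.matrix_mul continuous_const).comp_continuousOn h22).sub
    (((continuous_id.matrix_mul continuous_const).matrix_mul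
      continuous_const).comp_continuousOn h21)

theorem hasDerivAt_transform_space (h : IsClosedLoopSolution G u ut ux v vt vx) (ht : 0 ≤ t)
    (hx : x ∈ Ioo (0 : ℝ) 1) :
    HasDerivAt (G.transform (u t) (v t)) (G.transformDeriv (u t) (v t) (vx t) x) x :=
  ((h.hasDerivWithinAt t ht x (Ioo_subset_Icc_self hx)).2.2.2.hasDerivAt
    (Icc_mem_nhds hx.1 hx.2)).sub
    (hasDerivAt_volterraIntegral G.continuousOn_G21 G.continuousOn_G21x G.continuousOn_G22
      G.continuousOn_G22x (fun _ hp i j => (G.hasDerivWithinAt_G21 _ _ hp.1 hp.2.1 hp.2.2 i j).1)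
      (fun _ hp i j => (G.hasDerivWithinAt_G22 _ _ hp.1 hp.2.1 hp.2.2 i j).1)
      (ContinuousOn.uncurry_left t ht h.continuousOn_u)
      (ContinuousOn.uncurry_left t ht h.continuousOn_v) hx)

theorem hasDerivAt_transform_time (h : IsClosedLoopSolution G u ut ux v vt vx) (ht : 0 < t)
    (hx : x ∈ Icc (0 : ℝ) 1) :
    HasDerivAt (fun s => G.transform (u s) (v s) x) (G.transform (ut t) (vt t) x) t := by
  have hsub : Ioi (0 : ℝ) ×ˢ Icc (0 : ℝ) 1 ⊆ Ici 0 ×ˢ Icc 0 1 := prod_mono_left Ioi_subset_Ici_self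
  have hu : ∀ s ∈ Ioi (0 : ℝ), ∀ ξ ∈ Icc (0 : ℝ) 1, HasDerivAt (fun r => u r ξ) (ut s ξ) s :=
    fun s hs ξ hξ => (h.hasDerivWithinAt s (Ioi_subset_Ici_self hs) ξ hξ).1.hasDerivAt
      (Ici_mem_nhds hs)
  have hv : ∀ s ∈ Ioi (0 : ℝ), ∀ ξ ∈ Icc (0 : ℝ) 1, HasDerivAt (fun r => v r ξ) (vt s ξ) s :=
    fun s hs ξ hξ => (h.hasDerivWithinAt s (Ioi_subset_Ici_self hs) ξ hξ).2.2.1.hasDerivAt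
      (Ici_mem_nhds hs)
  exact (hv t ht x hx).sub (hasDerivAt_volterraIntegral_param G.continuousOn_G21 G.continuousOn_G22
    (Ioi_mem_nhds ht) (h.continuousOn_u.mono hsub) (h.continuousOn_ut.mono hsub)
    (h.continuousOn_v.mono hsub) (h.continuousOn_vt.mono hsub) hu hv hx)

theorem continuousOn_transform {X : Type*} [TopologicalSpace X] {S : Set X} {u : X → ℝ → ι → ℝ}
    {v : X → ℝ → κ → ℝ} (hu : ContinuousOn (fun p : X × ℝ => u p.1 p.2) (S ×ˢ Icc 0 1))
    (hv : ContinuousOn (fun p : X × ℝ => v p.1 p.2) (S ×ˢ Icc 0 1)) :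
    ContinuousOn (fun p : X × ℝ => G.transform (u p.1) (v p.1) p.2) (S ×ˢ Icc 0 1) :=
  hv.sub (continuousOn_volterraIntegral G.continuousOn_G21 G.continuousOn_G22 hu hv)

theorem continuousOn_transformDeriv (h : IsClosedLoopSolution G u ut ux v vt vx) (ht : 0 ≤ t) :
    ContinuousOn (G.transformDeriv (u t) (v t) (vx t)) (Icc 0 1) := by
  have hu : ContinuousOn (u t) (Icc 0 1) := ContinuousOn.uncurry_left t ht h.continuousOn_u
  have hv : ContinuousOn (v t) (Icc 0 1) := ContinuousOn.uncurry_left t ht h.continuousOn_v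
  have hvx : ContinuousOn (vx t) (Icc 0 1) := ContinuousOn.uncurry_left t ht h.continuousOn_vx
  exact hvx.sub (((continuousOn_mulVec (continuousOn_diagonal G.continuousOn_G21) hu).add
    (continuousOn_mulVec (continuousOn_diagonal G.continuousOn_G22) hv)).add
    (ContinuousOn.uncurry_left t ht (f := fun t x => volterraIntegral G.G21x G.G22x (u t) (v t) x)
      (continuousOn_volterraIntegral G.continuousOn_G21x G.continuousOn_G22x h.continuousOn_u
        h.continuousOn_v)))

theorem eventually_isTargetProfile (G : BacksteppingKernel P) :
    ∀ᶠ C : ℝ in Filter.atTop, ∀ u ut ux v vt vx, IsClosedLoopSolution G u ut ux v vt vx →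
      ∀ t ∈ Ici (0 : ℝ), IsTargetProfile C P.lr P.ll (u t) (ut t) (ux t) (v t)
        (G.transform (u t) (v t)) (G.transform (ut t) (vt t))
        (G.transformDeriv (u t) (v t) (vx t)) := by
  filter_upwards [eventually_sum_mulVec_add_mulVec_sq_le isCompact_Icc P.continuousOn_Sr
      P.continuousOn_Sl,
    eventually_sum_sq_le_of_continuousOn isCompact_Icc G.continuousOn_traceCoupling,
    Filter.eventually_ge_atTop (∑ i, ∑ j, P.Q0 i j ^ 2),
    eventually_sum_volterraIntegral_sq_le G.continuousOn_G21 G.continuousOn_G22]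
    with C hsource htrace hinflow hvolterra u ut ux v vt vx h t ht
  have hu : ContinuousOn (u t) (Icc 0 1) := ContinuousOn.uncurry_left t ht h.continuousOn_u
  have hv : ContinuousOn (v t) (Icc 0 1) := ContinuousOn.uncurry_left t ht h.continuousOn_v
  exact {
    continuousOn_u := hu
    continuousOn_ut := ContinuousOn.uncurry_left t ht h.continuousOn_ut
    continuousOn_ux := ContinuousOn.uncurry_left t ht h.continuousOn_ux
    continuousOn_v := hv
    continuousOn_b := ContinuousOn.uncurry_left t ht (f := fun t x => G.transform (u t) (v t) x)
      (continuousOn_transform h.continuousOn_u h.continuousOn_v)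
    continuousOn_bt := ContinuousOn.uncurry_left t ht (f := fun t x => G.transform (ut t) (vt t) x)
      (continuousOn_transform h.continuousOn_ut h.continuousOn_vt)
    continuousOn_bx := continuousOn_transformDeriv h ht
    hasDerivAt_u := fun x hx => (h.hasDerivWithinAt t ht x
      (Ioo_subset_Icc_self hx)).2.1.hasDerivAt (Icc_mem_nhds hx.1 hx.2)
    hasDerivAt_b := fun x hx => hasDerivAt_transform_space h ht hx
    sum_source_sq_le := fun x hx => by
      have hbound := hsource x hx (u t x) (v t x)
      rw [← h.plant_eq_u t ht x hx] at hbound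
      simpa only [Pi.add_apply, mulVec_diagonal] using hbound
    trace_source_sq_le := fun x hx j => by
      have htarget := congrFun (transform_sub_mulVec_transformDeriv h ht hx) j
      rw [Pi.sub_apply, mulVec_diagonal] at htarget
      rw [htarget, transform_zero]
      exact (mulVec_sq_le_of_strictlyLowerTriangular (G.trace_eq_zero x hx) _ j).trans
        (mul_le_mul_of_nonneg_right (htrace x hx) (Finset.sum_nonneg fun _ _ => sq_nonneg _))
    sum_inflow_sq_le := by
      rw [h.inflow_eq t ht, transform_zero]
      exact (sum_mulVec_sq_le_s1 _ _).trans
        (mul_le_mul_of_nonneg_right hinflow (Finset.sum_nonneg fun _ _ => sq_nonneg _))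
    b_one := sub_eq_zero.2 (h.feedback_eq t ht)
    volterra_sq_le := fun x hx => by
      simpa only [transform, Pi.sub_apply, sub_sub_cancel] using hvolterra (u t) (v t) hu hv x hx }

theorem eventually_isTargetSolution (G : BacksteppingKernel P) :
    ∀ᶠ C : ℝ in Filter.atTop, ∀ u ut ux v vt vx, IsClosedLoopSolution G u ut ux v vt vx →
      IsTargetSolution C P.lr P.ll u ut ux v (fun t => G.transform (u t) (v t))
        (fun t => G.transform (ut t) (vt t)) (fun t => G.transformDeriv (u t) (v t) (vx t)) := by
  filter_upwards [G.eventually_isTargetProfile] with C hprofile u ut ux v vt vx h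
  exact {
    continuousOn_u := h.continuousOn_u
    continuousOn_ut := h.continuousOn_ut
    continuousOn_b := continuousOn_transform h.continuousOn_u h.continuousOn_v
    continuousOn_bt := continuousOn_transform h.continuousOn_ut h.continuousOn_vt
    hasDerivAt_u := fun t ht x hx =>
      (h.hasDerivWithinAt t (Ioi_subset_Ici_self ht) x hx).1.hasDerivAt (Ici_mem_nhds ht)
    hasDerivAt_b := fun t ht x hx => hasDerivAt_transform_time h ht hx
    profile := hprofile u ut ux v vt vx h }

end BacksteppingKernel

theorem closed_loop_exponential_stability_general {P : HyperbolicPlant ι κ}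
    (G : BacksteppingKernel P) {c : ℝ} (hc : 0 ≤ c) :
    ∃ K, 1 ≤ K ∧ ∀ u ut ux v vt vx, IsClosedLoopSolution G u ut ux v vt vx →
      ∀ t ∈ Ici (0 : ℝ),
        √(sqNormL2 (u t) (v t)) ≤ K * exp (-c * t) * √(sqNormL2 (u 0) (v 0)) := by
  obtain ⟨C, htarget, hC⟩ :=
    (G.eventually_isTargetSolution.and (Filter.eventually_ge_atTop 0)).exists
  obtain ⟨K, hK, hdecay⟩ := IsTargetSolution.exists_sqrt_sqNormL2_le P.isTransportSpeed_lr
    P.isTransportSpeed_ll hC hc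
  exact ⟨K, hK, fun u ut ux v vt vx h => hdecay _ _ _ _ _ _ _ (htarget u ut ux v vt vx h)⟩

end Backstepping

theorem closed_loop_exponential_stability
    (n m : ℕ)
    (lr lr' : Fin n → ℝ → ℝ) (ll ll' : Fin m → ℝ → ℝ)
    (lamlo lamhi M : ℝ) (hlamlo : 0 < lamlo)
    (hlrC1 : ∀ i, ContDiffOn ℝ 1 (lr i) (Icc 0 1))
    (hllC1 : ∀ j, ContDiffOn ℝ 1 (ll j) (Icc 0 1))
    (hlr' : ∀ i, ∀ x ∈ Icc (0:ℝ) 1, HasDerivWithinAt (lr i) (lr' i x) (Icc 0 1) x)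
    (hll' : ∀ j, ∀ x ∈ Icc (0:ℝ) 1, HasDerivWithinAt (ll j) (ll' j x) (Icc 0 1) x)
    (hlrb : ∀ i, ∀ x ∈ Icc (0:ℝ) 1, lamlo ≤ lr i x ∧ lr i x ≤ lamhi)
    (hllb : ∀ j, ∀ x ∈ Icc (0:ℝ) 1, lamlo ≤ ll j x ∧ ll j x ≤ lamhi)
    (Sr : ℝ → Matrix (Fin n) (Fin n) ℝ) (Sl : ℝ → Matrix (Fin n) (Fin m) ℝ)
    (So : ℝ → Matrix (Fin m) (Fin n) ℝ)
    (hSrc : ContinuousOn Sr (Icc 0 1)) (hSlc : ContinuousOn Sl (Icc 0 1))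
    (hSoc : ContinuousOn So (Icc 0 1))
    (hSrM : ∀ x ∈ Icc (0:ℝ) 1, l2OpNorm (Sr x) ≤ M)
    (hSlM : ∀ x ∈ Icc (0:ℝ) 1, l2OpNorm (Sl x) ≤ M)
    (hSoM : ∀ x ∈ Icc (0:ℝ) 1, l2OpNorm (So x) ≤ M)
    (Q0 : Matrix (Fin n) (Fin m) ℝ) (R1 : Matrix (Fin m) (Fin n) ℝ)
    (G21 G21x G21xi : ℝ → ℝ → Matrix (Fin m) (Fin n) ℝ)
    (G22 G22x G22xi : ℝ → ℝ → Matrix (Fin m) (Fin m) ℝ)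
    -- the kernels are C¹ on the triangle 𝕋
    (hG21c : ContinuousOn (fun p : ℝ × ℝ => G21 p.1 p.2)
      {p : ℝ × ℝ | 0 ≤ p.2 ∧ p.2 ≤ p.1 ∧ p.1 ≤ 1})
    (hG22c : ContinuousOn (fun p : ℝ × ℝ => G22 p.1 p.2)
      {p : ℝ × ℝ | 0 ≤ p.2 ∧ p.2 ≤ p.1 ∧ p.1 ≤ 1})
    (hG21xc : ContinuousOn (fun p : ℝ × ℝ => G21x p.1 p.2)
      {p : ℝ × ℝ | 0 ≤ p.2 ∧ p.2 ≤ p.1 ∧ p.1 ≤ 1})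
    (hG21xic : ContinuousOn (fun p : ℝ × ℝ => G21xi p.1 p.2)
      {p : ℝ × ℝ | 0 ≤ p.2 ∧ p.2 ≤ p.1 ∧ p.1 ≤ 1})
    (hG22xc : ContinuousOn (fun p : ℝ × ℝ => G22x p.1 p.2)
      {p : ℝ × ℝ | 0 ≤ p.2 ∧ p.2 ≤ p.1 ∧ p.1 ≤ 1})
    (hG22xic : ContinuousOn (fun p : ℝ × ℝ => G22xi p.1 p.2)
      {p : ℝ × ℝ | 0 ≤ p.2 ∧ p.2 ≤ p.1 ∧ p.1 ≤ 1})
    (hG21d : ∀ x ξ : ℝ, 0 ≤ ξ → ξ ≤ x → x ≤ 1 → ∀ (i : Fin m) (j : Fin n),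
      HasDerivWithinAt (fun y => G21 y ξ i j) (G21x x ξ i j) (Icc ξ 1) x ∧
      HasDerivWithinAt (fun η => G21 x η i j) (G21xi x ξ i j) (Icc 0 x) ξ)
    (hG22d : ∀ x ξ : ℝ, 0 ≤ ξ → ξ ≤ x → x ≤ 1 → ∀ (i : Fin m) (j : Fin m),
      HasDerivWithinAt (fun y => G22 y ξ i j) (G22x x ξ i j) (Icc ξ 1) x ∧
      HasDerivWithinAt (fun η => G22 x η i j) (G22xi x ξ i j) (Icc 0 x) ξ)
    -- the kernel equations (K1), (K2)
    (hK1 : ∀ x ξ : ℝ, 0 ≤ ξ → ξ ≤ x → x ≤ 1 →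
      G21xi x ξ * Matrix.diagonal (fun i => lr i ξ)
        - Matrix.diagonal (fun j => ll j x) * G21x x ξ
      = -(G21 x ξ * Matrix.diagonal fun i => lr' i ξ)
        - G21 x ξ * Sr ξ - G22 x ξ * So ξ)
    (hK2 : ∀ x ξ : ℝ, 0 ≤ ξ → ξ ≤ x → x ≤ 1 →
      G22xi x ξ * Matrix.diagonal (fun j => ll j ξ)
        + Matrix.diagonal (fun j => ll j x) * G22x x ξ
      = -(G22 x ξ * Matrix.diagonal fun j => ll' j ξ) + G21 x ξ * Sl ξ)
    -- the boundary conditions (B1), (B2)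
    (hB1 : ∀ x ∈ Icc (0:ℝ) 1,
      G21 x x * Matrix.diagonal (fun i => lr i x)
        + Matrix.diagonal (fun j => ll j x) * G21 x x = -(So x))
    (hB2 : ∀ x ∈ Icc (0:ℝ) 1,
      Matrix.diagonal (fun j => ll j x) * G22 x x
        = G22 x x * Matrix.diagonal (fun j => ll j x))
    -- Δ(x) := G₂₂(x,0)Λˡ(0) − G₂₁(x,0)Λʳ(0)Q₀ is strictly lower triangular
    (hΔtri : ∀ x ∈ Icc (0:ℝ) 1, ∀ i j : Fin m, i ≤ j →
      (G22 x 0 * Matrix.diagonal (fun j' => ll j' 0)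
        - G21 x 0 * Matrix.diagonal (fun i' => lr i' 0) * Q0) i j = 0)
    -- the kernels Cʳ, Cˡ and their defining Volterra relations
    (Cr : ℝ → ℝ → Matrix (Fin n) (Fin n) ℝ) (Cl : ℝ → ℝ → Matrix (Fin n) (Fin m) ℝ)
    (hCrc : ContinuousOn (fun p : ℝ × ℝ => Cr p.1 p.2)
      {p : ℝ × ℝ | 0 ≤ p.2 ∧ p.2 ≤ p.1 ∧ p.1 ≤ 1})
    (hClc : ContinuousOn (fun p : ℝ × ℝ => Cl p.1 p.2)
      {p : ℝ × ℝ | 0 ≤ p.2 ∧ p.2 ≤ p.1 ∧ p.1 ≤ 1})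
    (hCrrel : ∀ x ξ : ℝ, 0 ≤ ξ → ξ ≤ x → x ≤ 1 →
      Cr x ξ = Sl x * G21 x ξ
        + Matrix.of (fun i j => ∫ η in ξ..x, (Cl x η * G21 η ξ) i j))
    (hClrel : ∀ x ξ : ℝ, 0 ≤ ξ → ξ ≤ x → x ≤ 1 →
      Cl x ξ = Sl x * G22 x ξ
        + Matrix.of (fun i j => ∫ η in ξ..x, (Cl x η * G22 η ξ) i j)) :
    ∃ K c : ℝ, 1 ≤ K ∧ 0 < c ∧
      ∀ (u ut ux : ℝ → ℝ → Fin n → ℝ) (v vt vx : ℝ → ℝ → Fin m → ℝ)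
        (𝔘 : ℝ → Fin m → ℝ),
        ContinuousOn (fun p : ℝ × ℝ => u p.1 p.2) (Ici 0 ×ˢ Icc 0 1) →
        ContinuousOn (fun p : ℝ × ℝ => v p.1 p.2) (Ici 0 ×ˢ Icc 0 1) →
        ContinuousOn (fun p : ℝ × ℝ => ut p.1 p.2) (Ici 0 ×ˢ Icc 0 1) →
        ContinuousOn (fun p : ℝ × ℝ => ux p.1 p.2) (Ici 0 ×ˢ Icc 0 1) →
        ContinuousOn (fun p : ℝ × ℝ => vt p.1 p.2) (Ici 0 ×ˢ Icc 0 1) →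
        ContinuousOn (fun p : ℝ × ℝ => vx p.1 p.2) (Ici 0 ×ˢ Icc 0 1) →
        (∀ t ∈ Ici (0:ℝ), ∀ x ∈ Icc (0:ℝ) 1,
          HasDerivWithinAt (fun s => u s x) (ut t x) (Ici 0) t ∧
          HasDerivWithinAt (fun y => u t y) (ux t x) (Icc 0 1) x ∧
          HasDerivWithinAt (fun s => v s x) (vt t x) (Ici 0) t ∧
          HasDerivWithinAt (fun y => v t y) (vx t x) (Icc 0 1) x) →
        -- the plant equations
        (∀ t ∈ Ici (0:ℝ), ∀ x ∈ Icc (0:ℝ) 1,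
          ut t x + (Matrix.diagonal fun i => lr i x).mulVec (ux t x)
            = (Sr x).mulVec (u t x) + (Sl x).mulVec (v t x)) →
        (∀ t ∈ Ici (0:ℝ), ∀ x ∈ Icc (0:ℝ) 1,
          vt t x - (Matrix.diagonal fun j => ll j x).mulVec (vx t x)
            = (So x).mulVec (u t x)) →
        -- boundary conditions with the backstepping feedback control
        (∀ t ∈ Ici (0:ℝ), u t 0 = Q0.mulVec (v t 0)) →
        (∀ t ∈ Ici (0:ℝ),
          𝔘 t = -(R1.mulVec (u t 1))
            + ∫ ξ in (0:ℝ)..1, ((G21 1 ξ).mulVec (u t ξ) + (G22 1 ξ).mulVec (v t ξ))) →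
        (∀ t ∈ Ici (0:ℝ), v t 1 = R1.mulVec (u t 1) + 𝔘 t) →
        ∀ t ∈ Ici (0:ℝ),
          Real.sqrt (∫ x in (0:ℝ)..1,
              ((∑ i, (u t x i) ^ 2) + ∑ j, (v t x j) ^ 2))
            ≤ K * Real.exp (-c * t) *
              Real.sqrt (∫ x in (0:ℝ)..1,
                ((∑ i, (u 0 x i) ^ 2) + ∑ j, (v 0 x j) ^ 2)) := by
  let P : HyperbolicPlant (Fin n) (Fin m) :=
    { lr, lr', ll, ll', lo := lamlo, hi := lamhi, Sr, Sl, So, Q0,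
      isTransportSpeed_lr := ⟨hlamlo, fun i => (hlrC1 i).continuousOn,
        fun i x hx => (hlrb i x hx).1, fun i x hx => (hlrb i x hx).2⟩
      isTransportSpeed_ll := ⟨hlamlo, fun j => (hllC1 j).continuousOn,
        fun j x hx => (hllb j x hx).1, fun j x hx => (hllb j x hx).2⟩
      hasDerivWithinAt_lr := hlr'
      hasDerivWithinAt_ll := hll'
      continuousOn_Sr := hSrc
      continuousOn_Sl := hSlc }
  let G : BacksteppingKernel P :=
    ⟨G21, G21x, G21xi, G22, G22x, G22xi, hG21c, hG22c, hG21xc, hG22xc, hG21d, hG22d, hK1, hK2,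
      hB1, hB2, hΔtri⟩
  obtain ⟨K, hK, hdecay⟩ := closed_loop_exponential_stability_general G zero_le_one
  refine ⟨K, 1, hK, one_pos, fun u ut ux v vt vx 𝔘 hu hv hut hux hvt hvx hderiv hplant_u hplant_v
    hinflow hU hfeedback => hdecay u ut ux v vt vx
      ⟨hu, hv, hut, hux, hvt, hvx, hderiv, hplant_u, hplant_v, hinflow, fun t ht => ?_⟩⟩
  rw [hfeedback t ht, hU t ht, add_neg_cancel_left]
  rfl
end
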